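/- arXiv:1611.07692 — 3 statements merged into one kernel-verified Lean document; each statement's English description precedes it below -/
import Mathlib

section
/- (Stein–Weiss identity, used as a hypothesis/known result) For any measurable set E ⊂ ℝ of finite Lebesgue measure and any λ > 0, the Lebesgue measure of {x ∈ ℝ : |H𝟙_E(x)| > λ} equals 4 e^{πλ} |E| / (e^{2πλ} - 1). -/
open MeasureTheory Filter Set Real

/-!
Let `T z = ∫_E dt / (t - z)` on the upper half-plane. Its boundary values are
`-π H𝟙_E + iπ 𝟙_E`, so `Φ = exp T` has nonnegative imaginary part and the real boundary values
`± exp (-π H𝟙_E)`. Its Cayley image `G = (1 + Φ) / (1 - Φ)` is then also inner, its boundary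
function `g` being `tanh (π H𝟙_E / 2)` on `E` and `coth (π H𝟙_E / 2)` off `E`; and
`T (iy) ~ i|E| / y` gives `G (iy) ~ (2 / |E|) iy`.

An inner function pushes the Cauchy law of parameter `z` to the Cauchy law of parameter `G z`
(compare Fourier transforms, using the Poisson formula for `exp (iξG)`). Rescaling and letting
`z = iy → i∞` turns this into Boole's identity: `g` pushes Lebesgue measure to `|E| / 2` times
itself. As `|H𝟙_E| > λ` means `tanh (πλ / 2) < |g| < coth (πλ / 2)`, the set in question has
measure `|E| (coth (πλ / 2) - tanh (πλ / 2))`.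
-/

open ProbabilityTheory Bornology Asymptotics
open Complex (I)
open scoped Topology NNReal ENNReal

section Contour

variable {E : Type*} [NormedAddCommGroup E] [NormedSpace ℂ E]

lemma intervalIntegral_ofReal_eq_add_sides {f : ℂ → E} {R : ℝ} (hR : 0 ≤ R)
    (hfc : ContinuousOn f {z | 0 ≤ z.im}) (hfd : DifferentiableOn ℂ f {z | 0 < z.im}) :
    ∫ t in (-R)..R, f t
      = (∫ x in (-R)..R, f (x + R * I)) - I • (∫ y in (0 : ℝ)..R, f (R + y * I))
          + I • ∫ y in (0 : ℝ)..R, f ((-R : ℝ) + y * I) := by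
  have rect := Complex.integral_boundary_rect_eq_zero_of_continuousOn_of_differentiableOn f
    (-R : ℝ) (R + R * I)
    (hfc.mono fun z hz ↦ by
      have him : z.im ∈ Icc 0 R := by simpa [uIcc_of_le hR] using hz.2
      exact him.1)
    (hfd.mono fun z hz ↦ by
      have him : z.im ∈ Ioo 0 R := by simpa [hR] using hz.2
      exact him.1)
  simp only [Complex.ofReal_re, Complex.ofReal_im, Complex.add_re, Complex.mul_re, Complex.I_re,
    mul_zero, Complex.I_im, zero_mul, sub_zero, add_zero, Complex.add_im, Complex.mul_im,
    mul_one, zero_add, Complex.ofReal_zero] at rect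
  rw [← sub_eq_zero, ← rect]
  module

lemma norm_intervalIntegral_le_of_bound_of_le_norm {f : ℂ → E} {C R : ℝ} (hR : 0 < R)
    (hf : ∀ z : ℂ, 0 ≤ z.im → R ≤ ‖z‖ → ‖f z‖ ≤ C * (‖z‖ ^ 2)⁻¹)
    (hfc : ContinuousOn f {z | 0 ≤ z.im}) (hfd : DifferentiableOn ℂ f {z | 0 < z.im}) :
    ‖∫ t in (-R)..R, f t‖ ≤ 4 * C / R := by
  have hnorm : ‖(R : ℂ)‖ = R := by rw [Complex.norm_real, norm_of_nonneg hR.le]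
  have hC : 0 ≤ C := by
    have := (norm_nonneg _).trans (hf R (by simp) hnorm.ge)
    rw [hnorm] at this
    exact nonneg_of_mul_nonneg_left this (by positivity)
  have bound : ∀ z : ℂ, 0 ≤ z.im → R ≤ ‖z‖ → ‖f z‖ ≤ C / R ^ 2 := fun z hz hRz ↦
    (hf z hz hRz).trans (by rw [div_eq_mul_inv]; gcongr)
  have top : ‖∫ x in (-R)..R, f (x + R * I)‖ ≤ C / R ^ 2 * |R - -R| := by
    refine intervalIntegral.norm_integral_le_of_norm_le_const fun x _ ↦
      bound _ (by simp [hR.le]) (le_trans ?_ (Complex.abs_im_le_norm _))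
    simp [le_abs_self]
  have side : ∀ s : ℝ, |s| = R → ‖∫ y in (0 : ℝ)..R, f (s + y * I)‖ ≤ C / R ^ 2 * |R - 0| := by
    refine fun s hs ↦ intervalIntegral.norm_integral_le_of_norm_le_const fun y hy ↦ ?_
    rw [uIoc_of_le hR.le] at hy
    refine bound _ (by simp [hy.1.le]) (le_trans ?_ (Complex.abs_re_le_norm _))
    simp [hs]
  have right := side R (abs_of_pos hR)
  have left := side (-R) (by rw [abs_neg, abs_of_pos hR])
  calc ‖∫ t in (-R)..R, f t‖
      ≤ C / R ^ 2 * |R - -R| + C / R ^ 2 * |R - 0| + C / R ^ 2 * |R - 0| := by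
        rw [intervalIntegral_ofReal_eq_add_sides hR.le hfc hfd]
        refine (norm_add_le_of_le (norm_sub_le_of_le top ?_) ?_) <;>
          rwa [norm_smul, Complex.norm_I, one_mul]
    _ = 4 * C / R := by
        rw [sub_neg_eq_add, sub_zero, abs_of_pos (add_pos hR hR), abs_of_pos hR]
        field_simp
        norm_num

lemma integral_ofReal_eq_zero_of_isBigO {f : ℂ → E} (hf : DiffContOnCl ℂ f {z | 0 < z.im})
    (hO : f =O[cobounded ℂ ⊓ 𝓟 {z | 0 ≤ z.im}] fun z ↦ (‖z‖ ^ 2)⁻¹) :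
    ∫ t : ℝ, f t = 0 := by
  have hfc : ContinuousOn f {z | 0 ≤ z.im} := by
    simpa [Complex.closure_setOfPred_lt_im] using hf.continuousOn
  have hint : Integrable fun t : ℝ ↦ f t := by
    have hreal : Tendsto ((↑) : ℝ → ℂ) (cocompact ℝ) (cobounded ℂ ⊓ 𝓟 {z | 0 ≤ z.im}) := by
      rw [← Metric.cobounded_eq_cocompact]
      exact tendsto_inf.2 ⟨RCLike.tendsto_ofReal_cobounded_cobounded ℂ, by simp⟩
    refine (hfc.comp_continuous Complex.continuous_ofReal (by simp)).locallyIntegrable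
      |>.integrable_of_isBigO_cocompact ((hO.comp_tendsto hreal).trans ?_)
      (integrable_inv_one_add_sq.integrableAtFilter _)
    refine IsBigO.of_bound 2 ?_
    have hlarge : ∀ᶠ t : ℝ in cocompact ℝ, 1 ≤ ‖t‖ :=
      tendsto_norm_cocompact_atTop.eventually_ge_atTop 1
    filter_upwards [hlarge] with t ht
    have ht2 : 1 ≤ t ^ 2 := by simpa using one_le_pow₀ (n := 2) ht
    simp only [Function.comp_apply, Complex.norm_real, norm_inv, norm_pow, norm_eq_abs,
      sq_abs, abs_of_nonneg (add_nonneg zero_le_one (sq_nonneg t))]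
    rw [← div_eq_mul_inv, inv_eq_one_div, div_le_div_iff₀ (by positivity) (by positivity)]
    linarith
  obtain ⟨C, hC⟩ := hO.bound
  obtain ⟨R₀, -, hR₀⟩ := (hasBasis_cobounded_norm.eventually_iff).1 (eventually_inf_principal.1 hC)
  refine tendsto_nhds_unique
    (intervalIntegral_tendsto_integral hint tendsto_neg_atTop_atBot tendsto_id)
    (squeeze_zero_norm' ?_ (tendsto_const_nhds (x := 4 * C) |>.div_atTop tendsto_id))
  filter_upwards [eventually_ge_atTop R₀, eventually_gt_atTop 0] with R hR hRpos
  refine norm_intervalIntegral_le_of_bound_of_le_norm hRpos (fun z hz hRz ↦ ?_) hfc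
    hf.differentiableOn
  simpa using hR₀ (hR.trans hRz) hz

end Contour

section CauchyMeasure

lemma cauchyMeasure_absolutelyContinuous (a : ℝ) {γ : ℝ≥0} (hγ : γ ≠ 0) :
    cauchyMeasure a γ ≪ volume := by
  rw [cauchyMeasure_of_scale_ne_zero a hγ]
  exact withDensity_absolutelyContinuous _ _

lemma absolutelyContinuous_cauchyMeasure (a : ℝ) {γ : ℝ≥0} (hγ : γ ≠ 0) :
    volume ≪ cauchyMeasure a γ := by
  rw [cauchyMeasure_of_scale_ne_zero a hγ]
  refine withDensity_absolutelyContinuous' (measurable_cauchyPDF a γ).aemeasurable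
    (.of_forall fun t ↦ ?_)
  simpa [cauchyPDF_def] using cauchyPDF_pos a hγ t

lemma integral_cauchyMeasure_eq {E : Type*} [NormedAddCommGroup E] [NormedSpace ℝ E] {f : ℝ → E}
    (a : ℝ) {γ : ℝ≥0} (hγ : γ ≠ 0) :
    ∫ t, f t ∂cauchyMeasure a γ = ∫ t, cauchyPDFReal a γ t • f t := by
  rw [cauchyMeasure_of_scale_ne_zero a hγ,
    integral_withDensity_eq_integral_toReal_smul (measurable_cauchyPDF a γ)
      (Eventually.of_forall fun t ↦ by simp [cauchyPDF])]
  congr 1 with t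
  rw [cauchyPDF_def, ENNReal.toReal_ofReal (cauchyPDF_pos a hγ t).le]

end CauchyMeasure

section Poisson

open ComplexConjugate

variable {E : Type*} [NormedAddCommGroup E] [NormedSpace ℂ E]

lemma isBigO_inv_sub_conj_smul_dslope {F : ℂ → E} {C : ℝ} (w : ℂ)
    (hb : ∀ z : ℂ, 0 ≤ z.im → ‖F z‖ ≤ C) :
    (fun z ↦ (z - conj w)⁻¹ • dslope F w z)
      =O[cobounded ℂ ⊓ 𝓟 {z | 0 ≤ z.im}] fun z ↦ (‖z‖ ^ 2)⁻¹ := by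
  refine IsBigO.of_bound (4 * (C + ‖F w‖)) (eventually_inf_principal.2 ?_)
  filter_upwards [hasBasis_cobounded_norm.mem_of_mem trivial (i := 2 * ‖w‖ + 1)]
    with z (hwz : 2 * ‖w‖ + 1 ≤ ‖z‖) hz
  have hw := norm_nonneg w
  have hzw : ‖z‖ / 2 ≤ ‖z - w‖ := by linarith [norm_sub_norm_le z w]
  have hzw' : ‖z‖ / 2 ≤ ‖z - conj w‖ := by
    linarith [norm_sub_norm_le z (conj w), Complex.norm_conj w]
  have hz0 : 0 < ‖z‖ := by linarith
  have hne : z ≠ w := by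
    rintro rfl
    linarith
  rw [dslope_of_ne _ hne, slope_def_module, norm_smul, norm_smul, norm_inv, norm_inv, norm_inv,
    norm_pow, norm_norm]
  calc ‖z - conj w‖⁻¹ * (‖z - w‖⁻¹ * ‖F z - F w‖)
      ≤ (‖z‖ / 2)⁻¹ * ((‖z‖ / 2)⁻¹ * (C + ‖F w‖)) := by
        gcongr
        exact norm_sub_le_of_le (hb z hz) le_rfl
    _ = 4 * (C + ‖F w‖) * (‖z‖ ^ 2)⁻¹ := by
        field_simp
        ring

lemma integral_cauchyPDFReal_smul_sub [CompleteSpace E] {F : ℂ → E}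
    (hF : DiffContOnCl ℂ F {z | 0 < z.im}) {C : ℝ} (hb : ∀ z : ℂ, 0 ≤ z.im → ‖F z‖ ≤ C)
    (a : ℝ) {γ : ℝ≥0} (hγ : γ ≠ 0) :
    ∫ t : ℝ, cauchyPDFReal a γ t • (F t - F (a + γ * I)) = 0 := by
  -- As `(t - w) (t - conj w) = (t - a) ^ 2 + γ ^ 2`, the integrand is, up to a constant, the
  -- restriction of `(z - conj w)⁻¹ • dslope F w z`, which is holomorphic and decays quadratically.
  set w : ℂ := a + γ * I with hw
  have hwim : 0 < w.im := by simpa [hw, pos_iff_ne_zero] using hγ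
  have hne : ∀ z : ℂ, 0 ≤ z.im → z - conj w ≠ 0 := fun z hz h ↦ by
    have him : z.im + w.im = 0 := by simpa using congrArg Complex.im h
    linarith
  have hcl : closure {z : ℂ | 0 < z.im} = {z | 0 ≤ z.im} := Complex.closure_setOfPred_lt_im 0
  have hinv : DiffContOnCl ℂ (fun z ↦ (z - conj w)⁻¹) {z : ℂ | 0 < z.im} :=
    (Differentiable.diffContOnCl (by fun_prop)).inv fun z hz ↦ hne z (by simpa [hcl] using hz)
  have hslope : DiffContOnCl ℂ (dslope F w) {z | 0 < z.im} := by
    have hnhds := (Complex.isOpen_im_gt 0).mem_nhds hwim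
    refine ⟨(Complex.differentiableOn_dslope hnhds).2 hF.differentiableOn,
      (continuousOn_dslope (mem_of_superset hnhds subset_closure)).2
        ⟨hF.continuousOn, hF.differentiableOn.differentiableAt hnhds⟩⟩
  have h0 := integral_ofReal_eq_zero_of_isBigO (hinv.smul hslope)
    (isBigO_inv_sub_conj_smul_dslope w hb)
  calc ∫ t : ℝ, cauchyPDFReal a γ t • (F t - F w)
      = ∫ t : ℝ, (π⁻¹ * γ) • ((t - conj w)⁻¹ • dslope F w t : E) := by
        congr 1 with t : 1
        have htw : (t : ℂ) ≠ w := fun h ↦ hwim.ne (by simpa using congrArg Complex.im h)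
        rw [dslope_of_ne _ htw, slope_def_module, smul_smul, ← mul_inv, ← Complex.coe_smul,
          ← Complex.coe_smul, smul_smul, cauchyPDFReal_def]
        congr 1
        have : (t - conj w) * (t - w) = (((t - a) ^ 2 + γ ^ 2 : ℝ) : ℂ) := by
          simp only [hw, map_add, map_mul, Complex.conj_ofReal, Complex.conj_I]
          push_cast
          linear_combination -(γ : ℂ) ^ 2 * Complex.I_sq
        rw [this]
        push_cast
        ring
    _ = 0 := by rw [integral_smul, h0, smul_zero]

lemma integral_cauchyMeasure_of_diffContOnCl [CompleteSpace E] {F : ℂ → E}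
    (hF : DiffContOnCl ℂ F {z | 0 < z.im}) {C : ℝ} (hb : ∀ z : ℂ, 0 ≤ z.im → ‖F z‖ ≤ C)
    (a : ℝ) (γ : ℝ≥0) :
    ∫ t : ℝ, F t ∂cauchyMeasure a γ = F (a + γ * I) := by
  rcases eq_or_ne γ 0 with rfl | hγ
  · simp [cauchyMeasure_zero_scale]
  have hcont : Continuous fun t : ℝ ↦ F t := by
    have := hF.continuousOn
    rw [Complex.closure_setOfPred_lt_im] at this
    exact this.comp_continuous Complex.continuous_ofReal (by simp)
  have hint : Integrable (fun t : ℝ ↦ F t) (cauchyMeasure a γ) :=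
    .of_bound hcont.aestronglyMeasurable C (.of_forall fun t ↦ hb _ (by simp))
  have := integral_cauchyPDFReal_smul_sub hF hb a hγ
  rw [← integral_cauchyMeasure_eq a hγ, integral_sub hint (integrable_const _)] at this
  simpa [sub_eq_zero] using this

lemma integral_cauchyMeasure_of_tendsto [CompleteSpace E] {F : ℂ → E} {f : ℝ → E}
    (hF : DifferentiableOn ℂ F {z | 0 < z.im}) {C : ℝ} (hb : ∀ z : ℂ, 0 < z.im → ‖F z‖ ≤ C)
    (hlim : ∀ᵐ x : ℝ, Tendsto (fun δ : ℝ≥0 ↦ F (x + δ * I)) (𝓝[>] 0) (𝓝 (f x)))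
    (a : ℝ) {γ : ℝ≥0} (hγ : γ ≠ 0) :
    ∫ t, f t ∂cauchyMeasure a γ = F (a + γ * I) := by
  have hshift : ∀ δ : ℝ≥0, 0 < δ → MapsTo (fun z ↦ z + δ * I) {z | 0 ≤ z.im} {z : ℂ | 0 < z.im} :=
    fun δ hδ z hz ↦ by
      simp only [mem_ofPred_eq, Complex.add_im, Complex.mul_im, Complex.ofReal_re, Complex.I_im,
        Complex.ofReal_im, Complex.I_re, mul_one, mul_zero, add_zero] at hz ⊢
      positivity
  have hcont : ∀ δ : ℝ≥0, 0 < δ → DifferentiableOn ℂ (fun z ↦ F (z + δ * I)) {z | 0 ≤ z.im} :=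
    fun δ hδ ↦ hF.comp (by fun_prop) (hshift δ hδ)
  have hpoisson : ∀ δ : ℝ≥0, 0 < δ →
      ∫ t : ℝ, F (t + δ * I) ∂cauchyMeasure a γ = F (a + γ * I + δ * I) := fun δ hδ ↦
    integral_cauchyMeasure_of_diffContOnCl
      (DifferentiableOn.diffContOnCl (by
        simpa only [Complex.closure_setOfPred_lt_im] using hcont δ hδ))
      (fun z hz ↦ hb _ (hshift δ hδ hz)) a γ
  have hpos : ∀ᶠ δ : ℝ≥0 in 𝓝[>] 0, 0 < δ := self_mem_nhdsWithin
  have hleft : Tendsto (fun δ : ℝ≥0 ↦ ∫ t : ℝ, F (t + δ * I) ∂cauchyMeasure a γ) (𝓝[>] 0)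
      (𝓝 (∫ t, f t ∂cauchyMeasure a γ)) := by
    refine tendsto_integral_filter_of_dominated_convergence (fun _ ↦ C) ?_ ?_
      (integrable_const _) ((cauchyMeasure_absolutelyContinuous a hγ).ae_le hlim)
    · filter_upwards [hpos] with δ hδ
      exact ((hcont δ hδ).continuousOn.comp_continuous Complex.continuous_ofReal
        (by simp)).aestronglyMeasurable
    · filter_upwards [hpos] with δ hδ
      exact .of_forall fun t ↦ hb _ (hshift δ hδ (by simp))
  have hright : Tendsto (fun δ : ℝ≥0 ↦ F (a + γ * I + δ * I)) (𝓝[>] 0) (𝓝 (F (a + γ * I))) := by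
    have hc : ContinuousAt F (a + γ * I) :=
      (hF.differentiableAt ((Complex.isOpen_im_gt 0).mem_nhds
        (by simpa [pos_iff_ne_zero] using hγ))).continuousAt
    have hpath : Continuous fun δ : ℝ≥0 ↦ (a + γ * I + δ * I : ℂ) := by fun_prop
    exact hc.tendsto.comp (by simpa using (hpath.tendsto 0).mono_left nhdsWithin_le_nhds)
  refine tendsto_nhds_unique (hleft.congr' ?_) hright
  filter_upwards [hpos] with δ hδ using hpoisson δ hδ

end Poisson

section CharFun

lemma norm_exp_ofReal_mul_mul_I_le_one {ξ : ℝ} (hξ : 0 ≤ ξ) {z : ℂ} (hz : 0 ≤ z.im) :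
    ‖Complex.exp (ξ * z * I)‖ ≤ 1 := by
  rw [Complex.norm_exp, Real.exp_le_one_iff, Complex.mul_I_re, Complex.im_ofReal_mul,
    neg_nonpos]
  exact mul_nonneg hξ hz

lemma charFun_cauchyMeasure_of_nonneg (a : ℝ) (γ : ℝ≥0) {ξ : ℝ} (hξ : 0 ≤ ξ) :
    charFun (cauchyMeasure a γ) ξ = Complex.exp (ξ * (a + γ * I) * I) := by
  rw [charFun_apply_real]
  exact integral_cauchyMeasure_of_diffContOnCl (F := fun z ↦ Complex.exp (ξ * z * I))
    (Differentiable.diffContOnCl (by fun_prop))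
    (fun z hz ↦ norm_exp_ofReal_mul_mul_I_le_one hξ hz) a γ

lemma ext_of_charFun_of_nonneg {μ ν : Measure ℝ} [IsFiniteMeasure μ] [IsFiniteMeasure ν]
    (h : ∀ ξ : ℝ, 0 ≤ ξ → charFun μ ξ = charFun ν ξ) : μ = ν := by
  refine Measure.ext_of_charFun (funext fun ξ ↦ ?_)
  rcases le_total 0 ξ with hξ | hξ
  · exact h ξ hξ
  · have := h (-ξ) (neg_nonneg.2 hξ)
    rw [charFun_neg, charFun_neg] at this
    exact (starRingEnd ℂ).injective this

end CharFun

/-- A holomorphic self-map `Φ` of the upper half-plane (its closure allowed as target) that is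
*inner*: almost everywhere its vertical boundary values exist and are real, given by `φ`. -/
structure HalfPlaneInner (Φ : ℂ → ℂ) (φ : ℝ → ℝ) : Prop where
  differentiableOn : DifferentiableOn ℂ Φ {z | 0 < z.im}
  im_nonneg : ∀ z : ℂ, 0 < z.im → 0 ≤ (Φ z).im
  tendsto : ∀ᵐ x : ℝ, Tendsto (fun δ : ℝ≥0 ↦ Φ (x + δ * I)) (𝓝[>] 0) (𝓝 (φ x))

namespace HalfPlaneInner

variable {Φ : ℂ → ℂ} {φ : ℝ → ℝ}

lemma aemeasurable (h : HalfPlaneInner Φ φ) : AEMeasurable φ := by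
  have hre : ∀ᵐ x : ℝ, Tendsto (fun δ : ℝ≥0 ↦ (Φ (x + δ * I)).re) (𝓝[>] 0) (𝓝 (φ x)) := by
    filter_upwards [h.tendsto] with x hx using (Complex.continuous_re.tendsto _).comp hx
  obtain ⟨u, -, hu⟩ := exists_seq_strictAnti_tendsto (0 : ℝ≥0)
  have hu' : Tendsto u atTop (𝓝[>] 0) :=
    tendsto_nhdsWithin_iff.2 ⟨hu.2, .of_forall hu.1⟩
  refine aemeasurable_of_tendsto_metrizable_ae (f := fun n (x : ℝ) ↦ (Φ (x + u n * I)).re) atTop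
    (fun n ↦ ?_) (hre.mono fun x hx ↦ hx.comp hu')
  have := hu.1 n
  exact (Complex.continuous_re.comp <| h.differentiableOn.continuousOn.comp_continuous
    (by fun_prop) fun x ↦ by simpa using this).aemeasurable

lemma map_cauchyMeasure (h : HalfPlaneInner Φ φ) (a : ℝ) {γ : ℝ≥0} (hγ : γ ≠ 0) :
    (cauchyMeasure a γ).map φ
      = cauchyMeasure (Φ (a + γ * I)).re (Φ (a + γ * I)).im.toNNReal := by
  have hφ := h.aemeasurable.mono_ac (cauchyMeasure_absolutelyContinuous a hγ)
  have := Measure.isProbabilityMeasure_map hφ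
  refine ext_of_charFun_of_nonneg fun ξ hξ ↦ ?_
  have him : 0 ≤ (Φ (a + γ * I)).im := h.im_nonneg _ (by simpa [pos_iff_ne_zero] using hγ)
  rw [charFun_cauchyMeasure_of_nonneg _ _ hξ, Real.coe_toNNReal _ him, Complex.re_add_im,
    charFun_apply_real, integral_map hφ (by fun_prop)]
  refine integral_cauchyMeasure_of_tendsto (F := fun z ↦ Complex.exp (ξ * Φ z * I))
    ((h.differentiableOn.const_mul _).mul_const _).cexp
    (fun z hz ↦ norm_exp_ofReal_mul_mul_I_le_one hξ (h.im_nonneg z hz)) ?_ a hγ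
  filter_upwards [h.tendsto] with x hx
  exact (Complex.continuous_exp.tendsto _).comp ((hx.const_mul _).mul_const _)

lemma ae_ne (h : HalfPlaneInner Φ φ) {c : ℝ} (hc : Φ I ≠ c) : ∀ᵐ x, φ x ≠ c := by
  have hmap : (cauchyMeasure 0 1).map φ = cauchyMeasure (Φ I).re (Φ I).im.toNNReal := by
    simpa using h.map_cauchyMeasure 0 one_ne_zero
  have hnull : cauchyMeasure (Φ I).re (Φ I).im.toNNReal {c} = 0 := by
    rcases eq_or_ne (Φ I).im.toNNReal 0 with h0 | h0
    · have him : (Φ I).im = 0 := (Real.toNNReal_eq_zero.1 h0).antisymm (h.im_nonneg I (by simp))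
      have hre : (Φ I).re ≠ c := fun hre ↦ hc (Complex.ext hre him)
      simp [h0, cauchyMeasure_zero_scale, hre]
    · exact cauchyMeasure_absolutelyContinuous _ h0 (by simp)
  rw [← hmap, Measure.map_apply_of_aemeasurable (h.aemeasurable.mono_ac
    (cauchyMeasure_absolutelyContinuous 0 one_ne_zero)) (measurableSet_singleton c)] at hnull
  exact ae_iff.2 (by simpa [preimage] using absolutelyContinuous_cauchyMeasure 0 one_ne_zero hnull)

lemma cayley (h : HalfPlaneInner Φ φ) (hne : ∀ z : ℂ, 0 < z.im → Φ z ≠ 1) :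
    HalfPlaneInner (fun z ↦ (1 + Φ z) / (1 - Φ z)) (fun x ↦ (1 + φ x) / (1 - φ x)) where
  differentiableOn := (h.differentiableOn.const_add 1).div (h.differentiableOn.const_sub 1)
    fun z hz ↦ sub_ne_zero.2 (hne z hz).symm
  im_nonneg z hz := by
    have him := h.im_nonneg z hz
    have : ((1 + Φ z) / (1 - Φ z)).im = 2 * (Φ z).im / Complex.normSq (1 - Φ z) := by
      simp [Complex.div_im]
      ring
    rw [this]
    exact div_nonneg (by positivity) (Complex.normSq_nonneg _)
  tendsto := by
    have hone : ∀ᵐ x, φ x ≠ 1 := h.ae_ne (by simpa using hne I (by simp))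
    filter_upwards [h.tendsto, hone] with x hx hx1
    have h1 : (1 : ℂ) - φ x ≠ 0 := by exact_mod_cast sub_ne_zero.2 hx1.symm
    push_cast
    exact (hx.const_add 1).div (hx.const_sub 1) h1

end HalfPlaneInner

lemma cauchyMeasure_apply (a : ℝ) {γ : ℝ≥0} (hγ : γ ≠ 0) (S : Set ℝ) :
    cauchyMeasure a γ S = ∫⁻ t in S, cauchyPDF a γ t := by
  rw [cauchyMeasure_of_scale_ne_zero a hγ, withDensity_apply']

lemma cauchyPDFReal_le (a : ℝ) (γ : ℝ≥0) (t : ℝ) : cauchyPDFReal a γ t ≤ (π * γ)⁻¹ := by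
  rcases eq_or_ne γ 0 with rfl | hγ
  · simp [cauchyPDFReal_def]
  calc cauchyPDFReal a γ t ≤ π⁻¹ * γ * ((γ : ℝ) ^ 2)⁻¹ := by
        rw [cauchyPDFReal_def]
        gcongr
        exact le_add_of_nonneg_left (sq_nonneg _)
    _ = (π * γ)⁻¹ := by field_simp

lemma tendsto_mul_cauchyPDFReal {ι : Type*} {l : Filter ι} {s a : ι → ℝ}
    {γ : ι → ℝ≥0} {k : ℝ} (hk : k ≠ 0) (hs : Tendsto s l atTop)
    (ha : Tendsto (fun i ↦ a i / s i) l (𝓝 0)) (hγ : Tendsto (fun i ↦ γ i / s i) l (𝓝 k)) (t : ℝ) :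
    Tendsto (fun i ↦ π * s i * cauchyPDFReal (a i) (γ i) t) l (𝓝 k⁻¹) := by
  have hden : Tendsto (fun i ↦ (t / s i - a i / s i) ^ 2 + (γ i / s i) ^ 2) l (𝓝 (k ^ 2)) := by
    simpa using (((tendsto_const_nhds.div_atTop hs).sub ha).pow 2).add (hγ.pow 2)
  have hlim := hγ.div hden (pow_ne_zero 2 hk)
  rw [show k / k ^ 2 = k⁻¹ by field_simp] at hlim
  refine hlim.congr' ?_
  filter_upwards [hs.eventually_gt_atTop 0] with i hi
  simp only [Pi.div_apply, cauchyPDFReal_def]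
  rw [← sub_div, div_pow, div_pow, ← add_div]
  field_simp

lemma tendsto_mul_cauchyMeasure_apply {ι : Type*} {l : Filter ι} [l.IsCountablyGenerated]
    {s a : ι → ℝ} {γ : ι → ℝ≥0} {k : ℝ} (hk : 0 < k) (hs : Tendsto s l atTop)
    (ha : Tendsto (fun i ↦ a i / s i) l (𝓝 0)) (hγ : Tendsto (fun i ↦ γ i / s i) l (𝓝 k))
    {S : Set ℝ} (hS : volume S ≠ ∞) :
    Tendsto (fun i ↦ .ofReal (π * s i) * cauchyMeasure (a i) (γ i) S) l
      (𝓝 (.ofReal k⁻¹ * volume S)) := by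
  have hpos : ∀ᶠ i in l, 0 < s i ∧ k / 2 < γ i / s i :=
    (hs.eventually_gt_atTop 0).and (hγ.eventually_const_lt (half_lt_self hk))
  have hdens : ∀ᶠ i in l, ∫⁻ t in S, .ofReal (π * s i * cauchyPDFReal (a i) (γ i) t)
      = .ofReal (π * s i) * cauchyMeasure (a i) (γ i) S := by
    filter_upwards [hpos] with i ⟨hi, hγi⟩
    have hγ0 : γ i ≠ 0 := by
      intro h0
      rw [h0, NNReal.coe_zero, zero_div] at hγi
      linarith
    rw [cauchyMeasure_apply _ hγ0, ← lintegral_const_mul _ (measurable_cauchyPDF _ _)]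
    simp only [cauchyPDF_def, ENNReal.ofReal_mul (mul_pos pi_pos hi).le]
  refine Tendsto.congr' hdens ?_
  rw [← setLIntegral_const]
  refine tendsto_lintegral_filter_of_dominated_convergence (fun _ ↦ .ofReal (k / 2)⁻¹)
    (.of_forall fun i ↦ by fun_prop) ?_ ?_
    (.of_forall fun t ↦ ENNReal.tendsto_ofReal (tendsto_mul_cauchyPDFReal hk.ne' hs ha hγ t))
  · filter_upwards [hpos] with i ⟨hi, hγi⟩
    refine .of_forall fun t ↦ ENNReal.ofReal_le_ofReal ?_
    calc π * s i * cauchyPDFReal (a i) (γ i) t ≤ π * s i * (π * γ i)⁻¹ := by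
          gcongr
          exact cauchyPDFReal_le _ _ _
      _ = (γ i / s i)⁻¹ := by
          rw [mul_inv, inv_div, div_eq_mul_inv]
          field_simp
      _ ≤ (k / 2)⁻¹ := by gcongr
  · simpa using ENNReal.mul_ne_top ENNReal.ofReal_ne_top hS

namespace HalfPlaneInner

variable {Φ : ℂ → ℂ} {φ : ℝ → ℝ}

lemma tendsto_mul_cauchyMeasure_preimage (h : HalfPlaneInner Φ φ) {k : ℝ} (hk : 0 < k)
    (hinf : Tendsto (fun y : ℝ≥0 ↦ Φ (y * I) / y) atTop (𝓝 (k * I)))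
    {A : Set ℝ} (hA : MeasurableSet A) (hAfin : volume A ≠ ∞) :
    Tendsto (fun y : ℝ≥0 ↦ .ofReal (π * y) * cauchyMeasure 0 y (φ ⁻¹' A)) atTop
      (𝓝 (.ofReal k⁻¹ * volume A)) := by
  have hre : Tendsto (fun y : ℝ≥0 ↦ (Φ (y * I)).re / y) atTop (𝓝 0) := by
    simpa [Function.comp_def] using (Complex.continuous_re.tendsto _).comp hinf
  have him : Tendsto (fun y : ℝ≥0 ↦ ((Φ (y * I)).im.toNNReal : ℝ) / y) atTop (𝓝 k) := by
    have : Tendsto (fun y : ℝ≥0 ↦ (Φ (y * I)).im / y) atTop (𝓝 k) := by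
      simpa [Function.comp_def] using (Complex.continuous_im.tendsto _).comp hinf
    refine this.congr' ?_
    filter_upwards [eventually_gt_atTop 0] with y hy
    rw [Real.coe_toNNReal _ (h.im_nonneg _ (by simpa using hy))]
  refine (tendsto_mul_cauchyMeasure_apply hk (NNReal.tendsto_coe_atTop.2 tendsto_id) hre him
    hAfin).congr' ?_
  filter_upwards [eventually_ne_atTop 0] with y hy
  have hmap := h.map_cauchyMeasure 0 hy
  rw [Complex.ofReal_zero, zero_add] at hmap
  rw [id_eq, ← hmap, Measure.map_apply_of_aemeasurable
    (h.aemeasurable.mono_ac (cauchyMeasure_absolutelyContinuous 0 hy)) hA]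

lemma volume_preimage (h : HalfPlaneInner Φ φ) {k : ℝ} (hk : 0 < k)
    (hinf : Tendsto (fun y : ℝ≥0 ↦ Φ (y * I) / y) atTop (𝓝 (k * I)))
    {A : Set ℝ} (hA : MeasurableSet A) (hAfin : volume A ≠ ∞) :
    volume (φ ⁻¹' A) = .ofReal k⁻¹ * volume A := by
  have htarget := h.tendsto_mul_cauchyMeasure_preimage hk hinf hA hAfin
  have hsource : ∀ S : Set ℝ, volume S ≠ ∞ →
      Tendsto (fun y : ℝ≥0 ↦ .ofReal (π * y) * cauchyMeasure 0 y S) atTop (𝓝 (volume S)) := by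
    intro S hS
    have hone : Tendsto (fun y : ℝ≥0 ↦ (y : ℝ) / y) atTop (𝓝 1) := by
      refine tendsto_const_nhds.congr' ?_
      filter_upwards [eventually_ne_atTop 0] with y hy
      rw [div_self (NNReal.coe_ne_zero.2 hy)]
    simpa using tendsto_mul_cauchyMeasure_apply one_pos (NNReal.tendsto_coe_atTop.2 tendsto_id)
      (a := 0) (by simp) hone hS
  -- `hsource` needs finite measure, so first bound the finite-measure parts of the preimage.
  have hle : volume (φ ⁻¹' A) ≤ .ofReal k⁻¹ * volume A := by
    obtain ⟨T, hTA, hT, hTae⟩ :=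
      (h.aemeasurable.nullMeasurableSet_preimage hA).exists_measurable_subset_ae_eq
    rw [← measure_congr hTae]
    refine le_of_forall_lt fun r hr ↦ ?_
    obtain ⟨S, -, hST, hrS, hSfin⟩ := Measure.exists_subset_measure_lt_top hT hr
    refine hrS.trans_le (le_of_tendsto_of_tendsto' (hsource S hSfin.ne) htarget fun y ↦ ?_)
    gcongr
    exact hST.trans hTA
  have hfin : volume (φ ⁻¹' A) ≠ ∞ :=
    ne_top_of_le_ne_top (ENNReal.mul_ne_top ENNReal.ofReal_ne_top hAfin) hle
  exact tendsto_nhds_unique (hsource _ hfin) htarget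

lemma map_volume (h : HalfPlaneInner Φ φ) {k : ℝ} (hk : 0 < k)
    (hinf : Tendsto (fun y : ℝ≥0 ↦ Φ (y * I) / y) atTop (𝓝 (k * I))) :
    volume.map φ = ENNReal.ofReal k⁻¹ • volume := by
  have hIoo : ∀ a b : ℝ, volume.map φ (Ioo a b) = (ENNReal.ofReal k⁻¹ • volume) (Ioo a b) :=
    fun a b ↦ by
      rw [Measure.map_apply_of_aemeasurable h.aemeasurable measurableSet_Ioo,
        h.volume_preimage hk hinf measurableSet_Ioo (by simp), Measure.smul_apply, smul_eq_mul]
  have : IsLocallyFiniteMeasure (volume.map φ) :=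
    ⟨fun x ↦ ⟨Ioo (x - 1) (x + 1), Ioo_mem_nhds (by simp) (by simp), by
      simp [hIoo, ENNReal.mul_lt_top]⟩⟩
  exact Real.measure_ext_Ioo_rat fun a b ↦ hIoo a b

end HalfPlaneInner

section LebesguePoints

open Metric

lemma setLIntegral_ball_le_of_superlevel_eq_ball {X : Type*} [PseudoMetricSpace X]
    [MeasurableSpace X] [OpensMeasurableSpace X] {μ ν : Measure X} {x : X} {η : ℝ} {ε : ℝ≥0∞}
    (hμν : ∀ r ≤ η, μ (ball x r) ≤ ε * ν (ball x r)) {K : X → ℝ} (hK : 0 ≤ K) (hKm : Measurable K)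
    (hball : ∀ τ, 0 < τ → ∃ ρ, {t | τ < K t} = ball x ρ) :
    ∫⁻ t in ball x η, .ofReal (K t) ∂μ ≤ ε * ∫⁻ t in ball x η, .ofReal (K t) ∂ν := by
  -- The layer-cake formula reduces the claim to superlevel sets, which are concentric balls.
  rw [lintegral_eq_lintegral_meas_lt _ (.of_forall hK) hKm.aemeasurable,
    lintegral_eq_lintegral_meas_lt _ (.of_forall hK) hKm.aemeasurable,
    ← lintegral_const_mul]
  · refine setLIntegral_mono' measurableSet_Ioi fun τ hτ ↦ ?_
    obtain ⟨ρ, hρ⟩ := hball τ hτ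
    rw [hρ, Measure.restrict_apply measurableSet_ball, Measure.restrict_apply measurableSet_ball]
    rcases le_total ρ η with h | h
    · rw [inter_eq_self_of_subset_left (ball_subset_ball h)]
      exact hμν ρ h
    · rw [inter_eq_self_of_subset_right (ball_subset_ball h)]
      exact hμν η le_rfl
  · exact (Antitone.measurable fun τ σ hτσ ↦ measure_mono fun t ht ↦ hτσ.trans_lt ht)

lemma exists_superlevel_cauchyPDFReal_eq_ball (x : ℝ) (γ : ℝ≥0) {τ : ℝ} (hτ : 0 < τ) :
    ∃ ρ, {t | τ < cauchyPDFReal x γ t} = ball x ρ := by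
  rcases eq_or_ne γ 0 with rfl | hγ
  · exact ⟨0, by simp [cauchyPDFReal_def, hτ.not_gt]⟩
  refine ⟨√(γ / (π * τ) - γ ^ 2), ext fun t ↦ ?_⟩
  rw [mem_ofPred_eq, mem_ball, dist_eq, Real.lt_sqrt (abs_nonneg _), sq_abs, lt_sub_iff_add_lt,
    cauchyPDFReal_def, ← div_eq_mul_inv, lt_div_iff₀ (by positivity),
    lt_div_iff₀ (by positivity), inv_mul_eq_div, lt_div_iff₀ pi_pos]
  ring_nf

lemma setLIntegral_ball_cauchyPDF_le {μ : Measure ℝ} {x η : ℝ} {ε : ℝ≥0∞}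
    (hμ : ∀ r ≤ η, μ (ball x r) ≤ ε * volume (ball x r)) (γ : ℝ≥0) :
    ∫⁻ t in ball x η, cauchyPDF x γ t ∂μ ≤ ε := by
  rcases eq_or_ne γ 0 with rfl | hγ
  · simp [cauchyPDF_def, cauchyPDFReal_def]
  calc ∫⁻ t in ball x η, cauchyPDF x γ t ∂μ ≤ ε * ∫⁻ t in ball x η, cauchyPDF x γ t :=
        setLIntegral_ball_le_of_superlevel_eq_ball hμ (fun t ↦ (cauchyPDF_pos x hγ t).le)
          (measurable_cauchyPDFReal x γ) fun τ ↦ exists_superlevel_cauchyPDFReal_eq_ball x γ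
    _ ≤ ε * 1 := by
        gcongr
        exact (setLIntegral_le_lintegral _ _).trans (lintegral_cauchyPDF_eq_one x hγ).le
    _ = ε := mul_one ε

lemma cauchyPDFReal_le_mul_of_le_abs_sub {x η t : ℝ} (hη : 0 < η) (ht : η ≤ |t - x|) (γ : ℝ≥0) :
    cauchyPDFReal x γ t ≤ γ * (1 + (η ^ 2)⁻¹) * cauchyPDFReal x 1 t := by
  have hsq : η ^ 2 ≤ (t - x) ^ 2 := by
    rw [← sq_abs (t - x)]
    gcongr
  have hpos : 0 < (t - x) ^ 2 := (pow_pos hη 2).trans_le hsq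
  have hinv : ((t - x) ^ 2)⁻¹ ≤ (1 + (η ^ 2)⁻¹) * ((t - x) ^ 2 + 1)⁻¹ := by
    rw [← div_eq_mul_inv, inv_eq_one_div, div_le_div_iff₀ hpos (by positivity), add_mul]
    have : 1 ≤ (η ^ 2)⁻¹ * (t - x) ^ 2 := by
      rwa [inv_mul_eq_div, one_le_div (pow_pos hη 2)]
    linarith
  simp only [cauchyPDFReal_def, NNReal.coe_one, one_pow, mul_one]
  calc π⁻¹ * γ * ((t - x) ^ 2 + γ ^ 2)⁻¹ ≤ π⁻¹ * γ * ((t - x) ^ 2)⁻¹ := by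
        gcongr
        exact le_add_of_nonneg_right (sq_nonneg _)
    _ ≤ π⁻¹ * γ * ((1 + (η ^ 2)⁻¹) * ((t - x) ^ 2 + 1)⁻¹) := by gcongr
    _ = γ * (1 + (η ^ 2)⁻¹) * (π⁻¹ * ((t - x) ^ 2 + 1)⁻¹) := by ring

lemma tendsto_lintegral_cauchyPDF_of_density_zero {μ : Measure ℝ} {x : ℝ}
    (hfin : ∫⁻ t, cauchyPDF x 1 t ∂μ ≠ ∞)
    (hdens : Tendsto (fun r ↦ μ (ball x r) / volume (ball x r)) (𝓝[>] 0) (𝓝 0)) :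
    Tendsto (fun γ : ℝ≥0 ↦ ∫⁻ t, cauchyPDF x γ t ∂μ) (𝓝 0) (𝓝 0) := by
  refine ENNReal.tendsto_nhds_zero.2 fun ε hε ↦ ?_
  have hε2 : 0 < ε / 2 := ENNReal.half_pos hε.ne'
  obtain ⟨η, hη, hηball⟩ :=
    mem_nhdsGT_iff_exists_Ioc_subset.1 (ENNReal.tendsto_nhds_zero.1 hdens _ hε2)
  have hnear : ∀ r ≤ η, μ (ball x r) ≤ ε / 2 * volume (ball x r) := fun r hr ↦ by
    rcases le_or_gt r 0 with hr0 | hr0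
    · simp [ball_eq_empty.2 hr0]
    · exact (ENNReal.div_le_iff (measure_ball_pos _ _ hr0).ne' measure_ball_lt_top.ne).1
        (hηball ⟨hr0, hr⟩)
  have hfar : ∀ γ : ℝ≥0, ∫⁻ t in (ball x η)ᶜ, cauchyPDF x γ t ∂μ
      ≤ .ofReal (γ * (1 + (η ^ 2)⁻¹)) * ∫⁻ t, cauchyPDF x 1 t ∂μ := fun γ ↦ by
    rw [← lintegral_const_mul _ (measurable_cauchyPDF x 1)]
    refine (setLIntegral_mono' measurableSet_ball.compl fun t ht ↦ ?_).trans
      (setLIntegral_le_lintegral _ _)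
    rw [cauchyPDF_def, cauchyPDF_def, ← ENNReal.ofReal_mul (by positivity)]
    refine ENNReal.ofReal_le_ofReal (cauchyPDFReal_le_mul_of_le_abs_sub hη ?_ γ)
    simpa [dist_eq] using ht
  have hvanish : Tendsto (fun γ : ℝ≥0 ↦ .ofReal (γ * (1 + (η ^ 2)⁻¹))
      * ∫⁻ t, cauchyPDF x 1 t ∂μ) (𝓝 0) (𝓝 0) := by
    have hcont : Continuous fun γ : ℝ≥0 ↦ ENNReal.ofReal (γ * (1 + (η ^ 2)⁻¹)) :=
      ENNReal.continuous_ofReal.comp (by fun_prop)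
    simpa using ENNReal.Tendsto.mul_const (hcont.tendsto 0) (.inr hfin)
  filter_upwards [ENNReal.tendsto_nhds_zero.1 hvanish _ hε2] with γ hγ
  rw [← lintegral_add_compl _ measurableSet_ball, ← ENNReal.add_halves ε]
  exact add_le_add (setLIntegral_ball_cauchyPDF_le hnear γ) ((hfar γ).trans hγ)

variable {E : Type*} [NormedAddCommGroup E] {f : ℝ → E}

lemma cauchyMeasure_le_smul_volume (a : ℝ) {γ : ℝ≥0} (hγ : γ ≠ 0) :
    cauchyMeasure a γ ≤ ENNReal.ofReal (π * γ)⁻¹ • volume := by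
  rw [cauchyMeasure_of_scale_ne_zero a hγ, ← withDensity_const]
  exact withDensity_mono (.of_forall fun t ↦ ENNReal.ofReal_le_ofReal (cauchyPDFReal_le a γ t))

lemma integrable_cauchyMeasure_of_integrable (hf : Integrable f) (a : ℝ) {γ : ℝ≥0} (hγ : γ ≠ 0) :
    Integrable f (cauchyMeasure a γ) :=
  hf.of_measure_le_smul ENNReal.ofReal_ne_top (cauchyMeasure_le_smul_volume a hγ)

lemma lintegral_cauchyMeasure_eq {g : ℝ → ℝ≥0∞} (hg : AEMeasurable g) (a : ℝ) {γ : ℝ≥0}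
    (hγ : γ ≠ 0) :
    ∫⁻ t, g t ∂cauchyMeasure a γ = ∫⁻ t, cauchyPDF a γ t ∂volume.withDensity g := by
  rw [cauchyMeasure_of_scale_ne_zero a hγ,
    lintegral_withDensity_eq_lintegral_mul₀ (measurable_cauchyPDF a γ).aemeasurable hg,
    lintegral_withDensity_eq_lintegral_mul₀ hg (measurable_cauchyPDF a γ).aemeasurable, mul_comm]

lemma ae_tendsto_lintegral_enorm_sub_div_ball (hf : LocallyIntegrable f) :
    ∀ᵐ x, Tendsto (fun r ↦ (∫⁻ t in ball x r, ‖f t - f x‖ₑ) / volume (ball x r)) (𝓝[>] 0)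
      (𝓝 0) := by
  filter_upwards [(Besicovitch.vitaliFamily volume).ae_tendsto_lintegral_enorm_sub_div hf]
    with x hx
  refine (hx.comp (Besicovitch.tendsto_filterAt volume x)).congr fun r ↦ ?_
  have hae : closedBall x r =ᵐ[volume] ball x r := by
    rw [closedBall_eq_Icc, ball_eq_Ioo]
    exact Ioo_ae_eq_Icc.symm
  rw [Function.comp_apply, setLIntegral_congr hae, measure_congr hae]

lemma ae_tendsto_lintegral_enorm_sub_cauchyMeasure (hf : Integrable f) :
    ∀ᵐ x, Tendsto (fun γ : ℝ≥0 ↦ ∫⁻ t, ‖f t - f x‖ₑ ∂cauchyMeasure x γ) (𝓝[>] 0) (𝓝 0) := by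
  filter_upwards [ae_tendsto_lintegral_enorm_sub_div_ball hf.locallyIntegrable] with x hx
  have hmeas : AEMeasurable fun t ↦ ‖f t - f x‖ₑ :=
    (hf.aestronglyMeasurable.sub aestronglyMeasurable_const).enorm
  have hfin : ∫⁻ t, cauchyPDF x 1 t ∂volume.withDensity (fun t ↦ ‖f t - f x‖ₑ) ≠ ∞ := by
    rw [← lintegral_cauchyMeasure_eq hmeas x one_ne_zero]
    exact ((integrable_cauchyMeasure_of_integrable hf x one_ne_zero).sub
      (integrable_const _)).2.ne
  have := (tendsto_lintegral_cauchyPDF_of_density_zero hfin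
    (by simpa only [withDensity_apply _ measurableSet_ball] using hx)).mono_left
      (nhdsWithin_le_nhds (s := Ioi 0))
  refine this.congr' ?_
  filter_upwards [self_mem_nhdsWithin] with γ hγ
  exact (lintegral_cauchyMeasure_eq hmeas x (ne_of_gt hγ)).symm

lemma ae_tendsto_integral_norm_sub_cauchyMeasure (hf : Integrable f) :
    ∀ᵐ x, Tendsto (fun γ : ℝ≥0 ↦ ∫ t, ‖f t - f x‖ ∂cauchyMeasure x γ) (𝓝[>] 0) (𝓝 0) := by
  filter_upwards [ae_tendsto_lintegral_enorm_sub_cauchyMeasure hf] with x hx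
  refine ((ENNReal.tendsto_toReal ENNReal.zero_ne_top).comp hx).congr' ?_
  filter_upwards [self_mem_nhdsWithin] with γ hγ
  exact (integral_norm_eq_lintegral_enorm ((integrable_cauchyMeasure_of_integrable hf x
    (ne_of_gt hγ)).sub (integrable_const _)).aestronglyMeasurable).symm

lemma ae_tendsto_integral_cauchyMeasure [NormedSpace ℝ E] [CompleteSpace E]
    (hf : Integrable f) :
    ∀ᵐ x, Tendsto (fun γ : ℝ≥0 ↦ ∫ t, f t ∂cauchyMeasure x γ) (𝓝[>] 0) (𝓝 (f x)) := by
  filter_upwards [ae_tendsto_integral_norm_sub_cauchyMeasure hf] with x hx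
  refine tendsto_iff_norm_sub_tendsto_zero.2 (squeeze_zero' (by simp) ?_ hx)
  filter_upwards [self_mem_nhdsWithin] with γ hγ
  calc ‖∫ t, f t ∂cauchyMeasure x γ - f x‖ = ‖∫ t, (f t - f x) ∂cauchyMeasure x γ‖ := by
        rw [integral_sub (integrable_cauchyMeasure_of_integrable hf x (ne_of_gt hγ))
          (integrable_const _), integral_const, probReal_univ, one_smul]
    _ ≤ ∫ t, ‖f t - f x‖ ∂cauchyMeasure x γ := norm_integral_le_integral_norm _

end LebesguePoints

/-- The truncated Hilbert transform of `f`: the integral of `f t / (x - t)` over `ε < |t - x|`,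
normalised by `1 / π`. -/
noncomputable def truncatedHilbert (f : ℝ → ℝ) (ε x : ℝ) : ℝ :=
  (1 / π) * ∫ t in {t : ℝ | ε < |t - x|}, f t / (x - t)

/-- The Cauchy transform `∫ f t / (t - z)` of `f`, without the customary factor `1 / (2πi)`. -/
noncomputable def cauchyTransform (f : ℝ → ℝ) (z : ℂ) : ℂ :=
  ∫ t : ℝ, (f t : ℂ) * ((t : ℂ) - z)⁻¹

/-- The conjugate Poisson kernel at height `γ` minus the Hilbert kernel `1 / u` truncated to
`γ < |u|`, both without the factor `1 / π`. -/
noncomputable def hilbertKernelDefect (γ : ℝ≥0) (u : ℝ) : ℝ :=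
  u / (u ^ 2 + γ ^ 2) - {u : ℝ | γ < |u|}.indicator (fun u ↦ u⁻¹) u

section Kernel

lemma im_le_norm_ofReal_sub (t : ℝ) (z : ℂ) : z.im ≤ ‖(t : ℂ) - z‖ := by
  refine (le_abs_self _).trans ?_
  simpa using Complex.abs_im_le_norm ((t : ℂ) - z)

lemma ofReal_sub_ne_zero (t : ℝ) {z : ℂ} (hz : 0 < z.im) : (t : ℂ) - z ≠ 0 :=
  norm_pos_iff.1 (hz.trans_le (im_le_norm_ofReal_sub t z))

lemma norm_inv_ofReal_sub_le (t : ℝ) {z : ℂ} (hz : 0 < z.im) : ‖((t : ℂ) - z)⁻¹‖ ≤ z.im⁻¹ := by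
  rw [norm_inv]
  gcongr
  exact im_le_norm_ofReal_sub t z

lemma re_inv_ofReal_sub (x t : ℝ) (γ : ℝ≥0) :
    ((t : ℂ) - (x + γ * I))⁻¹.re = (t - x) / ((t - x) ^ 2 + γ ^ 2) := by
  simp [Complex.inv_re, Complex.normSq_apply, sq]

lemma im_inv_ofReal_sub (x t : ℝ) (γ : ℝ≥0) :
    ((t : ℂ) - (x + γ * I))⁻¹.im = π * cauchyPDFReal x γ t := by
  have him : ((t : ℂ) - (x + γ * I)).im = -γ := by simp
  have hsq : Complex.normSq ((t : ℂ) - (x + γ * I)) = (t - x) ^ 2 + γ ^ 2 := by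
    simp [Complex.normSq_apply, sq]
  rw [Complex.inv_im, him, hsq, neg_neg, cauchyPDFReal_def, mul_assoc,
    mul_inv_cancel_left₀ pi_ne_zero, div_eq_mul_inv]

lemma abs_hilbertKernelDefect_le {γ : ℝ≥0} (x t : ℝ) :
    |hilbertKernelDefect γ (t - x)| ≤ π * cauchyPDFReal x γ t := by
  rcases eq_or_ne γ 0 with rfl | hγ
  · by_cases h : t - x = 0
    · simp [hilbertKernelDefect, cauchyPDFReal_def, h]
    · simp [hilbertKernelDefect, cauchyPDFReal_def, h, sq]
  have hγ' : (0 : ℝ) < γ := by positivity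
  set u := t - x with hu
  have hpdf : π * cauchyPDFReal x γ t = γ / (u ^ 2 + γ ^ 2) := by
    rw [cauchyPDFReal_def, ← hu]
    field_simp
  rw [hpdf, hilbertKernelDefect]
  have hden : 0 < u ^ 2 + (γ : ℝ) ^ 2 := by positivity
  by_cases h : γ < |u|
  · have hu0 : u ≠ 0 := abs_pos.1 (hγ'.trans h)
    rw [indicator_of_mem (by exact h)]
    have : u / (u ^ 2 + γ ^ 2) - u⁻¹ = - (γ ^ 2 / (u * (u ^ 2 + γ ^ 2))) := by
      field_simp
      ring
    calc |u / (u ^ 2 + γ ^ 2) - u⁻¹| = γ / |u| * (γ / (u ^ 2 + γ ^ 2)) := by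
          rw [this, abs_neg, abs_div, abs_mul, abs_of_pos hden, abs_of_pos (pow_pos hγ' 2)]
          field_simp
      _ ≤ γ / (u ^ 2 + γ ^ 2) :=
          mul_le_of_le_one_left (by positivity) (div_le_one_of_le₀ h.le (abs_nonneg u))
  · rw [indicator_of_notMem (by exact h), sub_zero, abs_div, abs_of_pos hden]
    gcongr
    exact not_lt.1 h

lemma hilbertKernelDefect_neg (γ : ℝ≥0) (u : ℝ) :
    hilbertKernelDefect γ (-u) = -hilbertKernelDefect γ u := by
  by_cases h : γ < |u| <;> simp [hilbertKernelDefect, indicator, h, neg_div]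
  ring

lemma measurable_hilbertKernelDefect (γ : ℝ≥0) : Measurable (hilbertKernelDefect γ) :=
  Measurable.sub (by fun_prop)
    (measurable_inv.indicator (measurableSet_lt (by fun_prop) (by fun_prop)))

lemma integral_hilbertKernelDefect (γ : ℝ≥0) (x : ℝ) :
    ∫ t, hilbertKernelDefect γ (t - x) = 0 := by
  rw [integral_sub_right_eq_self]
  have := integral_neg_eq_self (hilbertKernelDefect γ) volume
  simp only [hilbertKernelDefect_neg, integral_neg] at this
  linarith

end Kernel

section CauchyTransform

variable {f : ℝ → ℝ}

lemma integrable_mul_inv_ofReal_sub (hf : Integrable f) {z : ℂ} (hz : 0 < z.im) :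
    Integrable fun t : ℝ ↦ (f t : ℂ) * ((t : ℂ) - z)⁻¹ :=
  hf.ofReal.mul_bdd (by fun_prop) (.of_forall fun t ↦ norm_inv_ofReal_sub_le t hz)

lemma differentiableOn_cauchyTransform (hf : Integrable f) :
    DifferentiableOn ℂ (cauchyTransform f) {z | 0 < z.im} := by
  intro z (hz : 0 < z.im)
  have hnear : {w : ℂ | z.im / 2 < w.im} ∈ 𝓝 z :=
    (isOpen_lt continuous_const Complex.continuous_im).mem_nhds (half_lt_self hz)
  refine (hasDerivAt_integral_of_dominated_loc_of_deriv_le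
    (F := fun (z : ℂ) (t : ℝ) ↦ (f t : ℂ) * ((t : ℂ) - z)⁻¹)
    (F' := fun z t ↦ (f t : ℂ) * (((t : ℂ) - z)⁻¹) ^ 2)
    (bound := fun t ↦ ‖f t‖ * ((z.im / 2)⁻¹) ^ 2) hnear
    (.of_forall fun w ↦ hf.ofReal.aestronglyMeasurable.mul (by fun_prop))
    (integrable_mul_inv_ofReal_sub hf hz)
    (hf.ofReal.aestronglyMeasurable.mul (by fun_prop))
    (.of_forall fun t w (hw : z.im / 2 < w.im) ↦ ?_) (hf.norm.mul_const _)
    (.of_forall fun t w (hw : z.im / 2 < w.im) ↦ ?_)).2.differentiableAt.differentiableWithinAt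
  · rw [norm_mul, norm_pow, Complex.norm_real]
    gcongr
    refine (norm_inv_ofReal_sub_le t ((half_pos hz).trans hw)).trans ?_
    gcongr
  · have hsub : HasDerivAt (fun w : ℂ ↦ (t : ℂ) - w) (-1) w := (hasDerivAt_id w).const_sub _
    have hne := ofReal_sub_ne_zero t ((half_pos hz).trans hw)
    simpa using (hsub.fun_inv hne).const_mul (f t : ℂ)

lemma im_cauchyTransform (hf : Integrable f) (x : ℝ) {γ : ℝ≥0} (hγ : γ ≠ 0) :
    (cauchyTransform f (x + γ * I)).im = π * ∫ t, f t ∂cauchyMeasure x γ := by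
  have him : 0 < (x + γ * I : ℂ).im := by simpa [pos_iff_ne_zero] using hγ
  rw [cauchyTransform, integral_cauchyMeasure_eq x hγ, ← integral_const_mul]
  refine (integral_im (integrable_mul_inv_ofReal_sub hf him)).symm.trans (integral_congr_ae ?_)
  refine .of_forall fun t ↦ ?_
  simp only [RCLike.im_to_complex, Complex.im_ofReal_mul, im_inv_ofReal_sub, smul_eq_mul]
  ring

lemma re_cauchyTransform_add_truncatedHilbert (hf : Integrable f) (x : ℝ) {γ : ℝ≥0} (hγ : γ ≠ 0) :
    (cauchyTransform f (x + γ * I)).re + π * truncatedHilbert f γ x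
      = ∫ t, f t * hilbertKernelDefect γ (t - x) := by
  have him : 0 < (x + γ * I : ℂ).im := by simpa [pos_iff_ne_zero] using hγ
  have hint := integrable_mul_inv_ofReal_sub hf him
  have hset : MeasurableSet {t : ℝ | γ < |t - x|} := measurableSet_lt (by fun_prop) (by fun_prop)
  have hre : (cauchyTransform f (x + γ * I)).re
      = ∫ t, f t * ((t - x) / ((t - x) ^ 2 + γ ^ 2)) := by
    refine (integral_re hint).symm.trans (integral_congr_ae (.of_forall fun t ↦ ?_))
    simp only [RCLike.re_to_complex, Complex.re_ofReal_mul, re_inv_ofReal_sub]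
  have htrunc : π * truncatedHilbert f γ x
      = ∫ t, -(f t * {u : ℝ | γ < |u|}.indicator (fun u ↦ u⁻¹) (t - x)) := by
    rw [truncatedHilbert, ← mul_assoc, mul_one_div_cancel pi_ne_zero, one_mul,
      ← integral_indicator hset]
    congr 1 with t
    by_cases h : γ < |t - x|
    · simp only [h, indicator_of_mem, mem_ofPred_eq]
      rw [← neg_sub t x, div_neg, div_eq_mul_inv]
    · simp [h]
  rw [hre, htrunc, ← integral_add]
  · simp only [hilbertKernelDefect, mul_sub, ← sub_eq_add_neg]
  · simpa only [RCLike.re_to_complex, Complex.re_ofReal_mul, re_inv_ofReal_sub] using hint.re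
  · refine (hf.mul_bdd (c := (γ : ℝ)⁻¹) ?_ (.of_forall fun t ↦ ?_)).neg
    · exact ((measurable_inv.indicator (measurableSet_lt (by fun_prop) (by fun_prop))).comp
        (by fun_prop)).aestronglyMeasurable
    · by_cases h : γ < |t - x|
      · simp only [h, indicator_of_mem, mem_ofPred_eq, norm_inv, norm_eq_abs]
        gcongr
      · simp [h]

lemma integral_mul_hilbertKernelDefect_eq_sub (hf : Integrable f) (γ : ℝ≥0) (x c : ℝ) :
    ∫ t, f t * hilbertKernelDefect γ (t - x) = ∫ t, (f t - c) * hilbertKernelDefect γ (t - x) := by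
  have hmeas : AEStronglyMeasurable (fun t ↦ hilbertKernelDefect γ (t - x)) :=
    ((measurable_hilbertKernelDefect γ).comp (by fun_prop)).aestronglyMeasurable
  have hdefect : Integrable fun t ↦ hilbertKernelDefect γ (t - x) :=
    ((integrable_cauchyPDFReal x).const_mul π).mono' hmeas
      (.of_forall fun t ↦ abs_hilbertKernelDefect_le x t)
  have hfdefect : Integrable fun t ↦ f t * hilbertKernelDefect γ (t - x) :=
    hf.mul_bdd hmeas (.of_forall fun t ↦ (abs_hilbertKernelDefect_le x t).trans
      (mul_le_mul_of_nonneg_left (cauchyPDFReal_le x γ t) pi_pos.le))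
  simp only [sub_mul]
  rw [integral_sub hfdefect (hdefect.const_mul c), integral_const_mul,
    integral_hilbertKernelDefect, mul_zero, sub_zero]

lemma abs_re_cauchyTransform_add_truncatedHilbert_le (hf : Integrable f) (x : ℝ) {γ : ℝ≥0}
    (hγ : γ ≠ 0) :
    |(cauchyTransform f (x + γ * I)).re + π * truncatedHilbert f γ x|
      ≤ π * ∫ t, ‖f t - f x‖ ∂cauchyMeasure x γ := by
  have hbound : Integrable fun t ↦ π * (cauchyPDFReal x γ t * ‖f t - f x‖) := by
    have hpdf : Integrable (cauchyPDFReal x γ) := integrable_cauchyPDFReal x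
    have hpos (t : ℝ) : ‖cauchyPDFReal x γ t‖ = cauchyPDFReal x γ t :=
      norm_of_nonneg (cauchyPDF_pos x hγ t).le
    have := ((hf.bdd_mul hpdf.aestronglyMeasurable
      (.of_forall fun t ↦ (hpos t).trans_le (cauchyPDFReal_le x γ t))).sub
      (hpdf.mul_const (f x))).norm
    simp only [Pi.sub_apply, ← mul_sub, norm_mul, hpos] at this
    exact this.const_mul π
  rw [re_cauchyTransform_add_truncatedHilbert hf x hγ,
    integral_mul_hilbertKernelDefect_eq_sub hf γ x (f x), ← norm_eq_abs,
    integral_cauchyMeasure_eq x hγ, ← integral_const_mul]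
  refine norm_integral_le_of_norm_le hbound (.of_forall fun t ↦ ?_)
  calc ‖(f t - f x) * hilbertKernelDefect γ (t - x)‖
      ≤ ‖f t - f x‖ * (π * cauchyPDFReal x γ t) := by
        rw [norm_mul]
        gcongr
        exact abs_hilbertKernelDefect_le x t
    _ = π * (cauchyPDFReal x γ t * ‖f t - f x‖) := by ring

lemma ae_tendsto_cauchyTransform (hf : Integrable f) {h : ℝ → ℝ}
    (hh : ∀ᵐ x, Tendsto (truncatedHilbert f · x) (𝓝[>] 0) (𝓝 (h x))) :
    ∀ᵐ x : ℝ, Tendsto (fun γ : ℝ≥0 ↦ cauchyTransform f (x + γ * I)) (𝓝[>] 0)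
      (𝓝 (-(π * h x) + (π * f x) * I)) := by
  have hcoe : Tendsto ((↑) : ℝ≥0 → ℝ) (𝓝[>] 0) (𝓝[>] 0) := (NNReal.map_coe_nhdsGT 0).le
  filter_upwards [hh, ae_tendsto_integral_norm_sub_cauchyMeasure hf,
    ae_tendsto_integral_cauchyMeasure hf] with x hx hLeb hmean
  have hre : Tendsto (fun γ : ℝ≥0 ↦ (cauchyTransform f (x + γ * I)).re) (𝓝[>] 0)
      (𝓝 (-(π * h x))) := by
    have hsum : Tendsto (fun γ : ℝ≥0 ↦ (cauchyTransform f (x + γ * I)).re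
        + π * truncatedHilbert f γ x) (𝓝[>] 0) (𝓝 0) := by
      refine squeeze_zero_norm' ?_ (by simpa using hLeb.const_mul π)
      filter_upwards [self_mem_nhdsWithin] with γ hγ
      exact abs_re_cauchyTransform_add_truncatedHilbert_le hf x (ne_of_gt hγ)
    simpa using hsum.sub ((hx.comp hcoe).const_mul π)
  have him : Tendsto (fun γ : ℝ≥0 ↦ (cauchyTransform f (x + γ * I)).im) (𝓝[>] 0)
      (𝓝 (π * f x)) := by
    refine (hmean.const_mul π).congr' ?_
    filter_upwards [self_mem_nhdsWithin] with γ hγ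
    exact (im_cauchyTransform hf x (ne_of_gt hγ)).symm
  have := ((Complex.continuous_ofReal.tendsto _).comp hre).add
    (((Complex.continuous_ofReal.tendsto _).comp him).mul_const I)
  simpa [Function.comp_def, Complex.re_add_im] using this

lemma tendsto_mul_cauchyTransform (hf : Integrable f) :
    Tendsto (fun y : ℝ≥0 ↦ y * cauchyTransform f (y * I)) atTop (𝓝 ((∫ t, f t) * I)) := by
  have hpt : ∀ t : ℝ, Tendsto (fun y : ℝ≥0 ↦ (y : ℂ) * ((t : ℂ) - y * I)⁻¹) atTop (𝓝 I) := by
    intro t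
    have hdiv : Tendsto (fun y : ℝ≥0 ↦ ((t / y : ℝ) : ℂ) - I) atTop (𝓝 ((0 : ℝ) - I)) :=
      ((Complex.continuous_ofReal.tendsto _).comp <| tendsto_const_nhds.div_atTop <|
        NNReal.tendsto_coe_atTop.2 tendsto_id).sub_const _
    have hinv := hdiv.inv₀ (by simp)
    rw [Complex.ofReal_zero, zero_sub, inv_neg, Complex.inv_I, neg_neg] at hinv
    refine hinv.congr' ?_
    filter_upwards [eventually_ne_atTop 0] with y hy
    have hy' : (y : ℂ) ≠ 0 := by exact_mod_cast hy
    rw [show (t : ℂ) - y * I = y * (((t / y : ℝ) : ℂ) - I) by push_cast; field_simp, mul_inv,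
      mul_inv_cancel_left₀ hy']
  have hint : (∫ t, f t) * I = ∫ t, (f t : ℂ) * I := by
    rw [integral_mul_const, integral_complex_ofReal]
  rw [hint]
  simp_rw [cauchyTransform, ← integral_const_mul, mul_left_comm]
  refine tendsto_integral_filter_of_dominated_convergence (fun t ↦ ‖f t‖)
    (.of_forall fun y ↦ hf.ofReal.aestronglyMeasurable.mul (by fun_prop)) ?_ hf.norm
    (.of_forall fun t ↦ (hpt t).const_mul _)
  filter_upwards [eventually_gt_atTop 0] with y hy
  refine .of_forall fun t ↦ ?_
  rw [norm_mul, Complex.norm_real]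
  refine mul_le_of_le_one_right (norm_nonneg _) ?_
  calc ‖(y : ℂ) * ((t : ℂ) - y * I)⁻¹‖ ≤ y * (y * I : ℂ).im⁻¹ := by
        rw [norm_mul, Complex.norm_real, NNReal.norm_eq]
        gcongr
        exact norm_inv_ofReal_sub_le t (by simpa using hy)
    _ = 1 := by simp [hy.ne']

end CauchyTransform

section ExpCauchyTransform

variable {f : ℝ → ℝ}

lemma tendsto_cauchyTransform_atTop (hf : Integrable f) :
    Tendsto (fun y : ℝ≥0 ↦ cauchyTransform f (y * I)) atTop (𝓝 0) := by
  have hinv : Tendsto (fun y : ℝ≥0 ↦ (((y : ℝ)⁻¹ : ℝ) : ℂ)) atTop (𝓝 (0 : ℝ)) :=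
    (Complex.continuous_ofReal.tendsto _).comp <|
      tendsto_inv_atTop_zero.comp (NNReal.tendsto_coe_atTop.2 tendsto_id)
  have := hinv.mul (tendsto_mul_cauchyTransform hf)
  rw [Complex.ofReal_zero, zero_mul] at this
  refine this.congr' ?_
  filter_upwards [eventually_ne_atTop 0] with y hy
  rw [Complex.ofReal_inv, inv_mul_cancel_left₀ (by exact_mod_cast hy)]

lemma tendsto_mul_exp_cauchyTransform_sub_one (hf : Integrable f) :
    Tendsto (fun y : ℝ≥0 ↦ y * (Complex.exp (cauchyTransform f (y * I)) - 1)) atTop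
      (𝓝 ((∫ t, f t) * I)) := by
  have hslope : Tendsto (dslope Complex.exp 0) (𝓝 0) (𝓝 1) := by
    simpa using (continuousAt_dslope_same.2 (Complex.differentiableAt_exp (x := 0))).tendsto
  have := (tendsto_mul_cauchyTransform hf).mul (hslope.comp (tendsto_cauchyTransform_atTop hf))
  rw [mul_one] at this
  refine this.congr fun y ↦ ?_
  have hexp := sub_smul_dslope Complex.exp 0 (cauchyTransform f (y * I))
  rw [sub_zero, smul_eq_mul, Complex.exp_zero] at hexp
  rw [← hexp, Function.comp_apply, mul_assoc]

lemma tendsto_cayley_exp_cauchyTransform_div (hf : Integrable f) (h0 : ∫ t, f t ≠ 0) :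
    Tendsto (fun y : ℝ≥0 ↦ (1 + Complex.exp (cauchyTransform f (y * I))) /
        (1 - Complex.exp (cauchyTransform f (y * I))) / y) atTop
      (𝓝 ((2 / ∫ t, f t : ℝ) * I)) := by
  have hnum : Tendsto (fun y : ℝ≥0 ↦ 1 + Complex.exp (cauchyTransform f (y * I))) atTop
      (𝓝 (1 + Complex.exp 0)) :=
    ((Complex.continuous_exp.tendsto 0).comp (tendsto_cauchyTransform_atTop hf)).const_add 1
  have h0' : ((∫ t, f t : ℝ) : ℂ) ≠ 0 := by exact_mod_cast h0
  have hdiv := hnum.div (tendsto_mul_exp_cauchyTransform_sub_one hf).neg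
    (neg_ne_zero.2 (mul_ne_zero h0' Complex.I_ne_zero))
  have hval : (1 + Complex.exp 0) / -((∫ t, f t : ℝ) * I) = (2 / ∫ t, f t : ℝ) * I := by
    rw [Complex.exp_zero]
    push_cast
    field_simp
    linear_combination -2 * Complex.I_sq
  rw [hval] at hdiv
  refine hdiv.congr fun y ↦ ?_
  rw [Pi.div_apply, div_div, ← mul_neg, neg_sub, mul_comm (y : ℂ) (1 - _)]

end ExpCauchyTransform

section Tanh

lemma tanh_lt_tanh_iff {u v : ℝ} : tanh u < tanh v ↔ u < v := by
  rw [← artanh_lt_artanh_iff ⟨neg_one_lt_tanh u, tanh_lt_one u⟩ ⟨neg_one_lt_tanh v, tanh_lt_one v⟩,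
    artanh_tanh, artanh_tanh]

lemma tanh_pos_iff {u : ℝ} : 0 < tanh u ↔ 0 < u := by
  simpa using tanh_lt_tanh_iff (u := 0) (v := u)

lemma abs_tanh (u : ℝ) : |tanh u| = tanh |u| := by
  rw [tanh_eq_sinh_div_cosh, tanh_eq_sinh_div_cosh, abs_div, abs_sinh, abs_of_pos (cosh_pos u),
    cosh_abs]

lemma tanh_div_two (u : ℝ) : tanh (u / 2) = (1 - rexp (-u)) / (1 + rexp (-u)) := by
  have hone : rexp (-(u / 2)) * rexp (u / 2) = 1 := by rw [← Real.exp_add, neg_add_cancel, exp_zero]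
  have hexp : rexp (-(u / 2)) * rexp (-(u / 2)) = rexp (-u) := by
    rw [← Real.exp_add, ← neg_add, add_halves]
  rw [tanh_eq, ← mul_div_mul_left _ _ (Real.exp_ne_zero (-(u / 2))), mul_sub, mul_add, hone, hexp]

lemma inv_tanh_sub_tanh {u : ℝ} (hu : u ≠ 0) :
    (tanh (u / 2))⁻¹ - tanh (u / 2) = 4 * rexp u / (rexp (2 * u) - 1) := by
  have hsq : rexp (2 * u) = rexp u ^ 2 := by rw [← Real.exp_nat_mul, Nat.cast_ofNat]
  have hone : rexp u - 1 ≠ 0 := by simpa [sub_ne_zero] using hu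
  have hone' : rexp u ^ 2 - 1 ≠ 0 := by
    rw [show rexp u ^ 2 - 1 = (rexp u - 1) * (rexp u + 1) by ring]
    positivity
  rw [tanh_div_two, hsq, Real.exp_neg]
  field_simp
  ring

lemma volume_abs_preimage_Ioo {a b : ℝ} (ha : 0 ≤ a) :
    volume (abs ⁻¹' Ioo a b) = ENNReal.ofReal (2 * (b - a)) := by
  have hset : abs ⁻¹' Ioo a b = Ioo a b ∪ Ioo (-b) (-a) := by
    ext v
    simp only [mem_preimage, mem_union, mem_Ioo]
    grind
  have hdisj : Disjoint (Ioo a b) (Ioo (-b) (-a)) :=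
    disjoint_left.2 fun v hv hv' ↦ by linarith [hv.1, hv'.2]
  rw [hset, measure_union hdisj measurableSet_Ioo, Real.volume_Ioo, Real.volume_Ioo,
    neg_sub_neg, ENNReal.ofReal_mul zero_le_two, ENNReal.ofReal_ofNat, two_mul]

end Tanh

section Indicator

variable {E : Set ℝ} {h : ℝ → ℝ}

lemma integrable_indicator_one (hE : MeasurableSet E) (hEfin : volume E ≠ ∞) :
    Integrable (E.indicator (1 : ℝ → ℝ)) :=
  (integrable_indicator_iff hE).2 (integrableOn_const hEfin)

lemma im_cauchyTransform_indicator (hE : MeasurableSet E) (hEfin : volume E ≠ ∞) {z : ℂ}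
    (hz : 0 < z.im) :
    (cauchyTransform (E.indicator 1) z).im
      = π * (cauchyMeasure z.re z.im.toNNReal).real E := by
  have hγ : z.im.toNNReal ≠ 0 := (Real.toNNReal_pos.2 hz).ne'
  have := im_cauchyTransform (integrable_indicator_one hE hEfin) z.re hγ
  rwa [Real.coe_toNNReal _ hz.le, Complex.re_add_im, integral_indicator_one hE] at this

lemma im_cauchyTransform_indicator_mem_Icc (hE : MeasurableSet E) (hEfin : volume E ≠ ∞) {z : ℂ}
    (hz : 0 < z.im) : (cauchyTransform (E.indicator 1) z).im ∈ Icc 0 π := by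
  rw [im_cauchyTransform_indicator hE hEfin hz]
  exact ⟨by positivity, mul_le_of_le_one_right pi_pos.le measureReal_le_one⟩

lemma im_cauchyTransform_indicator_pos (hE : MeasurableSet E) (hEfin : volume E ≠ ∞)
    (hE0 : volume E ≠ 0) {z : ℂ} (hz : 0 < z.im) :
    0 < (cauchyTransform (E.indicator 1) z).im := by
  rw [im_cauchyTransform_indicator hE hEfin hz]
  have hγ : z.im.toNNReal ≠ 0 := (Real.toNNReal_pos.2 hz).ne'
  exact mul_pos pi_pos <| ENNReal.toReal_pos
    (fun h ↦ hE0 (absolutelyContinuous_cauchyMeasure _ hγ h)) (measure_ne_top _ _)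

lemma exp_cauchyTransform_indicator_ne_one (hE : MeasurableSet E) (hEfin : volume E ≠ ∞)
    (hE0 : volume E ≠ 0) {z : ℂ} (hz : 0 < z.im) :
    Complex.exp (cauchyTransform (E.indicator 1) z) ≠ 1 := by
  intro hexp
  obtain ⟨n, hn⟩ := Complex.exp_eq_one_iff.1 hexp
  have him : (cauchyTransform (E.indicator 1) z).im = n * (2 * π) := by simp [hn]
  have hpos := im_cauchyTransform_indicator_pos hE hEfin hE0 hz
  have hle := (im_cauchyTransform_indicator_mem_Icc hE hEfin hz).2
  rw [him] at hpos hle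
  have hn0 : (0 : ℝ) < n := pos_of_mul_pos_left hpos (by positivity)
  have hn1 : (1 : ℝ) ≤ n := by exact_mod_cast hn0
  nlinarith [pi_pos]

lemma halfPlaneInner_exp_cauchyTransform_indicator (hE : MeasurableSet E) (hEfin : volume E ≠ ∞)
    (hh : ∀ᵐ x, Tendsto (truncatedHilbert (E.indicator 1) · x) (𝓝[>] 0) (𝓝 (h x))) :
    HalfPlaneInner (fun z ↦ Complex.exp (cauchyTransform (E.indicator 1) z))
      (fun x ↦ rexp (-(π * h x)) * cos (π * E.indicator 1 x)) where
  differentiableOn := (differentiableOn_cauchyTransform (integrable_indicator_one hE hEfin)).cexp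
  im_nonneg z hz := by
    have him := im_cauchyTransform_indicator_mem_Icc hE hEfin hz
    rw [Complex.exp_im]
    exact mul_nonneg (Real.exp_pos _).le (sin_nonneg_of_nonneg_of_le_pi him.1 him.2)
  tendsto := by
    filter_upwards [ae_tendsto_cauchyTransform (integrable_indicator_one hE hEfin) hh] with x hx
    have hexp : Complex.exp (-(π * h x) + (π * E.indicator 1 x : ℝ) * I)
        = (rexp (-(π * h x)) * cos (π * E.indicator 1 x) : ℝ) := by
      have hsin : Real.sin (π * E.indicator 1 x) = 0 := by by_cases hx : x ∈ E <;> simp [hx]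
      rw [Complex.exp_add, Complex.exp_mul_I, ← Complex.ofReal_cos, ← Complex.ofReal_sin, hsin]
      push_cast
      ring
    have := (Complex.continuous_exp.tendsto _).comp hx
    rw [← hexp]
    push_cast
    exact this

/-- The boundary values of the Cayley image `(1 + Φ) / (1 - Φ)` of `Φ = exp ∘ cauchyTransform 𝟙_E`,
when `h` is the Hilbert transform of `𝟙_E`: they are `tanh (π h / 2)` on `E` and `coth (π h / 2)`
off `E`. -/
noncomputable def tanhBoundary (E : Set ℝ) (h : ℝ → ℝ) (x : ℝ) : ℝ :=
  open Classical in if x ∈ E then tanh (π * h x / 2) else (tanh (π * h x / 2))⁻¹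

lemma halfPlaneInner_cayley_exp_cauchyTransform_indicator (hE : MeasurableSet E)
    (hEfin : volume E ≠ ∞) (hE0 : volume E ≠ 0)
    (hh : ∀ᵐ x, Tendsto (truncatedHilbert (E.indicator 1) · x) (𝓝[>] 0) (𝓝 (h x))) :
    HalfPlaneInner (fun z ↦ (1 + Complex.exp (cauchyTransform (E.indicator 1) z)) /
      (1 - Complex.exp (cauchyTransform (E.indicator 1) z))) (tanhBoundary E h) := by
  have hcayley := (halfPlaneInner_exp_cauchyTransform_indicator hE hEfin hh).cayley
    fun z hz ↦ exp_cauchyTransform_indicator_ne_one hE hEfin hE0 hz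
  convert hcayley using 2 with x
  by_cases hx : x ∈ E
  · simp [tanhBoundary, hx, tanh_div_two, ← sub_eq_add_neg]
  · simp [tanhBoundary, hx, tanh_div_two]

lemma volume_tanhBoundary_preimage (hE : MeasurableSet E) (hEfin : volume E ≠ ∞)
    (hE0 : volume E ≠ 0)
    (hh : ∀ᵐ x, Tendsto (truncatedHilbert (E.indicator 1) · x) (𝓝[>] 0) (𝓝 (h x)))
    {A : Set ℝ} (hA : MeasurableSet A) :
    volume (tanhBoundary E h ⁻¹' A) = ENNReal.ofReal (volume.real E / 2) * volume A := by
  have hinner := halfPlaneInner_cayley_exp_cauchyTransform_indicator hE hEfin hE0 hh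
  have hpos : 0 < volume.real E := ENNReal.toReal_pos hE0 hEfin
  have hint : ∫ t, E.indicator (1 : ℝ → ℝ) t = volume.real E := integral_indicator_one hE
  have hinf := tendsto_cayley_exp_cauchyTransform_div (integrable_indicator_one hE hEfin)
    (hint ▸ hpos.ne')
  rw [hint] at hinf
  rw [← Measure.map_apply_of_aemeasurable hinner.aemeasurable hA,
    hinner.map_volume (div_pos two_pos hpos) hinf, inv_div, Measure.smul_apply, smul_eq_mul]

lemma lt_abs_iff_abs_tanhBoundary_mem_Ioo {c : ℝ} (hc : 0 < c) (x : ℝ) :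
    c < |h x| ↔ |tanhBoundary E h x| ∈ Ioo (tanh (π * c / 2)) (tanh (π * c / 2))⁻¹ := by
  have hpos : 0 < tanh (π * c / 2) := tanh_pos_iff.2 (by positivity)
  have hinv : 1 < (tanh (π * c / 2))⁻¹ := (one_lt_inv₀ hpos).2 (tanh_lt_one _)
  have habs : c < |h x| ↔ tanh (π * c / 2) < |tanh (π * h x / 2)| := by
    rw [abs_tanh, tanh_lt_tanh_iff, abs_div, abs_mul, abs_of_pos pi_pos, abs_two,
      div_lt_div_iff_of_pos_right two_pos, mul_lt_mul_iff_right₀ pi_pos]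
  have hlt : |tanh (π * h x / 2)| < 1 := abs_tanh_lt_one _
  rw [habs, mem_Ioo, tanhBoundary]
  split_ifs
  · exact (and_iff_left (hlt.trans hinv)).symm
  · rw [abs_inv]
    refine ⟨fun hx ↦ ⟨?_, ?_⟩, fun ⟨hx, hx'⟩ ↦ ?_⟩
    · exact (tanh_lt_one _).trans ((one_lt_inv₀ (hpos.trans hx)).2 hlt)
    · exact inv_strictAnti₀ hpos hx
    · exact (inv_lt_inv₀ (inv_pos.1 (hpos.trans hx)) hpos).1 hx'

lemma ae_eq_zero_of_tendsto_truncatedHilbert_indicator (hE0 : volume E = 0)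
    (hh : ∀ᵐ x, Tendsto (truncatedHilbert (E.indicator 1) · x) (𝓝[>] 0) (𝓝 (h x))) :
    ∀ᵐ x, h x = 0 := by
  have htrunc (ε x : ℝ) : truncatedHilbert (E.indicator 1) ε x = 0 := by
    have hE : ∀ᵐ t, E.indicator (1 : ℝ → ℝ) t = 0 := indicator_meas_zero hE0
    rw [truncatedHilbert, integral_eq_zero_of_ae, mul_zero]
    filter_upwards [ae_restrict_of_ae hE] with t ht
    rw [ht, zero_div, Pi.zero_apply]
  filter_upwards [hh] with x hx
  simp only [htrunc] at hx
  exact tendsto_nhds_unique hx tendsto_const_nhds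

end Indicator

/-- Stein–Weiss identity: If `E ⊂ ℝ` is measurable with finite
Lebesgue measure and `h` is (a.e.) the Hilbert transform of `𝟙_E`, i.e. for
a.e. `x` the truncated transforms `(1/π) ∫_{|t-x|>ε} 𝟙_E(t)/(x-t) dt` tend to
`h x` as `ε → 0⁺`, then for every `λ > 0`,
`|{x : |h x| > λ}| = 4 e^{πλ} |E| / (e^{2πλ} - 1)`. -/
theorem stmt7 (E : Set ℝ) (hE : MeasurableSet E) (hEfin : volume E < ⊤)
    (h : ℝ → ℝ)
    (hh : ∀ᵐ x : ℝ, Tendsto (fun ε : ℝ =>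
        (1 / π) * ∫ t in {t : ℝ | ε < |t - x|}, E.indicator 1 t / (x - t))
      (nhdsWithin 0 (Ioi 0)) (nhds (h x)))
    (lam : ℝ) (hlam : 0 < lam) :
    volume {x : ℝ | lam < |h x|}
      = ENNReal.ofReal
          (4 * Real.exp (π * lam) * (volume E).toReal
            / (Real.exp (2 * π * lam) - 1)) := by
  rcases eq_or_ne (volume E) 0 with hE0 | hE0
  · have hnull : ∀ᵐ x, ¬ lam < |h x| := by
      filter_upwards [ae_eq_zero_of_tendsto_truncatedHilbert_indicator hE0 hh] with x hx
      simpa [hx] using hlam.le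
    rw [hE0, ENNReal.toReal_zero, mul_zero, zero_div, ENNReal.ofReal_zero]
    simpa [ae_iff] using hnull
  have hset : {x | lam < |h x|} = tanhBoundary E h ⁻¹'
      (abs ⁻¹' Ioo (tanh (π * lam / 2)) (tanh (π * lam / 2))⁻¹) :=
    ext (lt_abs_iff_abs_tanhBoundary_mem_Ioo hlam)
  rw [hset, volume_tanhBoundary_preimage hE hEfin.ne hE0 hh
      (continuous_abs.measurable measurableSet_Ioo),
    volume_abs_preimage_Ioo (tanh_pos_iff.2 (by positivity)).le,
    inv_tanh_sub_tanh (by positivity), ← ENNReal.ofReal_mul (by positivity), measureReal_def]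
  ring_nf
end

section
/- For every set e ⊂ ℝ of Lebesgue measure zero, there exists a measurable set E ⊂ ℝ of finite Lebesgue measure such that the maximal Hilbert transform H*𝟙_E(x) = sup_{ε>0} |H_ε 𝟙_E(x)| is infinite for every x ∈ e. -/
open MeasureTheory Filter Set Real

open scoped Topology Polynomial ENNReal symmDiff

/-!
For positive masses `c t` on a finite set `T` put `F z = 1 + ∑ t ∈ T, c t / (t - z)`. By partial
fractions `F z = ∏ t ∈ T, (z - a t) / (z - t)`, where the zeros `a t` interlace with the poles `t`,
so `{F < 0}` is, up to a null set, the disjoint union of the intervals `(t, a t]`. Comparing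
coefficients gives Boole's identity `|{F < 0}| = ∑ c t`, and taking logarithms shows that
`log ‖F z‖` is the integral over `{F < 0}` of `Re (u - z)⁻¹`, the conjugate Poisson kernel.

Cover the null set `e` by short intervals and place on their centres masses that are summable but
arbitrarily large compared with the lengths. At suitable points `x + i r` above `x ∈ e` the
Poisson integral `Im F` of the masses, and with it `log ‖F‖`, is then as large as we please. Boole's
identity also shows that the sets `{F < 0}` of the finite partial sums converge in measure; the
limit is `E`. Truncating `1 / (x - u)` at distance `r` changes minus the conjugate Poisson kernel by
at most the Poisson kernel, whose integral is `π`.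
-/

section PartialFractions

variable {K L : Type*} [Field K] [Field L] [Algebra K L] {T : Finset K} {c a : K → K}

/-- The Cauchy (or Stieltjes) transform `z ↦ ∑ t ∈ T, c t / (t - z)` of the discrete measure with
mass `c t` at each `t ∈ T`. The point `z` may lie in an extension field, so that real masses can be
evaluated both on the line and in the upper half-plane. -/
noncomputable def cauchySum (T : Finset K) (c : K → K) (z : L) : L :=
  ∑ t ∈ T, algebraMap K L (c t) / (algebraMap K L t - z)

theorem cauchySum_filter_ne_zero (T : Finset K) (c : K → K) [DecidablePred (c · ≠ 0)] (z : L) :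
    cauchySum (T.filter (c · ≠ 0)) c z = cauchySum T c z :=
  Finset.sum_filter_of_ne fun t _ ht hct => ht (by rw [hct, map_zero, zero_div])

theorem cauchySum_div_const (T : Finset K) (c : K → K) (l : K) (z : L) :
    cauchySum T (fun t => c t / l) z = cauchySum T c z / algebraMap K L l := by
  simp only [cauchySum, Finset.sum_div, map_div₀]
  exact Finset.sum_congr rfl fun t _ => div_right_comm _ _ _

open Polynomial Lagrange

theorem aeval_nodal (T : Finset K) (a : K → K) (z : L) :
    aeval z (nodal T a) = ∏ t ∈ T, (z - algebraMap K L (a t)) := by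
  simp [nodal_eq]

variable [DecidableEq K]

/-- The polynomial `(1 + cauchySum T c) * ∏ t ∈ T, (X - t)`, whose roots are the zeros of
`1 + cauchySum T c` when no mass vanishes. -/
noncomputable def cauchyNumerator (T : Finset K) (c : K → K) : K[X] :=
  nodal T id - ∑ t ∈ T, C (c t) * nodal (T.erase t) id

theorem aeval_cauchyNumerator {z : L} (hz : ∀ t ∈ T, algebraMap K L t ≠ z) :
    aeval z (cauchyNumerator T c) = aeval z (nodal T id) * (1 + cauchySum T c z) := by
  have hterm : ∀ t ∈ T, aeval z (nodal T id) * (algebraMap K L (c t) / (algebraMap K L t - z)) =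
      -aeval z (C (c t) * nodal (T.erase t) id) := by
    intro t ht
    have : algebraMap K L t - z ≠ 0 := sub_ne_zero.2 (hz t ht)
    rw [nodal_eq_mul_nodal_erase ht]
    simp only [map_mul, map_sub, aeval_X, aeval_C, id_eq]
    field_simp
    ring
  rw [cauchySum, mul_add, mul_one, Finset.mul_sum, Finset.sum_congr rfl hterm,
    Finset.sum_neg_distrib, ← sub_eq_add_neg, ← map_sum, ← map_sub, cauchyNumerator]

theorem degree_nodal_sub_cauchyNumerator_lt (T : Finset K) (c : K → K) :
    (nodal T id - cauchyNumerator T c).degree < T.card := by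
  rw [cauchyNumerator, sub_sub_cancel]
  refine (degree_sum_le _ _).trans_lt ((Finset.sup_lt_iff (WithBot.bot_lt_coe _)).2 fun t ht => ?_)
  calc (C (c t) * nodal (T.erase t) id).degree
      ≤ (nodal (T.erase t) id).degree := by
        simpa only [smul_eq_C_mul] using degree_smul_le (c t) (nodal (T.erase t) id)
    _ = ((T.erase t).card : WithBot ℕ) := degree_nodal
    _ < T.card := by exact_mod_cast Finset.card_erase_lt_of_mem ht

theorem cauchyNumerator_eq_nodal (ha : Set.InjOn a T) (haT : ∀ t ∈ T, a t ∉ T)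
    (hzero : ∀ t ∈ T, 1 + cauchySum T c (a t) = 0) : cauchyNumerator T c = nodal T a := by
  refine eq_of_degree_sub_lt_of_eval_index_eq T ha ?_ fun t ht => ?_
  · have hnodal : (nodal T id - nodal T a).degree < T.card := by
      rw [← degree_nodal (s := T) (v := (id : K → K))]
      exact degree_sub_lt_left (by rw [degree_nodal, degree_nodal]) nodal_ne_zero
        (nodal_monic.trans nodal_monic.symm)
    rw [← sub_sub_sub_cancel_left (nodal T a) (cauchyNumerator T c) (nodal T id)]
    exact (degree_sub_le _ _).trans_lt
      (max_lt hnodal (degree_nodal_sub_cauchyNumerator_lt T c))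
  · have hne : ∀ s ∈ T, algebraMap K K s ≠ a t := fun s hs hst => haT t ht (hst ▸ hs)
    rw [eval_nodal_at_node ht, ← coe_aeval_eq_eval, aeval_cauchyNumerator hne, hzero t ht, mul_zero]

theorem one_add_cauchySum_eq_prod (h : cauchyNumerator T c = nodal T a) {z : L}
    (hz : ∀ t ∈ T, algebraMap K L t ≠ z) :
    1 + cauchySum T c z = ∏ t ∈ T, (z - algebraMap K L (a t)) / (z - algebraMap K L t) := by
  have hne : ∏ t ∈ T, (z - algebraMap K L t) ≠ 0 :=
    Finset.prod_ne_zero_iff.2 fun t ht => sub_ne_zero.2 (hz t ht).symm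
  have heval := aeval_cauchyNumerator (c := c) hz
  rw [h, aeval_nodal, aeval_nodal] at heval
  rw [Finset.prod_div_distrib, heval]
  exact (mul_div_cancel_left₀ _ hne).symm

theorem sum_zeros_sub_poles (h : cauchyNumerator T c = nodal T a) :
    ∑ t ∈ T, (a t - t) = ∑ t ∈ T, c t := by
  rcases T.eq_empty_or_nonempty with rfl | hT
  · simp
  have hcoeff : ∀ t ∈ T, c t * (nodal (T.erase t) id).coeff (T.card - 1) = c t := by
    intro t ht
    rw [← Finset.card_erase_of_mem ht, ← natDegree_nodal (s := T.erase t) (v := (id : K → K)),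
      nodal_monic.coeff_natDegree, mul_one]
  have key := congrArg (fun p : K[X] => p.coeff (T.card - 1)) h
  simp only [cauchyNumerator, coeff_sub, finsetSum_coeff, coeff_C_mul] at key
  rw [Finset.sum_congr rfl hcoeff, nodal_eq, nodal_eq,
    prod_X_sub_C_coeff_card_pred _ _ hT.card_pos,
    prod_X_sub_C_coeff_card_pred _ _ hT.card_pos] at key
  simp only [id_eq] at key
  rw [Finset.sum_sub_distrib]
  linear_combination key

end PartialFractions

section Interlacing

variable {T : Finset ℝ} {c a : ℝ → ℝ} {t x : ℝ}

theorem continuousAt_cauchySum (hx : x ∉ T) : ContinuousAt (cauchySum T c : ℝ → ℝ) x :=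
  tendsto_finsetSum _ fun t ht => ContinuousAt.div continuousAt_const (by fun_prop)
    (sub_ne_zero.2 fun htx => hx (by rwa [← htx]))

theorem tendsto_cauchySum_atTop (T : Finset ℝ) (c : ℝ → ℝ) :
    Tendsto (cauchySum T c : ℝ → ℝ) atTop (𝓝 0) := by
  rw [← Finset.sum_const_zero (s := T)]
  exact tendsto_finsetSum _ fun t _ =>
    (tendsto_atBot_add_const_left _ t tendsto_neg_atTop_atBot).const_div_atBot _

theorem cauchySum_eq_erase_add (ht : t ∈ T) (x : ℝ) :
    cauchySum T c x = cauchySum (T.erase t) c x + c t / (t - x) :=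
  (Finset.sum_erase_add T _ ht).symm

theorem tendsto_cauchySum_erase (T : Finset ℝ) (c : ℝ → ℝ) (t : ℝ) :
    Tendsto (cauchySum (T.erase t) c : ℝ → ℝ) (𝓝 t) (𝓝 (cauchySum (T.erase t) c t)) :=
  continuousAt_cauchySum (Finset.notMem_erase t T)

theorem tendsto_cauchySum_nhdsLT (ht : t ∈ T) (hc : 0 < c t) :
    Tendsto (cauchySum T c : ℝ → ℝ) (𝓝[<] t) atTop := by
  have hcont : ContinuousWithinAt (fun x => t - x) (Iio t) t := by fun_prop
  have hsub := hcont.tendsto_nhdsWithin (t := Ioi 0) fun x hx => sub_pos.2 hx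
  rw [sub_self] at hsub
  simp only [funext (cauchySum_eq_erase_add (c := c) ht), div_eq_mul_inv]
  exact ((tendsto_cauchySum_erase T c t).mono_left nhdsWithin_le_nhds).add_atTop
    ((tendsto_inv_nhdsGT_zero.comp hsub).const_mul_atTop hc)

theorem tendsto_cauchySum_nhdsGT (ht : t ∈ T) (hc : 0 < c t) :
    Tendsto (cauchySum T c : ℝ → ℝ) (𝓝[>] t) atBot := by
  have hcont : ContinuousWithinAt (fun x => t - x) (Ioi t) t := by fun_prop
  have hsub := hcont.tendsto_nhdsWithin (t := Iio 0) fun x hx => sub_neg.2 hx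
  rw [sub_self] at hsub
  simp only [funext (cauchySum_eq_erase_add (c := c) ht), div_eq_mul_inv]
  exact ((tendsto_cauchySum_erase T c t).mono_left nhdsWithin_le_nhds).add_atBot
    ((tendsto_inv_nhdsLT_zero.comp hsub).const_mul_atBot hc)

/-- `a t` is a zero of `1 + cauchySum T c` lying to the right of the pole `t` and to the left of
the next pole. -/
structure InterlacingZeros (T : Finset ℝ) (c a : ℝ → ℝ) : Prop where
  pole_lt : ∀ t ∈ T, t < a t
  lt_pole : ∀ s ∈ T, ∀ t ∈ T, s < t → a s < t
  eq_zero : ∀ t ∈ T, 1 + cauchySum T c (a t) = 0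

theorem exists_zero_right_of_pole (hc : ∀ t ∈ T, 0 < c t) (ht : t ∈ T) :
    ∃ b, t < b ∧ (∀ s ∈ T, t < s → b < s) ∧ 1 + cauchySum T c b = 0 := by
  have hbot := tendsto_cauchySum_nhdsGT ht (hc t ht)
  rcases (T.filter (t < ·)).eq_empty_or_nonempty with hempty | hne
  · have hlast : ∀ s ∈ T, ¬t < s := Finset.filter_eq_empty_iff.1 hempty
    have hcont : ContinuousOn (cauchySum T c : ℝ → ℝ) (Ioi t) := fun x hx =>
      (continuousAt_cauchySum fun hxT => hlast x hxT hx).continuousWithinAt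
    obtain ⟨b, htb, hb⟩ := isPreconnected_Ioi.intermediate_value_Iio
      (l₁ := 𝓝[>] t) inf_le_right
      (le_principal_iff.2 (Ioi_mem_atTop t)) hcont hbot (tendsto_cauchySum_atTop T c)
      (mem_Iio.2 neg_one_lt_zero)
    exact ⟨b, htb, fun s hs hts => absurd hts (hlast s hs), by rw [hb, add_neg_cancel]⟩
  · obtain ⟨s, hs, hmin⟩ := Finset.exists_min_image _ id hne
    obtain ⟨hsT, hts⟩ := Finset.mem_filter.1 hs
    have hnext : ∀ r ∈ T, t < r → s ≤ r := fun r hr htr =>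
      hmin r (Finset.mem_filter.2 ⟨hr, htr⟩)
    have hcont : ContinuousOn (cauchySum T c : ℝ → ℝ) (Ioo t s) := fun x hx =>
      (continuousAt_cauchySum fun hxT => (hnext x hxT hx.1).not_gt hx.2).continuousWithinAt
    obtain ⟨b, hb, hbz⟩ := isPreconnected_Ioo.intermediate_value_Iii
      (le_principal_iff.2 (Ioo_mem_nhdsGT hts)) (le_principal_iff.2 (Ioo_mem_nhdsLT hts)) hcont
      hbot (tendsto_cauchySum_nhdsLT hsT (hc s hsT)) (mem_univ (-1 : ℝ))
    exact ⟨b, hb.1, fun r hr htr => hb.2.trans_le (hnext r hr htr), by rw [hbz, add_neg_cancel]⟩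

theorem exists_interlacingZeros (hc : ∀ t ∈ T, 0 < c t) : ∃ a, InterlacingZeros T c a := by
  choose! a hlt hnext hzero using fun t (ht : t ∈ T) => exists_zero_right_of_pole hc ht
  exact ⟨a, hlt, fun s hs t ht hst => hnext s hs t ht hst, hzero⟩

namespace InterlacingZeros

theorem strictMonoOn (h : InterlacingZeros T c a) : StrictMonoOn a T := fun s hs t ht hst =>
  (h.lt_pole s hs t ht hst).trans (h.pole_lt t ht)

theorem notMem (h : InterlacingZeros T c a) (ht : t ∈ T) : a t ∉ T := fun hat =>
  (h.lt_pole t ht (a t) hat (h.pole_lt t ht)).false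

theorem cauchyNumerator_eq_nodal (h : InterlacingZeros T c a) :
    cauchyNumerator T c = Lagrange.nodal T a :=
  _root_.cauchyNumerator_eq_nodal h.strictMonoOn.injOn (fun _ ht => h.notMem ht) h.eq_zero

theorem pairwiseDisjoint_Ioc (h : InterlacingZeros T c a) :
    (T : Set ℝ).PairwiseDisjoint fun t => Ioc t (a t) := by
  intro s hs t ht hst
  refine Set.disjoint_left.2 fun x hxs hxt => ?_
  rcases hst.lt_or_gt with hlt | hlt
  · exact (hxs.2.trans_lt (h.lt_pole s hs t ht hlt)).not_gt hxt.1
  · exact (hxt.2.trans_lt (h.lt_pole t ht s hs hlt)).not_gt hxs.1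

theorem cauchySum_lt_neg_one_iff (h : InterlacingZeros T c a) (hxT : x ∉ T)
    (hxa : ∀ t ∈ T, x ≠ a t) :
    cauchySum T c x < -1 ↔ x ∈ ⋃ t ∈ T, Ioc t (a t) := by
  have hne : ∀ t ∈ T, t ≠ x := fun t ht htx => hxT (htx ▸ ht)
  have hprod : 1 + cauchySum T c x = ∏ t ∈ T, (x - a t) / (x - t) :=
    one_add_cauchySum_eq_prod h.cauchyNumerator_eq_nodal hne
  rw [lt_neg_iff_add_neg', hprod, mem_iUnion₂]
  constructor
  · contrapose!
    intro hout
    refine Finset.prod_nonneg fun t ht => ?_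
    rcases (hne t ht).lt_or_gt with htx | hxt
    · have : a t < x := not_le.1 fun hxat => hout t ht ⟨htx, hxat⟩
      exact div_nonneg (sub_nonneg.2 this.le) (sub_nonneg.2 htx.le)
    · have : x < a t := hxt.trans (h.pole_lt t ht)
      exact div_nonneg_of_nonpos (sub_nonpos.2 this.le) (sub_nonpos.2 hxt.le)
  · rintro ⟨t, ht, htx, hxat⟩
    have hpos : 0 < ∏ s ∈ T.erase t, (x - a s) / (x - s) := by
      refine Finset.prod_pos fun s hs => ?_
      obtain ⟨hst, hsT⟩ := Finset.mem_erase.1 hs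
      rcases hst.lt_or_gt with hlt | hgt
      · have : a s < x := (h.lt_pole s hsT t ht hlt).trans htx
        exact div_pos (sub_pos.2 this) (sub_pos.2 (hlt.trans htx))
      · have : x < s := hxat.trans_lt (h.lt_pole t ht s hsT hgt)
        exact div_pos_of_neg_of_neg (sub_neg.2 (this.trans (h.pole_lt s hsT))) (sub_neg.2 this)
    rw [← Finset.mul_prod_erase T _ ht]
    exact mul_neg_of_neg_of_pos
      (div_neg_of_neg_of_pos (sub_neg.2 (hxat.lt_of_ne (hxa t ht))) (sub_pos.2 htx)) hpos

theorem ae_eq_iUnion_Ioc (h : InterlacingZeros T c a) :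
    {x : ℝ | cauchySum T c x < -1} =ᵐ[volume] (⋃ t ∈ T, Ioc t (a t) : Set ℝ) := by
  have hfin : (↑(T ∪ T.image a) : Set ℝ).Finite := Finset.finite_toSet _
  filter_upwards [hfin.measure_zero volume |> measure_eq_zero_iff_ae_notMem.1] with x hx
  simp only [Finset.coe_union, Finset.coe_image, mem_union, not_or] at hx
  exact propext <| h.cauchySum_lt_neg_one_iff hx.1 fun t ht hxt => hx.2 ⟨t, ht, hxt.symm⟩

end InterlacingZeros

end Interlacing

section Boole

variable {T : Finset ℝ} {c : ℝ → ℝ} {l : ℝ}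

/-- The level set `{x | ∑ t ∈ T, c t / (t - x) < -l}` of Boole's identity `volume_booleSet`. At a
point of `T` the corresponding term is the junk value `0`, which only affects a null set. -/
def booleSet (c : ℝ → ℝ) (l : ℝ) (T : Finset ℝ) : Set ℝ :=
  {x | cauchySum T c x < -l}

theorem measurableSet_booleSet (c : ℝ → ℝ) (l : ℝ) (T : Finset ℝ) :
    MeasurableSet (booleSet c l T) :=
  measurableSet_lt (Finset.measurable_fun_sum _ fun _ _ => by fun_prop) measurable_const

theorem booleSet_filter_ne_zero (c : ℝ → ℝ) (l : ℝ) (T : Finset ℝ) :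
    booleSet c l (T.filter (c · ≠ 0)) = booleSet c l T := by
  simp only [booleSet, cauchySum_filter_ne_zero]

theorem booleSet_div_const (hl : 0 < l) (T : Finset ℝ) :
    booleSet (fun t => c t / l) 1 T = booleSet c l T := by
  ext x
  rw [booleSet, booleSet, mem_ofPred_eq, mem_ofPred_eq, cauchySum_div_const,
    Algebra.algebraMap_self, RingHom.id_apply, div_lt_iff₀ hl, neg_one_mul]

theorem exists_interlacingZeros_filter_ne_zero (hc : ∀ t ∈ T, 0 ≤ c t) :
    ∃ a, InterlacingZeros (T.filter (c · ≠ 0)) c a :=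
  exists_interlacingZeros fun t ht =>
    let ⟨htT, hct⟩ := Finset.mem_filter.1 ht
    (hc t htT).lt_of_ne' hct

theorem InterlacingZeros.volume_booleSet_one {a : ℝ → ℝ} (h : InterlacingZeros T c a) :
    volume (booleSet c 1 T) = ENNReal.ofReal (∑ t ∈ T, c t) := by
  calc volume (booleSet c 1 T) = volume (⋃ t ∈ T, Ioc t (a t)) := measure_congr h.ae_eq_iUnion_Ioc
    _ = ∑ t ∈ T, ENNReal.ofReal (a t - t) := by
      simp only [measure_biUnion_finset h.pairwiseDisjoint_Ioc fun _ _ => measurableSet_Ioc,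
        Real.volume_Ioc]
    _ = ENNReal.ofReal (∑ t ∈ T, c t) := by
      rw [← ENNReal.ofReal_sum_of_nonneg fun t ht => sub_nonneg.2 (h.pole_lt t ht).le,
        sum_zeros_sub_poles h.cauchyNumerator_eq_nodal]

theorem volume_booleSet_one (hc : ∀ t ∈ T, 0 ≤ c t) :
    volume (booleSet c 1 T) = ENNReal.ofReal (∑ t ∈ T, c t) := by
  obtain ⟨a, ha⟩ := exists_interlacingZeros_filter_ne_zero hc
  rw [← booleSet_filter_ne_zero, ha.volume_booleSet_one, Finset.sum_filter_ne_zero]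

theorem volume_booleSet (hc : ∀ t ∈ T, 0 ≤ c t) (hl : 0 < l) :
    volume (booleSet c l T) = ENNReal.ofReal ((∑ t ∈ T, c t) / l) := by
  rw [← booleSet_div_const hl, volume_booleSet_one fun t ht => div_nonneg (hc t ht) hl.le,
    Finset.sum_div]

end Boole

section ComplexKernel

variable {z : ℂ}

theorem ofReal_ne_of_im_ne_zero (hz : z.im ≠ 0) (u : ℝ) : (u : ℂ) ≠ z := fun h =>
  hz (by rw [← h, Complex.ofReal_im])

theorem im_ofReal_sub_inv (z : ℂ) (u : ℝ) :
    (((u : ℂ) - z)⁻¹).im = z.im / ((u - z.re) ^ 2 + z.im ^ 2) := by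
  simp [Complex.inv_im, Complex.normSq_apply, pow_two]

theorem im_ofReal_sub_inv_nonneg (hz : 0 ≤ z.im) (u : ℝ) : 0 ≤ (((u : ℂ) - z)⁻¹).im := by
  rw [im_ofReal_sub_inv]
  positivity

theorem inv_two_mul_im_le_im (hz : 0 < z.im) {u : ℝ} (hu : |u - z.re| ≤ z.im) :
    (2 * z.im)⁻¹ ≤ (((u : ℂ) - z)⁻¹).im := by
  have hsq : (u - z.re) ^ 2 ≤ z.im ^ 2 := sq_le_sq.2 (hu.trans (le_abs_self _))
  rw [im_ofReal_sub_inv, inv_eq_one_div, div_le_div_iff₀ (by positivity) (by positivity)]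
  linarith

theorem norm_re_ofReal_sub_inv_le (hz : 0 < z.im) (u : ℝ) :
    ‖(((u : ℂ) - z)⁻¹).re‖ ≤ z.im⁻¹ := by
  have him : z.im ≤ ‖(u : ℂ) - z‖ := by
    simpa [abs_of_pos hz] using Complex.abs_im_le_norm ((u : ℂ) - z)
  calc ‖(((u : ℂ) - z)⁻¹).re‖ ≤ ‖((u : ℂ) - z)⁻¹‖ := Complex.abs_re_le_norm _
    _ ≤ z.im⁻¹ := by
      rw [norm_inv]
      gcongr

theorem continuous_re_ofReal_sub_inv (hz : z.im ≠ 0) :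
    Continuous fun u : ℝ => (((u : ℂ) - z)⁻¹).re :=
  Complex.continuous_re.comp <|
    Continuous.inv₀ (by fun_prop) fun u => sub_ne_zero.2 (ofReal_ne_of_im_ne_zero hz u)

theorem hasDerivAt_log_norm_ofReal_sub (hz : z.im ≠ 0) (u : ℝ) :
    HasDerivAt (fun u : ℝ => Real.log ‖(u : ℂ) - z‖) (((u : ℂ) - z)⁻¹).re u := by
  have hslit : (u : ℂ) - z ∈ Complex.slitPlane := Complex.mem_slitPlane_iff.2 <| Or.inr <| by
    rwa [Complex.sub_im, Complex.ofReal_im, zero_sub, neg_ne_zero]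
  have hlog := ((Complex.ofRealCLM.hasDerivAt (x := u)).sub_const z).clog_real hslit
  simpa [Complex.log_re, Function.comp_def] using
    Complex.reCLM.hasFDerivAt.comp_hasDerivAt u hlog

theorem setIntegral_Ioc_re_ofReal_sub_inv (hz : z.im ≠ 0) {a b : ℝ} (hab : a ≤ b) :
    ∫ u in Ioc a b, (((u : ℂ) - z)⁻¹).re = Real.log (‖z - b‖ / ‖z - a‖) := by
  have hne (u : ℝ) : ‖(u : ℂ) - z‖ ≠ 0 :=
    norm_ne_zero_iff.2 (sub_ne_zero.2 (ofReal_ne_of_im_ne_zero hz u))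
  rw [← intervalIntegral.integral_of_le hab, intervalIntegral.integral_eq_sub_of_hasDerivAt
    (fun u _ => hasDerivAt_log_norm_ofReal_sub hz u)
    ((continuous_re_ofReal_sub_inv hz).intervalIntegrable a b), ← Real.log_div (hne b) (hne a),
    norm_sub_rev z, norm_sub_rev z]

end ComplexKernel

section LogIdentity

variable {T : Finset ℝ} {c : ℝ → ℝ} {z : ℂ}

theorem InterlacingZeros.setIntegral_booleSet {a : ℝ → ℝ} (h : InterlacingZeros T c a)
    (hz : z.im ≠ 0) :
    ∫ u in booleSet c 1 T, (((u : ℂ) - z)⁻¹).re = Real.log ‖1 + cauchySum T c z‖ := by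
  have hne (u : ℝ) : z - u ≠ 0 := sub_ne_zero.2 (ofReal_ne_of_im_ne_zero hz u).symm
  calc ∫ u in booleSet c 1 T, (((u : ℂ) - z)⁻¹).re
      = ∫ u in ⋃ t ∈ T, Ioc t (a t), (((u : ℂ) - z)⁻¹).re :=
        setIntegral_congr_set h.ae_eq_iUnion_Ioc
    _ = ∑ t ∈ T, ∫ u in Ioc t (a t), (((u : ℂ) - z)⁻¹).re :=
        integral_biUnion_finset T (fun _ _ => measurableSet_Ioc) h.pairwiseDisjoint_Ioc
          fun _ _ => (continuous_re_ofReal_sub_inv hz).integrableOn_Ioc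
    _ = ∑ t ∈ T, Real.log (‖z - a t‖ / ‖z - t‖) :=
        Finset.sum_congr rfl fun t ht => setIntegral_Ioc_re_ofReal_sub_inv hz (h.pole_lt t ht).le
    _ = Real.log ‖∏ t ∈ T, (z - a t) / (z - t)‖ := by
        simp only [norm_prod, norm_div]
        exact (Real.log_prod fun t _ =>
          div_ne_zero (norm_ne_zero_iff.2 (hne _)) (norm_ne_zero_iff.2 (hne _))).symm
    _ = Real.log ‖1 + cauchySum T c z‖ := by
        rw [one_add_cauchySum_eq_prod h.cauchyNumerator_eq_nodal fun t _ =>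
          ofReal_ne_of_im_ne_zero hz t]
        rfl

theorem setIntegral_booleSet (hc : ∀ t ∈ T, 0 ≤ c t) (hz : z.im ≠ 0) :
    ∫ u in booleSet c 1 T, (((u : ℂ) - z)⁻¹).re = Real.log ‖1 + cauchySum T c z‖ := by
  obtain ⟨a, ha⟩ := exists_interlacingZeros_filter_ne_zero hc
  rw [← booleSet_filter_ne_zero, ha.setIntegral_booleSet hz, cauchySum_filter_ne_zero]

theorem im_cauchySum (T : Finset ℝ) (c : ℝ → ℝ) (z : ℂ) :
    (cauchySum T c z).im = ∑ t ∈ T, c t * (((t : ℂ) - z)⁻¹).im := by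
  simp only [cauchySum, Complex.im_sum, div_eq_mul_inv, Complex.coe_algebraMap,
    Complex.im_ofReal_mul]

theorem mul_im_le_norm_one_add_cauchySum (hc : ∀ t ∈ T, 0 ≤ c t) (hz : 0 ≤ z.im) {t : ℝ}
    (ht : t ∈ T) :
    c t * (((t : ℂ) - z)⁻¹).im ≤ ‖1 + cauchySum T c z‖ :=
  calc c t * (((t : ℂ) - z)⁻¹).im ≤ (cauchySum T c z).im := by
        rw [im_cauchySum]
        exact Finset.single_le_sum (f := fun t => c t * (((t : ℂ) - z)⁻¹).im)
          (fun s hs => mul_nonneg (hc s hs) (im_ofReal_sub_inv_nonneg hz s)) ht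
    _ = (1 + cauchySum T c z).im := by rw [Complex.add_im, Complex.one_im, zero_add]
    _ ≤ ‖1 + cauchySum T c z‖ := Complex.im_le_norm _

theorem le_setIntegral_booleSet (hc : ∀ t ∈ T, 0 ≤ c t) (hz : 0 < z.im) {t : ℝ} (ht : t ∈ T)
    (htz : |t - z.re| ≤ z.im) {M : ℝ} (hM : 2 * Real.exp M * z.im ≤ c t) :
    M ≤ ∫ u in booleSet c 1 T, (((u : ℂ) - z)⁻¹).re := by
  have hexp : Real.exp M ≤ ‖1 + cauchySum T c z‖ :=
    calc Real.exp M = 2 * Real.exp M * z.im * (2 * z.im)⁻¹ := by field_simp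
      _ ≤ c t * (((t : ℂ) - z)⁻¹).im := by
        have := inv_two_mul_im_le_im hz htz
        gcongr
        exact hc t ht
      _ ≤ ‖1 + cauchySum T c z‖ := mul_im_le_norm_one_add_cauchySum hc hz.le ht
  rw [setIntegral_booleSet hc hz.ne']
  exact (Real.le_log_iff_exp_le ((Real.exp_pos M).trans_le hexp)).2 hexp

end LogIdentity

section MeasuredSets

variable {α : Type*}

theorem symmDiff_limsup_subset (A : ℕ → Set α) (k : ℕ) :
    A k ∆ limsup A atTop ⊆ ⋃ j, A (j + k) ∆ A (j + k + 1) := by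
  intro x
  contrapose!
  intro hx
  have hstep : ∀ j, x ∈ A (j + k) ↔ x ∈ A k := by
    intro j
    induction j with
    | zero => rw [zero_add]
    | succ j ih =>
      have hj : x ∉ A (j + k) ∆ A (j + k + 1) := fun h => hx (mem_iUnion.2 ⟨j, h⟩)
      rw [mem_symmDiff] at hj
      rw [← ih, add_right_comm]
      tauto
  have hconst : ∀ᶠ n in atTop, x ∈ A n ↔ x ∈ A k := by
    filter_upwards [eventually_ge_atTop k] with n hn
    rw [← hstep (n - k), Nat.sub_add_cancel hn]
  have hlim : x ∈ limsup A atTop ↔ x ∈ A k := by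
    rw [mem_limsup_iff_frequently_mem, frequently_congr hconst, frequently_const]
  rw [mem_symmDiff, hlim]
  tauto

variable [MeasurableSpace α] {μ : Measure α}

theorem completeSpace_measuredSets : CompleteSpace (MeasuredSets μ) := by
  refine EMetric.complete_of_convergent_controlled_sequences
    (fun k => ENNReal.ofReal ((1 / 2) ^ k)) (fun k => by positivity) fun A hA => ?_
  have hsum : ∑' k : ℕ, ENNReal.ofReal ((1 / 2) ^ k) ≠ ∞ := by
    rw [← ENNReal.ofReal_tsum_of_nonneg (fun _ => by positivity) summable_geometric_two]
    exact ENNReal.ofReal_ne_top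
  let E : MeasuredSets μ := ⟨limsup (fun k => (A k : Set α)) atTop,
    MeasurableSet.measurableSet_limsup fun k => (A k).2⟩
  refine ⟨E, tendsto_iff_edist_tendsto_0.2 ?_⟩
  refine tendsto_of_tendsto_of_tendsto_of_le_of_le tendsto_const_nhds
    (ENNReal.tendsto_sum_nat_add _ hsum) (fun _ => zero_le) fun k => ?_
  calc edist (A k) E
      ≤ μ (⋃ j, (A (j + k) : Set α) ∆ A (j + k + 1)) :=
        measure_mono (symmDiff_limsup_subset (fun k => (A k : Set α)) k)
    _ ≤ ∑' j, edist (A (j + k)) (A (j + k + 1)) := measure_iUnion_le _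
    _ ≤ ∑' j, ENNReal.ofReal ((1 / 2) ^ (j + k)) :=
        ENNReal.tsum_le_tsum fun j => (hA _ _ _ le_rfl (Nat.le_succ _)).le

theorem measure_sdiff_le_measure_sdiff {s t : Set α} (hs : MeasurableSet s)
    (ht : MeasurableSet t) (hs' : μ s ≠ ∞) (h : μ s ≤ μ t) : μ (s \ t) ≤ μ (t \ s) := by
  rw [← measure_inter_add_sdiff s ht, ← measure_inter_add_sdiff t hs, inter_comm t s] at h
  exact (ENNReal.add_le_add_iff_left (measure_ne_top_of_subset inter_subset_left hs')).1 h

variable {F : Type*} [NormedAddCommGroup F] [NormedSpace ℝ F] {f : α → F} {M : ℝ}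

theorem norm_setIntegral_sub_setIntegral_le {s t : Set α} (hs : MeasurableSet s)
    (ht : MeasurableSet t) (hs' : μ s ≠ ∞) (ht' : μ t ≠ ∞) (hf : AEStronglyMeasurable f μ)
    (hM : ∀ x, ‖f x‖ ≤ M) :
    ‖∫ x in s, f x ∂μ - ∫ x in t, f x ∂μ‖ ≤ M * μ.real (s ∆ t) := by
  have integrable {r : Set α} (hr : μ r ≠ ∞) : IntegrableOn f r μ :=
    Measure.integrableOn_of_bounded hr hf (Eventually.of_forall hM)
  rw [← integral_inter_add_sdiff ht (integrable hs'),
    ← integral_inter_add_sdiff hs (integrable ht'), inter_comm t s,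
    add_sub_add_left_eq_sub, measureReal_symmDiff_eq hs ht hs' ht', mul_add]
  refine (norm_sub_le _ _).trans (add_le_add ?_ ?_)
  · exact norm_setIntegral_le_of_norm_le_const
      (measure_ne_top_of_subset sdiff_subset hs').lt_top fun x _ => hM x
  · exact norm_setIntegral_le_of_norm_le_const
      (measure_ne_top_of_subset sdiff_subset ht').lt_top fun x _ => hM x

theorem continuousAt_setIntegral_measuredSets (hf : AEStronglyMeasurable f μ)
    (hM : ∀ x, ‖f x‖ ≤ M) {E : MeasuredSets μ} (hE : μ E ≠ ∞) :
    ContinuousAt (fun A : MeasuredSets μ => ∫ x in A, f x ∂μ) E := by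
  have hedist : Tendsto (fun A => edist A E) (𝓝 E) (𝓝 0) :=
    tendsto_iff_edist_tendsto_0.1 tendsto_id
  have hreal : Tendsto (fun A => M * (edist A E).toReal) (𝓝 E) (𝓝 0) := by
    simpa using ((ENNReal.tendsto_toReal ENNReal.zero_ne_top).comp hedist).const_mul M
  refine tendsto_iff_norm_sub_tendsto_zero.2 (squeeze_zero' ?_ ?_ hreal)
  · exact Eventually.of_forall fun _ => norm_nonneg _
  · filter_upwards [hedist.eventually_ne ENNReal.zero_ne_top] with A hA
    exact norm_setIntegral_sub_setIntegral_le A.2 E.2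
      ((measure_ne_top_iff_of_symmDiff hA).2 hE) hE hf hM

end MeasuredSets

section Limit

variable {S T : Finset ℝ} {c : ℝ → ℝ} {d : ℝ}

theorem volume_booleSet_ne_top {l : ℝ} (hc : ∀ t ∈ T, 0 ≤ c t) (hl : 0 < l) :
    volume (booleSet c l T) ≠ ∞ := by
  rw [volume_booleSet hc hl]
  exact ENNReal.ofReal_ne_top

theorem volume_booleSet_sdiff_booleSet_one (hc : ∀ t ∈ S, 0 ≤ c t) (hd : 0 ≤ d)
    (hd1 : d < 1) :
    volume (booleSet c (1 - d) S \ booleSet c 1 S) =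
      ENNReal.ofReal ((∑ t ∈ S, c t) * (d / (1 - d))) := by
  have hsub : booleSet c 1 S ⊆ booleSet c (1 - d) S := fun x hx =>
    lt_of_lt_of_le hx (neg_le_neg (sub_le_self _ hd))
  have hd' : 0 < 1 - d := sub_pos.2 hd1
  rw [measure_sdiff hsub (measurableSet_booleSet _ _ _).nullMeasurableSet
    (volume_booleSet_ne_top hc one_pos), volume_booleSet hc hd', volume_booleSet hc one_pos,
    div_one, ← ENNReal.ofReal_sub _ (Finset.sum_nonneg hc)]
  congr 1
  field_simp
  ring

theorem volume_booleSet_sdiff_le (hc : ∀ t ∈ T, 0 ≤ c t) (hST : S ⊆ T) (hd : 0 < d)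
    (hd1 : d < 1) :
    volume (booleSet c 1 T \ booleSet c 1 S) ≤
      ENNReal.ofReal ((∑ t ∈ S, c t) * (d / (1 - d)) + (∑ t ∈ T \ S, c t) / d) := by
  have hsub : booleSet c 1 T \ booleSet c 1 S ⊆
      (booleSet c (1 - d) S \ booleSet c 1 S) ∪ booleSet c d (T \ S) := by
    rintro x ⟨hxT, hxS⟩
    by_contra! hx
    have hxd : -(1 - d) ≤ cauchySum S c x := not_lt.1 fun h => hx (.inl ⟨h, hxS⟩)
    have hxTS : -d ≤ cauchySum (T \ S) c x := not_lt.1 fun h => hx (.inr h)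
    have hsum : cauchySum (T \ S) c x + cauchySum S c x = cauchySum T c x :=
      Finset.sum_sdiff hST
    have hxT : cauchySum T c x < -1 := hxT
    linarith
  have hcS : ∀ t ∈ S, 0 ≤ c t := fun t ht => hc t (hST ht)
  have hcTS : ∀ t ∈ T \ S, 0 ≤ c t := fun t ht => hc t (Finset.sdiff_subset ht)
  have hS : 0 ≤ ∑ t ∈ S, c t := Finset.sum_nonneg hcS
  have hTS : 0 ≤ ∑ t ∈ T \ S, c t := Finset.sum_nonneg hcTS
  have : 0 < 1 - d := sub_pos.2 hd1
  rw [ENNReal.ofReal_add (by positivity) (by positivity),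
    ← volume_booleSet_sdiff_booleSet_one hcS hd.le hd1, ← volume_booleSet hcTS hd]
  exact (measure_mono hsub).trans (measure_union_le _ _)

theorem exists_volume_booleSet_sdiff_le (hc : ∀ t, 0 ≤ c t) (hs : Summable c) {ε : ℝ}
    (hε : 0 < ε) :
    ∃ S, ∀ T, S ⊆ T → volume (booleSet c 1 T \ booleSet c 1 S) ≤ ENNReal.ofReal ε := by
  have htend : Tendsto (fun d : ℝ => (∑' t, c t) * (d / (1 - d))) (𝓝[>] 0) (𝓝 0) := by
    have : ContinuousAt (fun d : ℝ => (∑' t, c t) * (d / (1 - d))) 0 := by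
      fun_prop (disch := norm_num)
    simpa using this.tendsto.mono_left nhdsWithin_le_nhds
  obtain ⟨d, hdε, hd0, hd1⟩ := ((htend.eventually_lt_const (half_pos hε)).and
    (Ioo_mem_nhdsGT one_pos)).exists
  obtain ⟨S, hS⟩ := summable_iff_vanishing_norm.1 hs (d * (ε / 2)) (by positivity)
  refine ⟨S, fun T hST => (volume_booleSet_sdiff_le (fun t _ => hc t) hST hd0 hd1).trans
    (ENNReal.ofReal_le_ofReal ?_)⟩
  have : 0 < 1 - d := sub_pos.2 hd1
  calc (∑ t ∈ S, c t) * (d / (1 - d)) + (∑ t ∈ T \ S, c t) / d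
      ≤ (∑' t, c t) * (d / (1 - d)) + d * (ε / 2) / d := by
        gcongr
        · exact hs.sum_le_tsum S fun t _ => hc t
        · exact (le_norm_self _).trans (hS _ Finset.sdiff_disjoint).le
    _ = (∑' t, c t) * (d / (1 - d)) + ε / 2 := by rw [mul_div_cancel_left₀ _ hd0.ne']
    _ ≤ ε / 2 + ε / 2 := by gcongr
    _ = ε := add_halves ε

theorem cauchySeq_booleSet (hc : ∀ t, 0 ≤ c t) (hs : Summable c) :
    CauchySeq (α := MeasuredSets volume) fun T =>
      ⟨booleSet c 1 T, measurableSet_booleSet c 1 T⟩ := by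
  refine EMetric.cauchySeq_iff'.2 fun ε hε => ?_
  obtain ⟨η, hη, hηε⟩ := ENNReal.lt_iff_exists_nnreal_btwn.1 (ENNReal.half_pos hε.ne')
  obtain ⟨S, hS⟩ := exists_volume_booleSet_sdiff_le hc hs (NNReal.coe_pos.2 (ENNReal.coe_pos.1 hη))
  rw [ENNReal.ofReal_coe_nnreal] at hS
  refine ⟨S, fun T hST => ?_⟩
  have hle : volume (booleSet c 1 S) ≤ volume (booleSet c 1 T) := by
    rw [volume_booleSet (fun t _ => hc t) one_pos, volume_booleSet (fun t _ => hc t) one_pos]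
    gcongr
    exact fun t _ _ => hc t
  calc volume (booleSet c 1 T ∆ booleSet c 1 S)
      ≤ volume (booleSet c 1 T \ booleSet c 1 S) + volume (booleSet c 1 S \ booleSet c 1 T) :=
        measure_union_le _ _
    _ ≤ η + η := add_le_add (hS T hST) <| (measure_sdiff_le_measure_sdiff
        (measurableSet_booleSet c 1 S) (measurableSet_booleSet c 1 T)
        (volume_booleSet_ne_top (fun t _ => hc t) one_pos) hle).trans (hS T hST)
    _ < ε / 2 + ε / 2 := ENNReal.add_lt_add hηε hηε
    _ = ε := ENNReal.add_halves ε

theorem exists_tendsto_setIntegral_booleSet (hc : ∀ t, 0 ≤ c t) (hs : Summable c) :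
    ∃ E : Set ℝ, MeasurableSet E ∧ volume E ≠ ∞ ∧
      ∀ (f : ℝ → ℝ) (M : ℝ), Continuous f → (∀ x, ‖f x‖ ≤ M) →
        Tendsto (fun T => ∫ x in booleSet c 1 T, f x) atTop (𝓝 (∫ x in E, f x)) := by
  have := completeSpace_measuredSets (μ := (volume : Measure ℝ))
  obtain ⟨E, hE⟩ := cauchySeq_tendsto_of_complete (cauchySeq_booleSet hc hs)
  obtain ⟨T, hT⟩ := ((tendsto_iff_edist_tendsto_0.1 hE).eventually_ne ENNReal.zero_ne_top).exists
  have hEfin : volume (E : Set ℝ) ≠ ∞ :=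
    (measure_ne_top_iff_of_symmDiff hT).1 (volume_booleSet_ne_top (fun t _ => hc t) one_pos)
  exact ⟨E, E.2, hEfin, fun f M hf hM =>
    (continuousAt_setIntegral_measuredSets hf.aestronglyMeasurable hM hEfin).tendsto.comp hE⟩

end Limit

section Cover

variable {e : Set ℝ}

theorem exists_radii_tsum_le (he : volume e = 0) {ε : ℝ≥0∞} (hε : ε ≠ 0) :
    ∃ r : ℝ → ℝ, ∑' t, ENNReal.ofReal (r t) ≤ ε ∧ ∀ x ∈ e, ∃ t, 0 < r t ∧ |t - x| ≤ r t := by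
  obtain ⟨T, ρ, -, -, hρ, hcover, hsum⟩ :=
    Besicovitch.exists_closedBall_covering_tsum_measure_le volume hε (fun _ => Ioi 0) e
      fun _ _ δ hδ => ⟨δ / 2, half_pos hδ, half_pos hδ, half_lt_self hδ⟩
  rw [he, zero_add] at hsum
  refine ⟨T.indicator ρ, ?_, fun x hx => ?_⟩
  · calc ∑' t, ENNReal.ofReal (T.indicator ρ t)
        = ∑' t : T, ENNReal.ofReal (ρ t) := by
          rw [tsum_subtype T fun t => ENNReal.ofReal (ρ t)]
          exact tsum_congr fun t => (congrFun (indicator_comp_of_zero ENNReal.ofReal_zero) t).symm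
      _ ≤ ∑' t : T, volume (Metric.closedBall (t : ℝ) (ρ t)) := by
          refine ENNReal.tsum_le_tsum fun t => ?_
          rw [Real.volume_closedBall]
          exact ENNReal.ofReal_le_ofReal (le_mul_of_one_le_left (hρ t t.2).le one_le_two)
      _ ≤ ε := hsum
  · obtain ⟨t, ht, hxt⟩ := mem_iUnion₂.1 (hcover hx)
    rw [Metric.mem_closedBall, dist_comm, Real.dist_eq] at hxt
    exact ⟨t, by rw [indicator_of_mem ht]; exact ⟨hρ t ht, hxt⟩⟩

theorem exists_summable_mass_of_volume_eq_zero (he : volume e = 0) :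
    ∃ c : ℝ → ℝ, (∀ t, 0 ≤ c t) ∧ Summable c ∧
      ∀ x ∈ e, ∀ N : ℝ, ∃ t r, 0 < r ∧ |t - x| ≤ r ∧ N * r ≤ c t := by
  have hε (k : ℕ) : ((2 ^ k)⁻¹ * 2⁻¹ ^ k : ℝ≥0∞) ≠ 0 := by simp
  choose r hsum hr using fun k => exists_radii_tsum_le he (hε k)
  let m : ℝ → ℝ≥0∞ := fun t => ∑' k, 2 ^ k * ENNReal.ofReal (r k t)
  have hm : ∑' t, m t ≠ ∞ := by
    refine ne_top_of_le_ne_top ENNReal.ofNat_ne_top (b := 2) ?_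
    calc ∑' t, m t = ∑' k, 2 ^ k * ∑' t, ENNReal.ofReal (r k t) := by
          rw [ENNReal.tsum_comm]
          simp only [ENNReal.tsum_mul_left]
      _ ≤ ∑' k, 2 ^ k * ((2 ^ k)⁻¹ * 2⁻¹ ^ k) :=
          ENNReal.tsum_le_tsum fun k => mul_le_mul_right (hsum k) _
      _ = ∑' k, 2⁻¹ ^ k := tsum_congr fun k => ENNReal.mul_inv_cancel_left (by simp) (by simp)
      _ = 2 := ENNReal.tsum_geometric_two
  refine ⟨fun t => (m t).toReal, fun _ => ENNReal.toReal_nonneg, ENNReal.summable_toReal hm,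
    fun x hx N => ?_⟩
  obtain ⟨k, hk⟩ := pow_unbounded_of_one_lt N one_lt_two
  obtain ⟨t, hpos, hxt⟩ := hr k x hx
  refine ⟨t, r k t, hpos, hxt, ?_⟩
  calc N * r k t ≤ 2 ^ k * r k t := by gcongr
    _ = (2 ^ k * ENNReal.ofReal (r k t)).toReal := by
      simp [ENNReal.toReal_mul, ENNReal.toReal_ofReal hpos.le]
    _ ≤ (m t).toReal :=
      ENNReal.toReal_mono (ENNReal.ne_top_of_tsum_ne_top hm t)
        (ENNReal.le_tsum (f := fun k => 2 ^ k * ENNReal.ofReal (r k t)) k)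

end Cover

section Comparison

variable {z : ℂ} {E : Set ℝ}

theorem im_ofReal_sub_inv_eq_pi_mul_cauchyPDFReal (hz : 0 ≤ z.im) (u : ℝ) :
    (((u : ℂ) - z)⁻¹).im = π * ProbabilityTheory.cauchyPDFReal z.re z.im.toNNReal u := by
  rw [im_ofReal_sub_inv, ProbabilityTheory.cauchyPDFReal, Real.coe_toNNReal _ hz, ← mul_assoc,
    mul_inv_cancel_left₀ pi_ne_zero, div_eq_mul_inv]

theorem integrable_im_ofReal_sub_inv (hz : 0 ≤ z.im) :
    Integrable fun u : ℝ => (((u : ℂ) - z)⁻¹).im := by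
  simp only [im_ofReal_sub_inv_eq_pi_mul_cauchyPDFReal hz]
  exact (ProbabilityTheory.integrable_cauchyPDFReal _).const_mul π

theorem integral_im_ofReal_sub_inv (hz : 0 < z.im) : ∫ u : ℝ, (((u : ℂ) - z)⁻¹).im = π := by
  simp only [im_ofReal_sub_inv_eq_pi_mul_cauchyPDFReal hz.le]
  rw [integral_const_mul,
    ProbabilityTheory.integral_cauchyPDFReal_eq_one _ (Real.toNNReal_pos.2 hz).ne', mul_one]

theorem norm_indicator_inv_le (hz : 0 < z.im) (u : ℝ) :
    ‖{t : ℝ | z.im < |t - z.re|}.indicator (fun t => 1 / (z.re - t)) u‖ ≤ 1 / z.im := by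
  rcases lt_or_ge z.im |u - z.re| with hu | hu
  · rw [indicator_of_mem (by exact hu), norm_div, norm_one, Real.norm_eq_abs, abs_sub_comm]
    exact one_div_le_one_div_of_le hz hu.le
  · rw [indicator_of_notMem (by exact hu.not_gt), norm_zero]
    exact one_div_nonneg.2 hz.le

theorem re_add_indicator_inv_le_im (hz : 0 < z.im) (u : ℝ) :
    (((u : ℂ) - z)⁻¹).re + {t : ℝ | z.im < |t - z.re|}.indicator (fun t => 1 / (z.re - t)) u ≤
      (((u : ℂ) - z)⁻¹).im := by
  have hre : (((u : ℂ) - z)⁻¹).re = (u - z.re) / ((u - z.re) ^ 2 + z.im ^ 2) := by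
    simp [Complex.inv_re, Complex.normSq_apply, pow_two]
  rw [hre, im_ofReal_sub_inv]
  rcases lt_or_ge z.im |u - z.re| with hu | hu
  · have hne : u - z.re ≠ 0 := abs_pos.1 (hz.trans hu)
    have hratio : -z.im / (u - z.re) ≤ 1 := (le_abs_self _).trans <| by
      rw [abs_div, abs_neg, abs_of_pos hz]
      exact div_le_one_of_le₀ hu.le (abs_nonneg _)
    rw [indicator_of_mem (by exact hu)]
    calc (u - z.re) / ((u - z.re) ^ 2 + z.im ^ 2) + 1 / (z.re - u)
        = -z.im / (u - z.re) * (z.im / ((u - z.re) ^ 2 + z.im ^ 2)) := by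
          rw [← neg_sub u z.re]
          field_simp
          ring
      _ ≤ z.im / ((u - z.re) ^ 2 + z.im ^ 2) := mul_le_of_le_one_left (by positivity) hratio
  · rw [indicator_of_notMem (by exact hu.not_gt), add_zero]
    gcongr
    exact (le_abs_self _).trans hu

theorem setIntegral_re_add_setIntegral_indicator_inv_le (hE : volume E ≠ ∞) (hz : 0 < z.im) :
    (∫ u in E, (((u : ℂ) - z)⁻¹).re) +
      ∫ u in E, {t : ℝ | z.im < |t - z.re|}.indicator (fun t => 1 / (z.re - t)) u ≤ π := by
  set S := {t : ℝ | z.im < |t - z.re|}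
  have hS : MeasurableSet S := measurableSet_lt measurable_const (by fun_prop)
  have hmeas : Measurable (S.indicator fun t => 1 / (z.re - t)) :=
    Measurable.indicator (by fun_prop) hS
  have hre : IntegrableOn (fun u : ℝ => (((u : ℂ) - z)⁻¹).re) E :=
    Measure.integrableOn_of_bounded hE (continuous_re_ofReal_sub_inv hz.ne').aestronglyMeasurable
      (Eventually.of_forall (norm_re_ofReal_sub_inv_le hz))
  have htrunc : IntegrableOn (S.indicator fun t => 1 / (z.re - t)) E :=
    Measure.integrableOn_of_bounded hE hmeas.aestronglyMeasurable
      (Eventually.of_forall (norm_indicator_inv_le hz))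
  have him := integrable_im_ofReal_sub_inv hz.le
  calc (∫ u in E, (((u : ℂ) - z)⁻¹).re) + ∫ u in E, S.indicator (fun t => 1 / (z.re - t)) u
      = ∫ u in E, ((((u : ℂ) - z)⁻¹).re + S.indicator (fun t => 1 / (z.re - t)) u) :=
        (integral_add hre htrunc).symm
    _ ≤ ∫ u in E, (((u : ℂ) - z)⁻¹).im :=
        integral_mono (hre.add htrunc) him.integrableOn (re_add_indicator_inv_le_im hz)
    _ ≤ ∫ u : ℝ, (((u : ℂ) - z)⁻¹).im :=
        setIntegral_le_integral him (Eventually.of_forall (im_ofReal_sub_inv_nonneg hz.le))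
    _ = π := integral_im_ofReal_sub_inv hz

theorem setIntegral_re_ofReal_sub_inv_le (hE : MeasurableSet E) (hE' : volume E ≠ ∞)
    (hz : 0 < z.im) :
    ∫ u in E, (((u : ℂ) - z)⁻¹).re ≤
      |∫ t in {t : ℝ | z.im < |t - z.re|}, E.indicator 1 t / (z.re - t)| + π := by
  have hsum := setIntegral_re_add_setIntegral_indicator_inv_le hE' hz
  set S := {t : ℝ | z.im < |t - z.re|}
  have hS : MeasurableSet S := measurableSet_lt measurable_const (by fun_prop)
  have hswap : ∫ t in S, E.indicator 1 t / (z.re - t) =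
      ∫ t in E, S.indicator (fun t => 1 / (z.re - t)) t := by
    rw [setIntegral_indicator hS, inter_comm, ← setIntegral_indicator hE]
    refine integral_congr_ae (Eventually.of_forall fun t => ?_)
    by_cases ht : t ∈ E <;> simp [ht]
  rw [hswap]
  linarith [neg_abs_le (∫ t in E, S.indicator (fun t => 1 / (z.re - t)) t)]

end Comparison

/-- Theorem 1: For every null set `e ⊂ ℝ` there is a measurable
set `E` of finite measure such that the maximal Hilbert transform
`H*𝟙_E(x) = sup_{ε>0} |H_ε 𝟙_E(x)|` is infinite at every `x ∈ e`. -/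
theorem stmt9 (e : Set ℝ) (he : volume e = 0) :
    ∃ E : Set ℝ, MeasurableSet E ∧ volume E < ⊤ ∧
      ∀ x ∈ e,
        (⨆ (ε : ℝ) (_ : 0 < ε),
          ENNReal.ofReal
            |(1 / π) * ∫ t in {t : ℝ | ε < |t - x|}, E.indicator 1 t / (x - t)|)
          = ⊤ := by
  obtain ⟨c, hc, hs, hmass⟩ := exists_summable_mass_of_volume_eq_zero he
  obtain ⟨E, hE, hEfin, hlim⟩ := exists_tendsto_setIntegral_booleSet hc hs
  refine ⟨E, hE, hEfin.lt_top, fun x hx => ENNReal.eq_top_of_forall_nnreal_le fun M => ?_⟩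
  obtain ⟨t, r, hr, htr, hct⟩ := hmass x hx (2 * Real.exp (π * M + π))
  let z : ℂ := ⟨x, r⟩
  have hlarge : ∀ᶠ T in atTop, π * M + π ≤ ∫ u in booleSet c 1 T, (((u : ℂ) - z)⁻¹).re := by
    filter_upwards [eventually_ge_atTop {t}] with T hT
    exact le_setIntegral_booleSet (fun s _ => hc s) hr (Finset.singleton_subset_iff.1 hT) htr hct
  have hE_large : π * M + π ≤ ∫ u in E, (((u : ℂ) - z)⁻¹).re :=
    ge_of_tendsto (hlim _ r⁻¹ (continuous_re_ofReal_sub_inv (z := z) hr.ne')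
      (norm_re_ofReal_sub_inv_le hr)) hlarge
  have hcompare := setIntegral_re_ofReal_sub_inv_le (z := z) hE hEfin hr
  refine le_iSup₂_of_le r hr ?_
  rw [← ENNReal.ofReal_coe_nnreal, abs_mul, abs_of_pos (by positivity), one_div_mul_eq_div]
  exact ENNReal.ofReal_le_ofReal ((le_div_iff₀' pi_pos).2 (by linarith))
end

section
/- For every closed set e ⊂ ℝ of Lebesgue measure zero, there exists a continuous function f ∈ C(ℝ) ∩ L¹(ℝ) such that the maximal Hilbert transform H*f(x) = sup_{ε>0} |H_ε f(x)| is infinite for every x ∈ e. -/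
open MeasureTheory Filter Set Real

/-!
Let `E` be a compact null set and `S` the Stieltjes transform of a large multiple of Lebesgue
measure on a thin neighbourhood of `E`. In the upper half-plane `1 - i S` has positive real part, so
the imaginary part of `F = log (1 - i S)` is bounded, while the real part of `F` is as large as we
like near `E` and small far from `E`; a small multiple of `F`, shifted slightly upwards, keeps the
real part large near `E` and makes everything else small. Cauchy's theorem for `F` on an upper
half-annulus around `x ∈ E` expresses the truncated Hilbert transform of the boundary values of
`Im F` as the mean of `Re F` over the outer semicircle minus its mean over the inner one, up to a
small outer truncation. So at points of `E` these truncations are never much above zero, and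
eventually at most `-1`. Now sum such functions along an increasing exhaustion by compact sets,
with summable upper bounds: no cancellation can occur, the finitely many terms whose compact set
misses a given point are Lipschitz and hence harmless there, and the truncations tend to `-∞`.
-/

open scoped Topology NNReal

section Sums

variable {ι α E : Type*}

theorem tendsto_atBot_of_hasSum {l : Filter α} {h : ι → α → ℝ} {S : α → ℝ} {C : ι → ℝ} {s : Set ι}
    (hs : s.Infinite) (hC : Summable C) (hC₀ : ∀ i, 0 ≤ C i)
    (hS : ∀ᶠ a in l, HasSum (fun i => h i a) (S a)) (hle : ∀ᶠ a in l, ∀ i, h i a ≤ C i)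
    (hneg : ∀ i ∈ s, ∀ᶠ a in l, h i a ≤ -1) : Tendsto S l atBot := by
  refine tendsto_atBot.2 fun b => ?_
  obtain ⟨n, hn⟩ := exists_nat_ge (∑' i, C i - b)
  obtain ⟨t, hts, rfl⟩ := hs.exists_subset_card_eq n
  have hneg_t : ∀ᶠ a in l, ∀ i ∈ t, h i a ≤ -1 :=
    (eventually_all_finset t).2 fun i hi => hneg i (hts hi)
  filter_upwards [hS, hle, hneg_t] with a hSa hle_a hneg_a
  have hcard : (t.card : ℝ) ≤ ∑ i ∈ t, (C i - h i a) := by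
    simpa using Finset.card_nsmul_le_sum t (fun i => C i - h i a) 1 fun i hi => by
      linarith [hC₀ i, hneg_a i hi]
  have hsum : ∑ i ∈ t, (C i - h i a) ≤ ∑' i, C i - S a :=
    sum_le_hasSum t (fun i _ => sub_nonneg.2 (hle_a i)) (hC.hasSum.sub hSa)
  linarith

theorem integrable_tsum_of_summable_integral_norm [Countable ι] [MeasurableSpace α] {μ : Measure α}
    [NormedAddCommGroup E] [CompleteSpace E] {g : ι → α → E} (hg : ∀ i, Integrable (g i) μ)
    (hsum : Summable fun i => ∫ t, ‖g i t‖ ∂μ) : Integrable (fun t => ∑' i, g i t) μ := by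
  have hmeas : ∀ i, AEMeasurable (fun t => ‖g i t‖ₑ) μ := fun i => (hg i).1.enorm
  have hfin : ∫⁻ t, ∑' i, ‖g i t‖ₑ ∂μ < ⊤ := by
    rw [lintegral_tsum hmeas]
    simpa only [ofReal_integral_norm_eq_lintegral_enorm (hg _)] using hsum.tsum_ofReal_lt_top
  have hsummable : ∀ᵐ t ∂μ, Summable fun i => g i t := by
    filter_upwards [ae_lt_top' (.tsum hmeas) hfin.ne] with t ht
    exact .of_enorm ht.ne
  refine ⟨aestronglyMeasurable_of_tendsto_ae atTop
    (fun s => Finset.aestronglyMeasurable_fun_sum s fun i _ => (hg i).1)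
    (hsummable.mono fun t ht => ht.hasSum), ?_⟩
  exact (lintegral_mono fun t => enorm_tsum_le_tsum_enorm).trans_lt hfin

theorem iSup_ofReal_abs_eq_top_of_tendsto_atBot {u : ℝ → ℝ} (hu : Tendsto u (𝓝[>] 0) atBot) :
    ⨆ (ε : ℝ) (_ : 0 < ε), ENNReal.ofReal |u ε| = ⊤ := by
  refine ENNReal.eq_top_of_forall_nnreal_le fun r => ?_
  obtain ⟨ε, hε, hr⟩ :=
    (((tendsto_abs_atBot_atTop.comp hu).eventually_ge_atTop (r : ℝ)).and self_mem_nhdsWithin).exists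
  calc (r : ENNReal) = ENNReal.ofReal r := (ENNReal.ofReal_coe_nnreal).symm
    _ ≤ ENNReal.ofReal |u ε| := ENNReal.ofReal_le_ofReal hε
    _ ≤ _ := le_iSup₂ (f := fun (ε : ℝ) (_ : 0 < ε) => ENNReal.ofReal |u ε|) ε hr

end Sums

section TruncatedHilbertTransform

/-- The truncated Hilbert transform `H_ε f (x)`. -/
noncomputable def truncatedHilbertTransform (f : ℝ → ℝ) (ε x : ℝ) : ℝ :=
  (1 / π) * ∫ t in {t : ℝ | ε < |t - x|}, f t / (x - t)

variable {f : ℝ → ℝ} {ε R : ℝ}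

theorem norm_div_sub_le (f : ℝ → ℝ) (hε : 0 < ε) {x t : ℝ} (ht : ε < |t - x|) :
    ‖f t / (x - t)‖ ≤ ε⁻¹ * ‖f t‖ := by
  rw [norm_div, norm_eq_abs (x - t), abs_sub_comm, div_eq_inv_mul]
  gcongr

theorem measurableSet_lt_abs_sub (ε x : ℝ) : MeasurableSet {t : ℝ | ε < |t - x|} :=
  measurableSet_lt measurable_const (by fun_prop)

theorem integrableOn_div_sub (hf : Integrable f) (hε : 0 < ε) (x : ℝ) :
    IntegrableOn (fun t => f t / (x - t)) {t : ℝ | ε < |t - x|} := by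
  refine (hf.norm.const_mul ε⁻¹).integrableOn.mono' ?_ ?_
  · exact (hf.aemeasurable.div (by fun_prop)).aestronglyMeasurable.restrict
  · exact ae_restrict_of_forall_mem (measurableSet_lt_abs_sub ε x) fun t ht =>
      norm_div_sub_le f hε ht

theorem setIntegral_norm_div_sub_le (hf : Integrable f) (hε : 0 < ε) (x : ℝ) :
    ∫ t in {t : ℝ | ε < |t - x|}, ‖f t / (x - t)‖ ≤ ε⁻¹ * ∫ t, |f t| := by
  calc ∫ t in {t : ℝ | ε < |t - x|}, ‖f t / (x - t)‖
      ≤ ∫ t in {t : ℝ | ε < |t - x|}, ε⁻¹ * |f t| :=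
        setIntegral_mono_on (integrableOn_div_sub hf hε x).norm (hf.abs.const_mul _).integrableOn
          (measurableSet_lt_abs_sub ε x) fun t ht => norm_div_sub_le f hε ht
    _ ≤ ∫ t, ε⁻¹ * |f t| :=
        setIntegral_le_integral (hf.abs.const_mul _) (Eventually.of_forall fun t => by positivity)
    _ = ε⁻¹ * ∫ t, |f t| := integral_const_mul _ _

theorem abs_truncatedHilbertTransform_le (hf : Integrable f) (hε : 0 < ε) (x : ℝ) :
    |truncatedHilbertTransform f ε x| ≤ (π * ε)⁻¹ * ∫ t, |f t| := by
  rw [truncatedHilbertTransform, abs_mul, abs_of_pos (by positivity), one_div, mul_inv, mul_assoc]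
  gcongr
  exact (norm_integral_le_integral_norm _).trans (setIntegral_norm_div_sub_le hf hε x)

theorem abs_truncatedHilbertTransform_le_integral_abs (hf : Integrable f) (hε : 1 ≤ ε) (x : ℝ) :
    |truncatedHilbertTransform f ε x| ≤ ∫ t, |f t| := by
  refine (abs_truncatedHilbertTransform_le hf (by positivity) x).trans ?_
  refine mul_le_of_le_one_left (integral_nonneg fun t => abs_nonneg _) (inv_le_one_of_one_le₀ ?_)
  nlinarith [pi_gt_three]

theorem hasSum_truncatedHilbertTransform {ι : Type*} [Countable ι] {g : ι → ℝ → ℝ}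
    (hg : ∀ i, Integrable (g i)) (hsum : Summable fun i => ∫ t, |g i t|) (hε : 0 < ε) (x : ℝ) :
    HasSum (fun i => truncatedHilbertTransform (g i) ε x)
      (truncatedHilbertTransform (fun t => ∑' i, g i t) ε x) := by
  have h := hasSum_integral_of_summable_integral_norm
    (F := fun i t => g i t / (x - t)) (fun i => integrableOn_div_sub (hg i) hε x)
    ((hsum.mul_left ε⁻¹).of_nonneg_of_le (fun i => integral_nonneg fun t => norm_nonneg _)
      fun i => setIntegral_norm_div_sub_le (hg i) hε x)
  simp only [tsum_div_const] at h
  exact h.mul_left _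

theorem integrableOn_div_Ioi (hf : Integrable f) (hε : 0 < ε) :
    IntegrableOn (fun r => f r / r) (Ioi ε) := by
  refine (hf.norm.const_mul ε⁻¹).integrableOn.mono' ?_ ?_
  · exact (hf.aemeasurable.div (by fun_prop)).aestronglyMeasurable.restrict
  · refine ae_restrict_of_forall_mem measurableSet_Ioi fun r hr => ?_
    rw [norm_div, norm_of_nonneg (hε.trans hr).le, div_eq_inv_mul]
    gcongr
    exact (mem_Ioi.1 hr).le

theorem setIntegral_lt_abs {E : Type*} [NormedAddCommGroup E] [NormedSpace ℝ E] {g : ℝ → E}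
    (hε : 0 ≤ ε) (hg : IntegrableOn g {r | ε < |r|}) :
    ∫ r in {r : ℝ | ε < |r|}, g r = (∫ r in Ioi ε, g r) + ∫ r in Ioi ε, g (-r) := by
  have hset : {r : ℝ | ε < |r|} = Ioi ε ∪ Iio (-ε) := by
    ext r
    simp only [mem_ofPred_eq, mem_union, mem_Ioi, mem_Iio, lt_abs, lt_neg]
  have hdisj : Disjoint (Ioi ε) (Iio (-ε)) :=
    disjoint_left.2 fun r hr hr' => by linarith [mem_Ioi.1 hr, mem_Iio.1 hr']
  rw [hset] at hg ⊢
  rw [setIntegral_union hdisj measurableSet_Iio (hg.mono_set subset_union_left)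
    (hg.mono_set subset_union_right), integral_comp_neg_Ioi, integral_Iic_eq_integral_Iio]

theorem integrableOn_sub_div_Ioi (hf : Integrable f) (hε : 0 < ε) (x : ℝ) :
    IntegrableOn (fun r => (f (x + r) - f (x - r)) / r) (Ioi ε) :=
  integrableOn_div_Ioi ((hf.comp_add_left x).sub (hf.comp_sub_left x)) hε

theorem truncatedHilbertTransform_eq_integral_Ioi (hf : Integrable f) (hε : 0 < ε) (x : ℝ) :
    truncatedHilbertTransform f ε x =
      -((1 / π) * ∫ r in Ioi ε, (f (x + r) - f (x - r)) / r) := by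
  have hright : IntegrableOn (fun r => f (x + r) / r) (Ioi ε) :=
    integrableOn_div_Ioi (hf.comp_add_left x) hε
  have hleft : IntegrableOn (fun r => f (x - r) / r) (Ioi ε) :=
    integrableOn_div_Ioi (hf.comp_sub_left x) hε
  have htrans : ∫ t in {t : ℝ | ε < |t - x|}, f t / (x - t) =
      ∫ r in {r : ℝ | ε < |r|}, f (x + r) / -r := by
    rw [← (measurePreserving_add_left volume x).setIntegral_preimage_emb
      (measurableEmbedding_addLeft x)]
    simp
  have hint : IntegrableOn (fun r => f (x + r) / -r) {r | ε < |r|} := by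
    simpa using integrableOn_div_sub (hf.comp_add_left x) hε 0
  rw [truncatedHilbertTransform, htrans, setIntegral_lt_abs hε.le hint]
  simp only [neg_neg, ← sub_eq_add_neg, div_neg, sub_div, integral_neg]
  rw [integral_sub hright hleft]
  ring

theorem truncatedHilbertTransform_sub (hf : Integrable f) (hε : 0 < ε) (hεR : ε ≤ R) (x : ℝ) :
    truncatedHilbertTransform f R x - truncatedHilbertTransform f ε x =
      (1 / π) * ∫ r in ε..R, (f (x + r) - f (x - r)) / r := by
  rw [← intervalIntegral.integral_Ioi_sub_Ioi (integrableOn_sub_div_Ioi hf hε x) hεR,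
    truncatedHilbertTransform_eq_integral_Ioi hf hε,
    truncatedHilbertTransform_eq_integral_Ioi hf (hε.trans_le hεR)]
  ring

theorem norm_symmetric_quotient_le_of_lipschitzWith {L : ℝ≥0} (hL : LipschitzWith L f) (x : ℝ)
    {r : ℝ} (hr : 0 < r) : ‖(f (x + r) - f (x - r)) / r‖ ≤ 2 * L := by
  rw [norm_div, norm_of_nonneg hr.le, div_le_iff₀ hr]
  calc ‖f (x + r) - f (x - r)‖ ≤ L * ‖(x + r) - (x - r)‖ := hL.norm_sub_le _ _
    _ = 2 * L * r := by
      rw [show x + r - (x - r) = 2 * r by ring, norm_of_nonneg (by positivity)]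
      ring

theorem abs_truncatedHilbertTransform_le_of_lipschitzWith {L : ℝ≥0} (hL : LipschitzWith L f)
    (hf : Integrable f) (hε : 0 < ε) (x : ℝ) :
    |truncatedHilbertTransform f ε x| ≤ (∫ t, |f t|) + 2 * L := by
  rcases le_total 1 ε with h1ε | hε1
  · exact (abs_truncatedHilbertTransform_le_integral_abs hf h1ε x).trans
      (le_add_of_nonneg_right (by positivity))
  have hfar := abs_truncatedHilbertTransform_le_integral_abs hf le_rfl x
  have hnear : |(1 / π) * ∫ r in ε..1, (f (x + r) - f (x - r)) / r| ≤ 2 * L := by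
    have hint : ‖∫ r in ε..1, (f (x + r) - f (x - r)) / r‖ ≤ 2 * L * |1 - ε| :=
      intervalIntegral.norm_integral_le_of_norm_le_const fun r hr =>
        norm_symmetric_quotient_le_of_lipschitzWith hL x (hε.trans (uIoc_of_le hε1 ▸ hr).1)
    have hlen : |1 - ε| ≤ 1 := by rw [abs_le]; constructor <;> linarith
    have hπ : 1 / π ≤ 1 := (div_le_one pi_pos).2 (by linarith [pi_gt_three])
    rw [abs_mul, abs_of_pos (by positivity)]
    refine (mul_le_of_le_one_left (abs_nonneg _) hπ).trans (hint.trans ?_)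
    exact mul_le_of_le_one_right (by positivity) hlen
  have hsub := truncatedHilbertTransform_sub hf hε hε1 x
  calc |truncatedHilbertTransform f ε x|
      = |truncatedHilbertTransform f 1 x -
          (1 / π) * ∫ r in ε..1, (f (x + r) - f (x - r)) / r| := by
        rw [← hsub, sub_sub_cancel]
    _ ≤ (∫ t, |f t|) + 2 * L := (abs_sub _ _).trans (add_le_add hfar hnear)

end TruncatedHilbertTransform

theorem integral_comp_exp_of_pos {E : Type*} [NormedAddCommGroup E] [NormedSpace ℝ E]
    {g : ℝ → E} {ε R : ℝ} (hε : 0 < ε) (hεR : ε ≤ R)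
    (hg : ContinuousOn g (Icc ε R)) :
    ∫ u in Real.log ε..Real.log R, g (Real.exp u) = ∫ r in ε..R, r⁻¹ • g r := by
  have hR : 0 < R := hε.trans_le hεR
  have himage : Real.exp '' uIcc (Real.log ε) (Real.log R) = Icc ε R := by
    rw [Real.continuous_exp.continuousOn.image_uIcc_of_monotoneOn (Real.exp_monotone.monotoneOn _),
      Real.exp_log hε, Real.exp_log hR, uIcc_of_le hεR]
  have h := intervalIntegral.integral_deriv_smul_comp' (a := Real.log ε) (b := Real.log R)
    (g := fun r => r⁻¹ • g r) (fun u _ => Real.hasDerivAt_exp u) Real.continuous_exp.continuousOn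
    (by
      rw [himage]
      exact (continuousOn_inv₀.mono fun r hr => (hε.trans_le hr.1).ne').smul hg)
  rw [Real.exp_log hε, Real.exp_log hR] at h
  simpa [smul_smul] using h

section UpperSemicircleAverage

variable {E : Type*} [NormedAddCommGroup E]

/-- The mean of `F` over the upper half of the circle of radius `ρ` centred at the real point
`x`. It is the boundary term of Cauchy's theorem on the upper half-annulus. -/
noncomputable def upperSemicircleAverage [NormedSpace ℝ E] (F : ℂ → E) (x ρ : ℝ) : E :=
  ⨍ θ in (0 : ℝ)..π, F (circleMap x ρ θ)

theorem im_circleMap_ofReal (x ρ θ : ℝ) : (circleMap x ρ θ).im = ρ * Real.sin θ := by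
  simp [circleMap, Complex.exp_ofReal_mul_I_im]

theorem im_circleMap_ofReal_nonneg (x : ℝ) {ρ θ : ℝ} (hρ : 0 ≤ ρ) (hθ : θ ∈ Icc 0 π) :
    0 ≤ (circleMap x ρ θ).im := by
  rw [im_circleMap_ofReal]
  exact mul_nonneg hρ (sin_nonneg_of_mem_Icc hθ)

variable {F : ℂ → E}

theorem continuousOn_comp_circleMap_Icc (hF : ContinuousOn F {z | 0 ≤ z.im}) (x : ℝ) {ρ : ℝ}
    (hρ : 0 ≤ ρ) : ContinuousOn (fun θ => F (circleMap x ρ θ)) (Icc 0 π) :=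
  hF.comp (continuous_circleMap x ρ).continuousOn fun _ hθ => im_circleMap_ofReal_nonneg x hρ hθ

theorem continuous_comp_ofReal {φ : ℝ → ℝ} (hF : ContinuousOn F {z | 0 ≤ z.im})
    (hφ : Continuous φ) : Continuous fun t => F ↑(φ t) :=
  hF.comp_continuous (by fun_prop) fun _ => (Complex.ofReal_im _).ge

theorem upperSemicircleAverage_mem [NormedSpace ℝ E] [CompleteSpace E] {s : Set E}
    (hs : Convex ℝ s) (hsc : IsClosed s) (hF : ContinuousOn F {z | 0 ≤ z.im}) {x ρ : ℝ} (hρ : 0 ≤ ρ)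
    (h : ∀ z : ℂ, 0 ≤ z.im → dist z x = ρ → F z ∈ s) : upperSemicircleAverage F x ρ ∈ s := by
  rw [upperSemicircleAverage, uIoc_of_le pi_pos.le]
  refine hs.set_average_mem hsc (by simp [pi_pos]) (by simp) ?_
    ((continuousOn_comp_circleMap_Icc hF x hρ).integrableOn_Icc.mono_set Ioc_subset_Icc_self)
  refine ae_restrict_of_forall_mem measurableSet_Ioc fun θ hθ => h _ ?_ ?_
  · exact im_circleMap_ofReal_nonneg x hρ (Ioc_subset_Icc_self hθ)
  · exact circleMap_mem_sphere x hρ θ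

variable [NormedSpace ℂ E]

-- In the coordinate `w ↦ x + exp w` the upper half-annulus becomes a rectangle.
theorem integral_boundary_upperHalfAnnulus_eq_zero [CompleteSpace E]
    (hF : DiffContOnCl ℂ F {z | 0 < z.im}) {ε R : ℝ} (hε : 0 < ε) (hεR : ε ≤ R) (x : ℝ) :
    (∫ u in Real.log ε..Real.log R, F ↑(x + Real.exp u)) -
        (∫ u in Real.log ε..Real.log R, F ↑(x - Real.exp u)) +
        Complex.I • (∫ θ in 0..π, F (circleMap x R θ)) -
        Complex.I • (∫ θ in 0..π, F (circleMap x ε θ)) = 0 := by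
  have hcont : ContinuousOn F {z | 0 ≤ z.im} := by simpa using hF.continuousOn
  have him : ∀ w : ℂ, (x + Complex.exp w).im = Real.exp w.re * Real.sin w.im := by
    simp [Complex.exp_im]
  have hboundary := Complex.integral_boundary_rect_eq_zero_of_continuousOn_of_differentiableOn
    (fun w => F (x + Complex.exp w)) (Real.log ε) (Real.log R + π * Complex.I)
    (hcont.comp (by fun_prop) fun w hw => by
      have hw_im : w.im ∈ Icc 0 π := by
        simpa [uIcc_of_le pi_pos.le] using (Complex.mem_reProdIm.1 hw).2
      rw [mem_ofPred_eq, him]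
      exact mul_nonneg (Real.exp_pos _).le (sin_nonneg_of_mem_Icc hw_im))
    (hF.differentiableOn.comp (by fun_prop) fun w hw => by
      have hw_im : w.im ∈ Ioo 0 π := by
        simpa [pi_pos.le] using (Complex.mem_reProdIm.1 hw).2
      rw [mem_ofPred_eq, him]
      exact mul_pos (Real.exp_pos _) (sin_pos_of_mem_Ioo hw_im))
  simpa [circleMap, Complex.exp_add, ← Complex.ofReal_exp, Real.exp_log hε,
    Real.exp_log (hε.trans_le hεR), ← sub_eq_add_neg] using hboundary

theorem integral_inv_smul_sub_eq_upperSemicircleAverage [CompleteSpace E]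
    (hF : DiffContOnCl ℂ F {z | 0 < z.im}) {ε R : ℝ} (hε : 0 < ε) (hεR : ε ≤ R) (x : ℝ) :
    ∫ r in ε..R, r⁻¹ • (F ↑(x + r) - F ↑(x - r)) =
      (π * Complex.I) • (upperSemicircleAverage F x ε - upperSemicircleAverage F x R) := by
  have hcont : ContinuousOn F {z | 0 ≤ z.im} := by simpa using hF.continuousOn
  have hright : Continuous fun t => F ↑(x + t) := continuous_comp_ofReal hcont (by fun_prop)
  have hleft : Continuous fun t => F ↑(x - t) := continuous_comp_ofReal hcont (by fun_prop)
  have haverage : ∀ ρ, (π : ℂ) • upperSemicircleAverage F x ρ =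
      ∫ θ in 0..π, F (circleMap x ρ θ) := fun ρ => by
    rw [upperSemicircleAverage, interval_average_eq, sub_zero, Complex.coe_smul,
      smul_inv_smul₀ pi_ne_zero]
  calc ∫ r in ε..R, r⁻¹ • (F ↑(x + r) - F ↑(x - r))
      = ∫ u in Real.log ε..Real.log R, (F ↑(x + Real.exp u) - F ↑(x - Real.exp u)) :=
        (integral_comp_exp_of_pos (g := fun r => F ↑(x + r) - F ↑(x - r)) hε hεR
          (hright.sub hleft).continuousOn).symm
    _ = (∫ u in Real.log ε..Real.log R, F ↑(x + Real.exp u)) -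
          ∫ u in Real.log ε..Real.log R, F ↑(x - Real.exp u) :=
        intervalIntegral.integral_sub ((hright.comp Real.continuous_exp).intervalIntegrable _ _)
          ((hleft.comp Real.continuous_exp).intervalIntegrable _ _)
    _ = Complex.I • (∫ θ in 0..π, F (circleMap x ε θ)) -
          Complex.I • (∫ θ in 0..π, F (circleMap x R θ)) := by
        rw [← sub_eq_zero, ← integral_boundary_upperHalfAnnulus_eq_zero hF hε hεR x]
        abel
    _ = (π * Complex.I) • (upperSemicircleAverage F x ε - upperSemicircleAverage F x R) := by
        rw [← haverage, ← haverage, mul_comm, mul_smul, smul_sub, smul_sub]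

end UpperSemicircleAverage

theorem truncatedHilbertTransform_eq_add_re_upperSemicircleAverage {f : ℝ → ℝ} {F : ℂ → ℂ}
    (hf : Integrable f) (hF : DiffContOnCl ℂ F {z | 0 < z.im}) {ε R x : ℝ} (hε : 0 < ε)
    (hεR : ε ≤ R) (hfF : ∀ t ∈ Icc (x - R) (x + R), f t = (F t).im) :
    truncatedHilbertTransform f ε x = truncatedHilbertTransform f R x +
      (upperSemicircleAverage F x R).re - (upperSemicircleAverage F x ε).re := by
  have hcont : ContinuousOn F {z | 0 ≤ z.im} := by simpa using hF.continuousOn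
  have hint : IntervalIntegrable (fun r : ℝ => r⁻¹ • (F ↑(x + r) - F ↑(x - r))) volume ε R := by
    have hinv : ContinuousOn (fun r : ℝ => r⁻¹) (Icc ε R) :=
      continuousOn_inv₀.mono fun r hr => (hε.trans_le hr.1).ne'
    have hsub : Continuous fun r : ℝ => F ↑(x + r) - F ↑(x - r) :=
      (continuous_comp_ofReal hcont (by fun_prop)).sub (continuous_comp_ofReal hcont (by fun_prop))
    exact (hinv.smul hsub.continuousOn).intervalIntegrable_of_Icc hεR
  have hIm : ∫ r in ε..R, (f (x + r) - f (x - r)) / r =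
      (∫ r in ε..R, r⁻¹ • (F ↑(x + r) - F ↑(x - r))).im := by
    rw [← Complex.imCLM_apply, ← Complex.imCLM.intervalIntegral_comp_comm hint]
    refine intervalIntegral.integral_congr fun r hr => ?_
    rw [uIcc_of_le hεR] at hr
    have hr₀ : 0 < r := hε.trans_le hr.1
    simp only [Complex.imCLM_apply, Complex.smul_im, Complex.sub_im, smul_eq_mul]
    rw [hfF _ ⟨by linarith, by linarith [hr.2]⟩, hfF _ ⟨by linarith [hr.2], by linarith⟩,
      div_eq_inv_mul]
  have hsub := truncatedHilbertTransform_sub hf hε hεR x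
  rw [hIm, integral_inv_smul_sub_eq_upperSemicircleAverage hF hε hεR] at hsub
  have hπ : (1 / π) * ((π * Complex.I) •
      (upperSemicircleAverage F x ε - upperSemicircleAverage F x R)).im =
      (upperSemicircleAverage F x ε).re - (upperSemicircleAverage F x R).re := by
    simp [pi_ne_zero]
  linarith

theorem truncatedHilbertTransform_le_of_re_le_of_le_re {f : ℝ → ℝ} {F : ℂ → ℂ}
    (hf : Integrable f) (hF : DiffContOnCl ℂ F {z | 0 < z.im}) {ε R x a m : ℝ} (hε : 0 < ε)
    (hεR : ε ≤ R) (hfF : ∀ t ∈ Icc (x - R) (x + R), f t = (F t).im)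
    (ha : ∀ z : ℂ, 0 ≤ z.im → dist z x = R → (F z).re ≤ a)
    (hm : ∀ z : ℂ, 0 ≤ z.im → dist z x = ε → m ≤ (F z).re) :
    truncatedHilbertTransform f ε x ≤ truncatedHilbertTransform f R x + a - m := by
  have hcont : ContinuousOn F {z | 0 ≤ z.im} := by simpa using hF.continuousOn
  have houter : upperSemicircleAverage F x R ∈ Complex.re ⁻¹' Iic a :=
    upperSemicircleAverage_mem (convex_halfSpace_re_le a)
      (isClosed_Iic.preimage Complex.continuous_re) hcont (hε.le.trans hεR) ha
  have hinner : upperSemicircleAverage F x ε ∈ Complex.re ⁻¹' Ici m :=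
    upperSemicircleAverage_mem (convex_halfSpace_re_ge m)
      (isClosed_Ici.preimage Complex.continuous_re) hcont hε.le hm
  rw [mem_preimage, mem_Iic] at houter
  rw [mem_preimage, mem_Ici] at hinner
  rw [truncatedHilbertTransform_eq_add_re_upperSemicircleAverage hf hF hε hεR hfF]
  linarith

section LogStieltjes

variable {μ : Measure ℝ} {z : ℂ}

theorem notMem_image_algebraMap_of_im_ne_zero (s : Set ℝ) (hz : z.im ≠ 0) :
    z ∉ algebraMap ℝ ℂ '' s := by
  rintro ⟨t, -, rfl⟩
  exact hz (Complex.ofReal_im t)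

theorem norm_resolvent_ofReal (z : ℂ) (t : ℝ) : ‖resolvent z t‖ = ‖(t : ℂ) - z‖⁻¹ := by
  rw [resolvent, Ring.inverse_eq_inv', norm_inv, Complex.coe_algebraMap]

theorem im_resolvent_ofReal (z : ℂ) (t : ℝ) : (resolvent z t).im = z.im / ‖(t : ℂ) - z‖ ^ 2 := by
  rw [resolvent, Ring.inverse_eq_inv', Complex.coe_algebraMap, Complex.inv_im,
    Complex.normSq_eq_norm_sq, Complex.sub_im, Complex.ofReal_im, zero_sub, neg_neg]

theorem im_resolvent_ofReal_nonneg (hz : 0 ≤ z.im) (t : ℝ) : 0 ≤ (resolvent z t).im := by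
  rw [im_resolvent_ofReal]
  positivity

theorem norm_resolventTransform_le [IsFiniteMeasure μ] {r : ℝ} (hr : 0 < r)
    (h : ∀ᵐ t : ℝ ∂μ, r ≤ ‖(t : ℂ) - z‖) : ‖resolventTransform μ z‖ ≤ r⁻¹ * μ.real univ := by
  refine norm_integral_le_of_norm_le_const (h.mono fun t ht => ?_)
  rw [norm_resolvent_ofReal]
  exact inv_anti₀ hr ht

/-- The logarithm of `1 - i S μ`, where `S μ` is the Stieltjes transform of `μ`. In the upper
half-plane its real part grows with the density of `μ`, while its imaginary part stays bounded. -/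
noncomputable def logStieltjes (μ : Measure ℝ) (z : ℂ) : ℂ :=
  Complex.log (1 - Complex.I * resolventTransform μ z)

theorem abs_im_logStieltjes_le : |(logStieltjes μ z).im| ≤ π :=
  (congrArg abs (Complex.log_im _)).trans_le (Complex.abs_arg_le_pi _)

theorem re_logStieltjes_le_norm : (logStieltjes μ z).re ≤ ‖resolventTransform μ z‖ := by
  rw [logStieltjes, Complex.log_re]
  rcases (norm_nonneg (1 - Complex.I * resolventTransform μ z)).eq_or_lt with h0 | hpos
  · rw [← h0, Real.log_zero]
    exact norm_nonneg _
  · have hnorm := norm_sub_le 1 (Complex.I * resolventTransform μ z)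
    rw [norm_one, norm_mul, Complex.norm_I, one_mul] at hnorm
    linarith [Real.log_le_sub_one_of_pos hpos]

variable [IsFiniteMeasure μ]

theorem im_resolventTransform (hz : z.im ≠ 0) :
    (resolventTransform μ z).im = ∫ t : ℝ, (resolvent z t).im ∂μ :=
  (Complex.imCLM.integral_comp_comm
    (integrable_resolvent (notMem_image_algebraMap_of_im_ne_zero _ hz))).symm

theorem im_resolventTransform_nonneg (hz : 0 < z.im) : 0 ≤ (resolventTransform μ z).im := by
  rw [im_resolventTransform hz.ne']
  exact integral_nonneg (im_resolvent_ofReal_nonneg hz.le)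

theorem le_im_resolventTransform (hz : 0 < z.im) {s : Set ℝ} (hs : MeasurableSet s) {r : ℝ}
    (h : ∀ t ∈ s, ‖(t : ℂ) - z‖ ≤ r) : z.im / r ^ 2 * μ.real s ≤ (resolventTransform μ z).im := by
  have hint : Integrable (fun t : ℝ => (resolvent z t).im) μ :=
    (integrable_resolvent (notMem_image_algebraMap_of_im_ne_zero _ hz.ne')).im
  have hpos : ∀ t : ℝ, 0 < ‖(t : ℂ) - z‖ := fun t => norm_pos_iff.2 fun h0 => by
    simpa [hz.ne'] using congrArg Complex.im h0
  rw [im_resolventTransform hz.ne']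
  calc z.im / r ^ 2 * μ.real s
      = ∫ _ in s, z.im / r ^ 2 ∂μ := by rw [setIntegral_const, smul_eq_mul, mul_comm]
    _ ≤ ∫ t in s, (resolvent z t).im ∂μ :=
        setIntegral_mono_on (integrable_const _).integrableOn hint.integrableOn hs fun t ht => by
          rw [im_resolvent_ofReal]
          have := hpos t
          gcongr
          exact h t ht
    _ ≤ ∫ t : ℝ, (resolvent z t).im ∂μ :=
        setIntegral_le_integral hint (.of_forall (im_resolvent_ofReal_nonneg hz.le))

theorem differentiableOn_logStieltjes : DifferentiableOn ℂ (logStieltjes μ) {z | 0 < z.im} := by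
  intro z hz
  have hS : DifferentiableAt ℂ (resolventTransform μ) z :=
    (hasDerivAt_resolventTransform z
      (notMem_image_algebraMap_of_im_ne_zero _ (ne_of_gt hz))).differentiableAt
  refine (((hS.const_mul Complex.I).const_sub 1).clog (.inl ?_)).differentiableWithinAt
  simpa using add_pos_of_pos_of_nonneg one_pos (im_resolventTransform_nonneg (μ := μ) hz)

theorem log_le_re_logStieltjes (hz : 0 < z.im) :
    Real.log (1 + (resolventTransform μ z).im) ≤ (logStieltjes μ z).re := by
  have hS := im_resolventTransform_nonneg (μ := μ) hz
  rw [logStieltjes, Complex.log_re]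
  refine Real.log_le_log (by positivity) ?_
  simpa using Complex.re_le_norm (1 - Complex.I * resolventTransform μ z)

theorem re_logStieltjes_nonneg (hz : 0 < z.im) : 0 ≤ (logStieltjes μ z).re :=
  (Real.log_nonneg (by linarith [im_resolventTransform_nonneg (μ := μ) hz])).trans
    (log_le_re_logStieltjes hz)

end LogStieltjes

section Barrier

theorem exists_small_cthickening {E : Set ℝ} (hE : IsCompact E) (h0 : volume E = 0) {ε : ℝ}
    (hε : 0 < ε) : ∃ δ ∈ Ioc (0 : ℝ) (1 / 2), volume.real (Metric.cthickening δ E) ≤ ε := by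
  have hlim := tendsto_measure_cthickening_of_isCompact (μ := volume) hE
  rw [h0] at hlim
  have hev := (hlim.mono_left (nhdsWithin_le_nhds (s := Ioi 0))).eventually
    (gt_mem_nhds (ENNReal.ofReal_pos.2 hε))
  obtain ⟨δ, hδε, hδ⟩ := (hev.and (Ioc_mem_nhdsGT (by norm_num : (0 : ℝ) < 1 / 2))).exists
  exact ⟨δ, hδ, ENNReal.toReal_le_of_le_ofReal hε.le hδε.le⟩

variable {E : Set ℝ} {δ : ℝ} (K : ℝ≥0) {z : ℂ}

theorem isFiniteMeasure_smul_restrict_cthickening (hE : IsCompact E) (δ : ℝ) :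
    IsFiniteMeasure (K • volume.restrict (Metric.cthickening δ E)) :=
  have : IsFiniteMeasure (volume.restrict (Metric.cthickening δ E)) :=
    isFiniteMeasure_restrict.2 hE.cthickening.measure_lt_top.ne
  inferInstance

theorem le_im_resolventTransform_restrict_cthickening (hE : IsCompact E) (hδ : 0 < δ)
    (hz : 0 ≤ z.im) {x : ℝ} (hx : x ∈ E) (hzx : dist z x ≤ δ) :
    2 * K / 9 ≤ (resolventTransform (K • volume.restrict (Metric.cthickening δ E))
      (z + δ * Complex.I)).im := by
  have := isFiniteMeasure_smul_restrict_cthickening K hE δ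
  have him : (z + δ * Complex.I).im = z.im + δ := by simp
  have hnear : ∀ t ∈ Metric.closedBall x δ, ‖(t : ℂ) - (z + δ * Complex.I)‖ ≤ 3 * δ := by
    intro t ht
    have htx : dist (t : ℂ) x ≤ δ := (Complex.isometry_ofReal.dist_eq t x).trans_le ht
    have hδI : dist z (z + δ * Complex.I) = δ := by simp [abs_of_pos hδ]
    rw [← dist_eq_norm]
    linarith [dist_triangle4 (t : ℂ) x z (z + δ * Complex.I), dist_comm z x]
  have hball : (K • volume.restrict (Metric.cthickening δ E)).real (Metric.closedBall x δ) =
      K * (2 * δ) := by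
    rw [measureReal_nnreal_smul_apply,
      measureReal_restrict_apply Metric.isClosed_closedBall.measurableSet,
      inter_eq_left.2 (Metric.closedBall_subset_cthickening hx δ), volume_real_closedBall hδ.le]
  refine le_trans ?_ (le_im_resolventTransform (by rw [him]; positivity)
    Metric.isClosed_closedBall.measurableSet hnear)
  rw [him, hball]
  calc 2 * K / 9 = δ / (3 * δ) ^ 2 * (K * (2 * δ)) := by field_simp; norm_num
    _ ≤ _ := by gcongr; linarith

theorem log_le_re_logStieltjes_restrict_cthickening (hE : IsCompact E) (hδ : 0 < δ)
    (hz : 0 ≤ z.im) {x : ℝ} (hx : x ∈ E) (hzx : dist z x ≤ δ) :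
    Real.log (1 + 2 * K / 9) ≤
      (logStieltjes (K • volume.restrict (Metric.cthickening δ E)) (z + δ * Complex.I)).re := by
  have := isFiniteMeasure_smul_restrict_cthickening K hE δ
  have him : 0 < (z + δ * Complex.I).im := by simpa using add_pos_of_nonneg_of_pos hz hδ
  refine (Real.log_le_log (by positivity) ?_).trans (log_le_re_logStieltjes him)
  gcongr
  exact le_im_resolventTransform_restrict_cthickening K hE hδ hz hx hzx

theorem norm_resolventTransform_restrict_cthickening_le (hE : IsCompact E)
    (hδ : δ ∈ Ioc (0 : ℝ) (1 / 2)) (hz : ∀ x ∈ E, 2 ≤ dist z x) :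
    ‖resolventTransform (K • volume.restrict (Metric.cthickening δ E)) (z + δ * Complex.I)‖ ≤
      K * volume.real (Metric.cthickening δ E) := by
  have := isFiniteMeasure_smul_restrict_cthickening K hE δ
  have hfar : ∀ t ∈ Metric.cthickening δ E, 1 ≤ ‖(t : ℂ) - (z + δ * Complex.I)‖ := by
    intro t ht
    rw [hE.cthickening_eq_biUnion_closedBall hδ.1.le] at ht
    obtain ⟨x, hx, htx⟩ := mem_iUnion₂.1 ht
    have htx : dist (t : ℂ) x ≤ δ := (Complex.isometry_ofReal.dist_eq t x).trans_le htx
    have hδI : dist z (z + δ * Complex.I) = δ := by simp [abs_of_pos hδ.1]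
    rw [← dist_eq_norm, dist_comm]
    linarith [dist_triangle4 z (z + δ * Complex.I) t x, hz x hx, hδ.2]
  have hae : ∀ᵐ t : ℝ ∂(K • volume.restrict (Metric.cthickening δ E)),
      1 ≤ ‖(t : ℂ) - (z + δ * Complex.I)‖ :=
    Measure.ae_smul_measure
      (ae_restrict_of_forall_mem Metric.isClosed_cthickening.measurableSet hfar) K
  simpa [measureReal_nnreal_smul_apply] using norm_resolventTransform_le one_pos hae

/-- `F` is a barrier for `E`: on the closed upper half-plane its imaginary part is at most `η` in
absolute value, while its nonnegative real part is at least `M` within distance `δ` of `E` and at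
most `η` at distance `2` or more from `E`. It is holomorphic slightly beyond the real axis, so that
its boundary values are smooth; a cutoff of their imaginary part has truncated Hilbert transform
about `-M` on `E`. -/
structure IsBarrier (E : Set ℝ) (δ η M : ℝ) (F : ℂ → ℂ) : Prop where
  differentiableOn : DifferentiableOn ℂ F {z | -δ < z.im}
  re_nonneg : ∀ z : ℂ, 0 ≤ z.im → 0 ≤ (F z).re
  abs_im_le : ∀ z : ℂ, 0 ≤ z.im → |(F z).im| ≤ η
  re_le : ∀ z : ℂ, 0 ≤ z.im → (∀ x ∈ E, 2 ≤ dist z x) → (F z).re ≤ η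
  le_re : ∀ z : ℂ, 0 ≤ z.im → ∀ x ∈ E, dist z x ≤ δ → M ≤ (F z).re

theorem exists_isBarrier (hE : IsCompact E) (h0 : volume E = 0) {η : ℝ} (hη : 0 < η) (M : ℝ) :
    ∃ δ > 0, ∃ F, IsBarrier E δ η M F := by
  obtain ⟨K, hK⟩ : ∃ K : ℝ≥0, (K : ℝ) = 9 / 2 * Real.exp (π * M / η) :=
    ⟨⟨_, by positivity⟩, rfl⟩
  have hKpos : (0 : ℝ) < K := by rw [hK]; positivity
  obtain ⟨δ, hδ, hδK⟩ := exists_small_cthickening hE h0 (inv_pos.2 hKpos)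
  have := isFiniteMeasure_smul_restrict_cthickening K hE δ
  set μ := K • volume.restrict (Metric.cthickening δ E)
  have hηπ : 0 < η / π := by positivity
  have him : ∀ z : ℂ, (z + δ * Complex.I).im = z.im + δ := fun z => by simp
  have him_pos : ∀ z : ℂ, 0 ≤ z.im → 0 < (z + δ * Complex.I).im := fun z hz =>
    (him z).symm ▸ add_pos_of_nonneg_of_pos hz hδ.1
  refine ⟨δ, hδ.1, fun z => (η / π : ℝ) * logStieltjes μ (z + δ * Complex.I), ?_, ?_, ?_, ?_, ?_⟩
  · refine (differentiableOn_logStieltjes.comp (by fun_prop) fun z hz => ?_).const_mul _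
    rw [mem_ofPred_eq, him]
    exact neg_lt_iff_pos_add.1 hz
  · intro z hz
    rw [Complex.re_ofReal_mul]
    exact mul_nonneg hηπ.le (re_logStieltjes_nonneg (him_pos z hz))
  · intro z _
    rw [Complex.im_ofReal_mul, abs_mul, abs_of_pos hηπ, ← le_div_iff₀' hηπ, div_div_cancel₀ hη.ne']
    exact abs_im_logStieltjes_le
  · intro z _ hfar
    have hre : (logStieltjes μ (z + δ * Complex.I)).re ≤ 1 :=
      calc (logStieltjes μ (z + δ * Complex.I)).re
          ≤ ‖resolventTransform μ (z + δ * Complex.I)‖ := re_logStieltjes_le_norm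
        _ ≤ K * volume.real (Metric.cthickening δ E) :=
            norm_resolventTransform_restrict_cthickening_le K hE hδ hfar
        _ ≤ 1 := (le_inv_mul_iff₀ hKpos).1 (by simpa using hδK)
    rw [Complex.re_ofReal_mul]
    exact (mul_le_of_le_one_right hηπ.le hre).trans (div_le_self hη.le (by linarith [pi_gt_three]))
  · intro z hz x hx hzx
    have hre : π * M / η ≤ (logStieltjes μ (z + δ * Complex.I)).re := by
      refine le_trans ?_ (log_le_re_logStieltjes_restrict_cthickening K hE hδ.1 hz hx hzx)
      rw [Real.le_log_iff_exp_le (by positivity), hK]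
      linarith
    rw [Complex.re_ofReal_mul]
    calc M = η / π * (π * M / η) := by field_simp
      _ ≤ _ := by gcongr

end Barrier

theorem exists_lipschitzWith_integrable_eqOn {u : ℝ → ℝ} (hu : ContDiff ℝ 1 u) {r η : ℝ}
    (hr : 0 < r) (huη : ∀ t, |u t| ≤ η) :
    ∃ f : ℝ → ℝ, (∃ L, LipschitzWith L f) ∧ Integrable f ∧ (∀ t, |f t| ≤ η) ∧
      ∫ t, |f t| ≤ 2 * (r + 1) * η ∧ EqOn f u (Metric.closedBall 0 r) := by
  let φ : ContDiffBump (0 : ℝ) := ⟨r, r + 1, hr, lt_add_one r⟩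
  have hφu : ContDiff ℝ 1 fun t => φ t * u t := φ.contDiff.mul hu
  have hsupp : HasCompactSupport fun t => φ t * u t := φ.hasCompactSupport.mul_right
  have hle : ∀ t, |φ t * u t| ≤ η := fun t => by
    rw [abs_mul, abs_of_nonneg φ.nonneg]
    exact (mul_le_of_le_one_left (abs_nonneg _) φ.le_one).trans (huη t)
  refine ⟨fun t => φ t * u t, hφu.lipschitzWith_of_hasCompactSupport hsupp one_ne_zero,
    hφu.continuous.integrable_of_hasCompactSupport hsupp, hle, ?_, fun t ht => ?_⟩
  · have hzero : ∀ t ∉ Metric.closedBall 0 (r + 1), |φ t * u t| = 0 := fun t ht => by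
      rw [φ.zero_of_le_dist (le_of_not_ge ht), zero_mul, abs_zero]
    calc ∫ t, |φ t * u t| = ∫ t in Metric.closedBall 0 (r + 1), |φ t * u t| :=
          (setIntegral_eq_integral_of_forall_compl_eq_zero hzero).symm
      _ ≤ ‖∫ t in Metric.closedBall 0 (r + 1), |φ t * u t|‖ := le_abs_self _
      _ ≤ η * volume.real (Metric.closedBall (0 : ℝ) (r + 1)) :=
          norm_setIntegral_le_of_norm_le_const measure_closedBall_lt_top fun t _ => by
            simpa using hle t
      _ = 2 * (r + 1) * η := by rw [volume_real_closedBall (by linarith), mul_comm]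
  · simp [φ.one_of_mem_closedBall ht]

theorem contDiff_im_comp_ofReal {F : ℂ → ℂ} {U : Set ℂ} (hU : IsOpen U)
    (hF : DifferentiableOn ℂ F U) (h : ∀ t : ℝ, (t : ℂ) ∈ U) {n : WithTop ℕ∞} :
    ContDiff ℝ n fun t : ℝ => (F t).im :=
  Complex.imCLM.contDiff.comp <| contDiff_iff_contDiffAt.2 fun t =>
    (((hF.contDiffOn hU).contDiffAt (hU.mem_nhds (h t))).restrict_scalars ℝ).comp t
      Complex.ofRealCLM.contDiff.contDiffAt

section Block

variable {E : Set ℝ}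

theorem exists_cutoff_truncatedHilbertTransform_le {F : ℂ → ℂ} {δ η r : ℝ} (hδ : 0 < δ)
    (hr : 0 < r) (hF : DifferentiableOn ℂ F {z | -δ < z.im}) (hη : ∀ t : ℝ, |(F t).im| ≤ η) :
    ∃ f : ℝ → ℝ, (∃ L, LipschitzWith L f) ∧ Integrable f ∧ (∀ t, |f t| ≤ η) ∧
      ∫ t, |f t| ≤ 2 * (r + 1) * η ∧ ∀ x ε R a m, 0 < ε → ε ≤ R → 1 ≤ R → |x| + R ≤ r →
        (∀ z : ℂ, 0 ≤ z.im → dist z x = R → (F z).re ≤ a) →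
        (∀ z : ℂ, 0 ≤ z.im → dist z x = ε → m ≤ (F z).re) →
        truncatedHilbertTransform f ε x ≤ 2 * (r + 1) * η + a - m := by
  have hFcl : DiffContOnCl ℂ F {z | 0 < z.im} := by
    refine DifferentiableOn.diffContOnCl (hF.mono fun z hz => ?_)
    have hz_im : 0 ≤ z.im := by simpa using hz
    exact (neg_lt_zero.2 hδ).trans_le hz_im
  have hu : ContDiff ℝ 1 fun t : ℝ => (F t).im :=
    contDiff_im_comp_ofReal (isOpen_lt continuous_const Complex.continuous_im) hF fun t =>
      (neg_lt_zero.2 hδ).trans_le (Complex.ofReal_im t).ge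
  obtain ⟨f, hL, hf, hfη, hfint, hfF⟩ := exists_lipschitzWith_integrable_eqOn hu hr hη
  refine ⟨f, hL, hf, hfη, hfint, fun x ε R a m hε hεR hR hxr ha hm => ?_⟩
  have hfF_im : ∀ t ∈ Icc (x - R) (x + R), f t = (F t).im := fun t ht => hfF <| by
    rw [mem_closedBall_zero_iff, Real.norm_eq_abs, abs_le]
    constructor <;> linarith [ht.1, ht.2, neg_abs_le x, le_abs_self x]
  have hHR : truncatedHilbertTransform f R x ≤ 2 * (r + 1) * η :=
    ((le_abs_self _).trans (abs_truncatedHilbertTransform_le_integral_abs hf hR x)).trans hfint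
  linarith [truncatedHilbertTransform_le_of_re_le_of_le_re hf hFcl hε hεR hfF_im ha hm]

/-- `f` is a building block of size `c` for `E`, one term of the final series: it is
bounded by `c` uniformly and in `L¹`, its truncated Hilbert transforms on `E` are at most `c`, and
they are eventually at most `-1`. -/
structure IsBlock (E : Set ℝ) (c : ℝ) (f : ℝ → ℝ) : Prop where
  exists_lipschitzWith : ∃ L, LipschitzWith L f
  integrable : Integrable f
  abs_le : ∀ t, |f t| ≤ c
  integral_abs_le : ∫ t, |f t| ≤ c
  truncatedHilbertTransform_le : ∀ x ∈ E, ∀ ε > 0, truncatedHilbertTransform f ε x ≤ c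
  eventually_le_neg_one : ∀ x ∈ E, ∀ᶠ ε in 𝓝[>] 0, truncatedHilbertTransform f ε x ≤ -1

theorem exists_isBlock (hE : IsCompact E) (h0 : volume E = 0) {c : ℝ} (hc : 0 < c) :
    ∃ f, IsBlock E c f := by
  obtain ⟨k, hk, hEk⟩ := hE.isBounded.subset_closedBall_lt 0 0
  set R := 2 * k + 2
  obtain ⟨η, hη, hηc⟩ : ∃ η > 0, 2 * (k + R + 1) * η + η = c := by
    have hpos : 0 < 2 * (k + R + 1) + 1 := by positivity
    refine ⟨c / (2 * (k + R + 1) + 1), by positivity, ?_⟩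
    rw [← add_one_mul, mul_div_cancel₀ _ hpos.ne']
  obtain ⟨δ, hδ, F, hF⟩ := exists_isBarrier hE h0 hη (c + 1)
  obtain ⟨f, hL, hf, hfη, hfint, hH⟩ := exists_cutoff_truncatedHilbertTransform_le
    (r := k + R) hδ (by positivity) hF.differentiableOn fun t => hF.abs_im_le t (by simp)
  have hfc : ∫ t, |f t| ≤ c := hfint.trans (by linarith)
  have hEk : ∀ x ∈ E, |x| ≤ k := fun x hx => mem_closedBall_zero_iff.1 (hEk hx)
  have houter : ∀ x ∈ E, ∀ z : ℂ, 0 ≤ z.im → dist z x = R → (F z).re ≤ η := by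
    refine fun x hx z hz hzx => hF.re_le z hz fun y hy => ?_
    have hyx : dist (y : ℂ) x ≤ 2 * k := by
      rw [Complex.isometry_ofReal.dist_eq, Real.dist_eq]
      linarith [abs_sub y x, hEk x hx, hEk y hy]
    linarith [dist_triangle z y x]
  have hbound : ∀ x ∈ E, ∀ ε > 0, ε ≤ R → ∀ m,
      (∀ z : ℂ, 0 ≤ z.im → dist z x = ε → m ≤ (F z).re) →
      truncatedHilbertTransform f ε x ≤ c - m := fun x hx ε hε hεR m hm => by
    linarith [hH x ε R η m hε hεR (by linarith) (by linarith [hEk x hx]) (houter x hx) hm]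
  refine ⟨f, hL, hf, fun t => (hfη t).trans (by nlinarith), hfc, fun x hx ε hε => ?_,
    fun x hx => ?_⟩
  · rcases le_total ε R with hεR | hRε
    · simpa using hbound x hx ε hε hεR 0 fun z hz _ => hF.re_nonneg z hz
    · exact ((le_abs_self _).trans
        (abs_truncatedHilbertTransform_le_integral_abs hf (by linarith) x)).trans hfc
  · filter_upwards [Ioc_mem_nhdsGT (lt_min hδ (by positivity : 0 < R))] with ε hε
    linarith [hbound x hx ε hε.1 (hε.2.trans (min_le_right _ _)) (c + 1) fun z hz hzx =>
      hF.le_re z hz x hx (hzx.trans_le (hε.2.trans (min_le_left _ _)))]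

end Block

theorem tendsto_truncatedHilbertTransform_tsum_atBot {ι : Type*} [Infinite ι] [Countable ι]
    {E : ι → Set ℝ} {c : ι → ℝ} {g : ι → ℝ → ℝ} (hg : ∀ i, IsBlock (E i) (c i) (g i))
    (hc : Summable c) {x : ℝ} (hx : ∀ᶠ i in cofinite, x ∈ E i) :
    Tendsto (fun ε => truncatedHilbertTransform (fun t => ∑' i, g i t) ε x) (𝓝[>] 0) atBot := by
  classical
  choose L hL using fun i => (hg i).exists_lipschitzWith
  have hc₀ : ∀ i, 0 ≤ c i := fun i => (abs_nonneg _).trans ((hg i).abs_le 0)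
  have hint : Summable fun i => ∫ t, |g i t| :=
    hc.of_nonneg_of_le (fun i => integral_nonneg fun t => abs_nonneg _)
      fun i => (hg i).integral_abs_le
  have hinfinite : {i | x ∈ E i}.Infinite := infinite_iff_frequently_cofinite.2 hx.frequently
  let C : ι → ℝ := fun i => if x ∈ E i then c i else (∫ t, |g i t|) + 2 * L i
  have hC : Summable C := hc.congr_cofinite (hx.mono fun i hi => (if_pos hi).symm)
  have hC₀ : ∀ i, 0 ≤ C i := fun i => by
    dsimp only [C]
    split_ifs
    exacts [hc₀ i, by positivity]
  have hle : ∀ ε > 0, ∀ i, truncatedHilbertTransform (g i) ε x ≤ C i := fun ε hε i => by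
    dsimp only [C]
    split_ifs with hi
    · exact (hg i).truncatedHilbertTransform_le x hi ε hε
    · exact (le_abs_self _).trans
        (abs_truncatedHilbertTransform_le_of_lipschitzWith (hL i) (hg i).integrable hε x)
  exact tendsto_atBot_of_hasSum hinfinite hC hC₀
    (eventually_mem_nhdsWithin.mono fun ε hε =>
      hasSum_truncatedHilbertTransform (fun i => (hg i).integrable) hint hε x)
    (eventually_mem_nhdsWithin.mono hle) fun i hi => (hg i).eventually_le_neg_one x hi

theorem stmt10_general {e : Set ℝ} (he : IsSigmaCompact e) (h0 : volume e = 0) :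
    ∃ f : ℝ → ℝ, Continuous f ∧ Integrable f ∧
      ∀ x ∈ e, Tendsto (fun ε => truncatedHilbertTransform f ε x) (𝓝[>] 0) atBot := by
  obtain ⟨K, hK, rfl⟩ := he
  have hE : ∀ n, IsCompact (accumulate K n) := isCompact_accumulate hK
  have hE0 : ∀ n, volume (accumulate K n) = 0 := fun n =>
    measure_mono_null (accumulate_subset_iUnion n) h0
  choose g hg using fun n => exists_isBlock (hE n) (hE0 n) (c := (1 / 2) ^ n) (by positivity)
  refine ⟨fun t => ∑' n, g n t, ?_, ?_, fun x hx => ?_⟩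
  · exact continuous_tsum (fun n => (hg n).exists_lipschitzWith.choose_spec.continuous)
      summable_geometric_two fun n => (hg n).abs_le
  · refine integrable_tsum_of_summable_integral_norm (fun n => (hg n).integrable) ?_
    exact summable_geometric_two.of_nonneg_of_le (fun n => integral_nonneg fun t => norm_nonneg _)
      fun n => (hg n).integral_abs_le
  · obtain ⟨m, hm⟩ := mem_iUnion.1 hx
    refine tendsto_truncatedHilbertTransform_tsum_atBot hg summable_geometric_two ?_
    rw [Nat.cofinite_eq_atTop]
    filter_upwards [eventually_ge_atTop m] with n hmn
    exact monotone_accumulate hmn (subset_accumulate hm)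

/-- Theorem 2: For every closed null set `e ⊂ ℝ` there is a
continuous integrable function `f` such that the maximal Hilbert transform
`H*f(x) = sup_{ε>0} |H_ε f(x)|` is infinite at every `x ∈ e`. -/
theorem stmt10 (e : Set ℝ) (hclosed : IsClosed e) (he : volume e = 0) :
    ∃ f : ℝ → ℝ, Continuous f ∧ Integrable f ∧
      ∀ x ∈ e,
        (⨆ (ε : ℝ) (_ : 0 < ε),
          ENNReal.ofReal
            |(1 / π) * ∫ t in {t : ℝ | ε < |t - x|}, f t / (x - t)|)
          = ⊤ := by
  obtain ⟨f, hf, hfint, hlim⟩ := stmt10_general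
    (isSigmaCompact_univ.of_isClosed_subset hclosed (subset_univ e)) he
  exact ⟨f, hf, hfint, fun x hx => iSup_ofReal_abs_eq_top_of_tendsto_atBot (hlim x hx)⟩
end
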